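/- arXiv:2002.03253 — 4 statements merged into one kernel-verified Lean document; each statement's English description precedes it below -/
import Mathlib

section
/- Let A be a complex C*-algebra and let P : A → A be a linear projection (P ∘ P = P). Then P is bicontractive, i.e. ‖P(a)‖ ≤ ‖a‖ and ‖a − P(a)‖ ≤ ‖a‖ for all a ∈ A, if and only if P is symmetric, i.e. ‖a − 2·P(a)‖ ≤ ‖a‖ for all a ∈ A. -/
/-!
Symmetric implies bicontractive because `P a = (a - (a - 2 P a)) / 2` and
`a - P a = (a + (a - 2 P a)) / 2`.

For the converse let `X` and `Y` be the ranges of `P` and `Q = id - P`, and let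
`{a, b, c} = a b* c + c b* a` be the Jordan triple product. It is enough that `U = id - 2 P`
preserves cubes, `U (z z* z) = (U z) (U z)* (U z)`: since `‖z z* z‖ = ‖z‖ ^ 3`, a bounded linear map
preserving cubes is contractive (`norm_le_of_map_cube`). Preservation of cubes means that `X` and `Y`
form a `ℤ/2`-grading of the triple product.

* `{X, Y, X} ⊆ Y` (`proj_jordan_outer`). For `x` in the unit ball and small `b`, the element
  `x + b - x b* x` has norm at most `1 + O(‖b‖²)`, since it is a Möbius transformation of `x` up to
  second order. Apply `P` with `x ∈ X` and `b = -s̄ y`, `y ∈ Y`: the vector field `v x = P (x y* x)`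
  on `X` satisfies `‖x + s v x‖ ≤ 1 + O(|s|²)` for all complex `s`. A homogeneous holomorphic field
  with this property vanishes (`eq_zero_of_norm_add_smul_le`): iterating the Euler step `n` times
  gives a polynomial in `s` which is bounded by `1` for `|s| ≤ 1 / √n` after a bounded
  renormalisation, and whose derivative at `0` has size about `n ‖v x‖`, so Cauchy's estimate gives
  `‖v x‖ = O(1 / √n)`.
* `{X, X, Y} ⊆ Y` (`proj_jordan_inner`). The same argument with the linear field
  `v z = P {y, x, z}`, starting from the infinitesimal isometries `z ↦ k z + z m`, `k, m` skew-adjoint.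
* `{X, X, X} ⊆ X` (`proj_cube`). For `q = Q (x x* x)`, the Jordan identity for `{x', q, ·}` and
  the previous inclusions (for `P` and for `Q`) give `{x', q, q} = 0` for every `x' ∈ X`. Hence `q` is
  orthogonal to `X`, so `q* q = q* (x x* x) - q* P (x x* x) = 0`.

The inclusions with the roles of `X` and `Y` exchanged hold because `Q` is contractive as well.
-/

set_option maxHeartbeats 1000000
set_option synthInstance.maxHeartbeats 1000000

namespace BicontractiveProjection

/-! ### A uniqueness principle for vector fields tangent to the unit ball -/

section Cartan

variable {E : Type*} [NormedAddCommGroup E] [NormedSpace ℂ E]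

/-- The `n`-th iterate at `z` of the Euler step `w ↦ w + s v w`, each step rescaled by `l`. -/
def euler (v : E → E) (l : ℝ) (z : E) : ℕ → ℂ → E
  | 0, _ => z
  | n + 1, s => (l : ℂ) • (euler v l z n s + s • v (euler v l z n s))

/-- The factor `c n` for which the derivative at `s = 0` of `euler v l z n s` is `c n • v z`, if `v` is
homogeneous of degree `d`. -/
def eulerCoeff (l : ℝ) (d : ℕ) : ℕ → ℝ
  | 0 => 0
  | n + 1 => l * (eulerCoeff l d n + l ^ (n * d))

lemma le_eulerCoeff {l : ℝ} (h0 : 0 ≤ l) (h1 : l ≤ 1) (d n : ℕ) :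
    n * l ^ (n * (d + 1)) ≤ eulerCoeff l d n := by
  induction n with
  | zero => simp [eulerCoeff]
  | succ n ih =>
    have h2 : l ^ (n * (d + 1)) ≤ l ^ (n * d) :=
      pow_le_pow_of_le_one h0 h1 (Nat.mul_le_mul_left _ (Nat.le_succ _))
    have h3 : l ^ ((n + 1) * (d + 1)) ≤ l * l ^ (n * (d + 1)) := by
      rw [← pow_succ']
      exact pow_le_pow_of_le_one h0 h1 (by nlinarith)
    calc ((n + 1 : ℕ) : ℝ) * l ^ ((n + 1) * (d + 1))
        ≤ ((n + 1 : ℕ) : ℝ) * (l * l ^ (n * (d + 1))) := by gcongr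
      _ = l * (n * l ^ (n * (d + 1)) + l ^ (n * (d + 1))) := by push_cast; ring
      _ ≤ l * (eulerCoeff l d n + l ^ (n * d)) := by gcongr
      _ = _ := rfl

lemma differentiable_euler {v : E → E} (hv : Differentiable ℂ v) (l : ℝ) (z : E) (n : ℕ) :
    Differentiable ℂ (euler v l z n) := by
  induction n with
  | zero => exact differentiable_const z
  | succ n ih =>
    exact (ih.add (differentiable_id.smul (hv.comp ih))).const_smul (l : ℂ)

lemma euler_zero_right (v : E → E) (l : ℝ) (z : E) (n : ℕ) :
    euler v l z n 0 = ((l : ℂ) ^ n) • z := by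
  induction n with
  | zero => simp [euler]
  | succ n ih => simp [euler, ih, smul_smul, pow_succ']

lemma hasDerivAt_euler {v : E → E} (hv : Differentiable ℂ v) {d : ℕ}
    (hd : ∀ (c : ℂ) (z : E), v (c • z) = c ^ d • v z) (l : ℝ) (z : E) (n : ℕ) :
    HasDerivAt (euler v l z n) ((eulerCoeff l d n : ℂ) • v z) 0 := by
  induction n with
  | zero => simpa [euler, eulerCoeff] using hasDerivAt_const (0 : ℂ) z
  | succ n ih =>
    have h1 : HasDerivAt (fun s : ℂ => v (euler v l z n s))
        (deriv (fun s : ℂ => v (euler v l z n s)) 0) 0 :=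
      ((hv.comp (differentiable_euler hv l z n)) 0).hasDerivAt
    have h2 := (ih.add ((hasDerivAt_id (0 : ℂ)).smul h1)).const_smul (l : ℂ)
    refine HasDerivAt.congr_deriv (f := euler v l z (n + 1)) h2 ?_
    simp only [id, zero_smul, zero_add, one_smul, euler_zero_right, hd, eulerCoeff]
    rw [← add_smul, smul_smul, ← pow_mul]
    push_cast
    ring_nf

/-- If `v` is homogeneous, holomorphic and moves the unit ball of `X` outwards only to second order, in
all complex directions, then `v` vanishes on `X`. -/
lemma eq_zero_of_norm_add_smul_le (X : Submodule ℂ E) {v : E → E} (hv : Differentiable ℂ v)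
    {d : ℕ} (hd : ∀ (c : ℂ) (z : E), v (c • z) = c ^ d • v z) (hX : ∀ z ∈ X, v z ∈ X)
    {C : ℝ} (hC : 0 ≤ C)
    (hb : ∀ z ∈ X, ‖z‖ ≤ 1 → ∀ s : ℂ, ‖s‖ ≤ 1 → ‖z + s • v z‖ ≤ 1 + C * ‖s‖ ^ 2)
    {z : E} (hz : z ∈ X) : v z = 0 := by
  -- By homogeneity it suffices to treat the unit ball.
  suffices H : ∀ z ∈ X, ‖z‖ ≤ 1 → v z = 0 by
    rcases eq_or_ne z 0 with rfl | h0
    · exact H 0 hz (by simp)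
    have hn : (‖z‖ : ℂ) ≠ 0 := by exact_mod_cast norm_ne_zero_iff.2 h0
    have h1 := H (((‖z‖ : ℂ)⁻¹) • z) (X.smul_mem _ hz) (by
      rw [norm_smul, norm_inv, Complex.norm_real, norm_norm,
        inv_mul_cancel₀ (norm_ne_zero_iff.2 h0)])
    rw [hd] at h1
    exact (smul_eq_zero.1 h1).resolve_left (pow_ne_zero _ (inv_ne_zero hn))
  intro z hz hz1
  have key : ∀ m : ℕ, 0 < m → (m : ℝ) * ‖v z‖ ≤ Real.exp (C * (d + 1)) := by
    intro m hm
    have hm1 : (1 : ℝ) ≤ m := by exact_mod_cast hm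
    have hm0 : (0 : ℝ) < m := by linarith
    -- `m ^ 2` steps, with parameter `|s| ≤ 1 / m`.
    set L : ℝ := 1 + C * ((m : ℝ)⁻¹) ^ 2 with hL
    have hL1 : 1 ≤ L := by
      have : 0 ≤ C * ((m : ℝ)⁻¹) ^ 2 := by positivity
      linarith
    have hL0 : 0 < L := by linarith
    have hbound : ∀ n : ℕ, ∀ s : ℂ, ‖s‖ ≤ (m : ℝ)⁻¹ →
        euler v L⁻¹ z n s ∈ X ∧ ‖euler v L⁻¹ z n s‖ ≤ 1 := by
      intro n s hs
      induction n with
      | zero => exact ⟨hz, hz1⟩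
      | succ n ih =>
        refine ⟨X.smul_mem _ (X.add_mem ih.1 (X.smul_mem _ (hX _ ih.1))), ?_⟩
        have h1 := hb _ ih.1 ih.2 s (hs.trans (inv_le_one_of_one_le₀ hm1))
        have h2 : ‖s‖ ^ 2 ≤ ((m : ℝ)⁻¹) ^ 2 := by gcongr
        have h3 : ‖euler v L⁻¹ z n s + s • v (euler v L⁻¹ z n s)‖ ≤ L := by
          rw [hL]; nlinarith
        change ‖((L⁻¹ : ℝ) : ℂ) • (euler v L⁻¹ z n s + s • v (euler v L⁻¹ z n s))‖ ≤ 1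
        rw [norm_smul, Complex.norm_real, Real.norm_of_nonneg (inv_nonneg.2 hL0.le)]
        calc L⁻¹ * _ ≤ L⁻¹ * L := by gcongr
          _ = 1 := inv_mul_cancel₀ hL0.ne'
    have hcauchy := Complex.norm_deriv_le_of_forall_mem_sphere_norm_le (c := 0)
      (R := (m : ℝ)⁻¹) (C := 1) (f := euler v L⁻¹ z (m ^ 2)) (inv_pos.2 hm0)
      (differentiable_euler hv L⁻¹ z _).diffContOnCl
      (fun s hs => (hbound _ s (by simpa using hs.le)).2)
    have hcoeff := le_eulerCoeff (inv_nonneg.2 hL0.le) (inv_le_one_of_one_le₀ hL1) d (m ^ 2)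
    have hc0 : 0 ≤ eulerCoeff L⁻¹ d (m ^ 2) := le_trans (by positivity) hcoeff
    rw [(hasDerivAt_euler hv hd L⁻¹ z (m ^ 2)).deriv, norm_smul, Complex.norm_real,
      Real.norm_of_nonneg hc0, div_inv_eq_mul, one_mul] at hcauchy
    have hexp : L ^ (m ^ 2 * (d + 1)) ≤ Real.exp (C * (d + 1)) := by
      calc L ^ (m ^ 2 * (d + 1)) ≤ (Real.exp (C * ((m : ℝ)⁻¹) ^ 2)) ^ (m ^ 2 * (d + 1)) := by
            gcongr
            rw [hL, add_comm]
            exact Real.add_one_le_exp _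
        _ = Real.exp (C * (d + 1)) := by
            rw [← Real.exp_nat_mul]
            congr 1
            push_cast
            field_simp
    have h4 : ((m ^ 2 : ℕ) : ℝ) * (L⁻¹) ^ (m ^ 2 * (d + 1)) * ‖v z‖ ≤ m :=
      le_trans (by gcongr) hcauchy
    have hLp : 0 < L ^ (m ^ 2 * (d + 1)) := by positivity
    rw [inv_pow] at h4
    push_cast at h4
    have h5 : (m : ℝ) * ‖v z‖ ≤ L ^ (m ^ 2 * (d + 1)) := by
      have h6 : (m : ℝ) * ((m : ℝ) * ‖v z‖) ≤ m * L ^ (m ^ 2 * (d + 1)) := by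
        have h7 := mul_le_mul_of_nonneg_right h4 hLp.le
        have h8 : (m : ℝ) ^ 2 * (L ^ (m ^ 2 * (d + 1)))⁻¹ * ‖v z‖ * L ^ (m ^ 2 * (d + 1))
            = m * (m * ‖v z‖) := by
          field_simp
        linarith
      exact le_of_mul_le_mul_left h6 hm0
    exact h5.trans hexp
  by_contra hne
  have hpos : 0 < ‖v z‖ := norm_pos_iff.2 hne
  obtain ⟨m, hm⟩ := exists_nat_gt (Real.exp (C * (d + 1)) / ‖v z‖)
  have hm0 : 0 < m := by
    have : (0 : ℝ) < m := lt_of_le_of_lt (by positivity) hm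
    exact_mod_cast this
  have := key m hm0
  rw [div_lt_iff₀ hpos] at hm
  linarith

end Cartan

/-! ### Infinitesimal automorphisms of the unit ball of a C⋆-algebra -/

/-- The element is a Möbius transform of `z` up to second order in `b`: with `c = 1 - b* z`,
`w* w = 1 - c* (1 - z* z) c + e` where `‖e‖ ≤ 4 ‖b‖ ^ 2`. -/
lemma norm_sq_moebius_unital {B : Type*} [CStarAlgebra B] [Nontrivial B] (z b : B) (hz : ‖z‖ ≤ 1) :
    ‖z + b - z * star b * z‖ ^ 2 ≤ 1 + 4 * ‖b‖ ^ 2 := by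
  let _ := CStarAlgebra.spectralOrder B
  have := CStarAlgebra.spectralOrderedRing B
  set w := z + b - z * star b * z with hw
  set e := star z * b * star b * z + star b * b - star b * z * star b * z
    - star z * b * star z * b with he
  have h1 : star w * w = 1 - star (1 - star b * z) * (1 - star z * z) * (1 - star b * z) + e := by
    simp only [hw, he, star_sub, star_add, star_mul, star_star, star_one]
    noncomm_ring
  have hzz : star z * z ≤ 1 := by
    refine (CStarAlgebra.norm_le_one_iff_of_nonneg _ (star_mul_self_nonneg z)).1 ?_
    rw [CStarRing.norm_star_mul_self]
    nlinarith [norm_nonneg z]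
  have h2 : 0 ≤ star (1 - star b * z) * (1 - star z * z) * (1 - star b * z) :=
    star_left_conjugate_nonneg (sub_nonneg.2 hzz) _
  have h3 : star w * w ≤ 1 + e := by
    rw [h1]
    exact add_le_add_left (sub_le_self _ h2) _
  have h4 : ‖star w * w‖ ≤ ‖1 + e‖ :=
    CStarAlgebra.norm_le_norm_of_nonneg_of_le (star_mul_self_nonneg w) h3
  have hzs : ‖star z‖ ≤ 1 := by rwa [norm_star]
  have hbs : ‖star b‖ = ‖b‖ := norm_star b
  have e1 : ‖star z * b * star b * z‖ ≤ ‖b‖ ^ 2 := by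
    calc _ ≤ ‖star z‖ * ‖b‖ * ‖star b‖ * ‖z‖ := by
          refine (norm_mul_le _ _).trans ?_
          gcongr
          refine (norm_mul_le _ _).trans ?_
          gcongr
          exact norm_mul_le _ _
      _ ≤ 1 * ‖b‖ * ‖star b‖ * 1 := by gcongr
      _ = _ := by rw [hbs]; ring
  have e2 : ‖star b * b‖ ≤ ‖b‖ ^ 2 := by
    rw [CStarRing.norm_star_mul_self, sq]
  have e3 : ‖star b * z * star b * z‖ ≤ ‖b‖ ^ 2 := by
    calc _ ≤ ‖star b‖ * ‖z‖ * ‖star b‖ * ‖z‖ := by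
          refine (norm_mul_le _ _).trans ?_
          gcongr
          refine (norm_mul_le _ _).trans ?_
          gcongr
          exact norm_mul_le _ _
      _ ≤ ‖star b‖ * 1 * ‖star b‖ * 1 := by gcongr
      _ = _ := by rw [hbs]; ring
  have e4 : ‖star z * b * star z * b‖ ≤ ‖b‖ ^ 2 := by
    calc _ ≤ ‖star z‖ * ‖b‖ * ‖star z‖ * ‖b‖ := by
          refine (norm_mul_le _ _).trans ?_
          gcongr
          refine (norm_mul_le _ _).trans ?_
          gcongr
          exact norm_mul_le _ _
      _ ≤ 1 * ‖b‖ * 1 * ‖b‖ := by gcongr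
      _ = _ := by ring
  have h5 : ‖e‖ ≤ 4 * ‖b‖ ^ 2 := by
    have := norm_sub_le (star z * b * star b * z + star b * b - star b * z * star b * z)
      (star z * b * star z * b)
    have := norm_sub_le (star z * b * star b * z + star b * b) (star b * z * star b * z)
    have := norm_add_le (star z * b * star b * z) (star b * b)
    rw [he]
    linarith
  have h6 : ‖1 + e‖ ≤ 1 + ‖e‖ := by simpa using norm_add_le (1 : B) e
  rw [CStarRing.norm_star_mul_self, ← sq] at h4
  linarith

variable {A : Type*} [NonUnitalCStarAlgebra A]

lemma norm_moebius_le (z b : A) (hz : ‖z‖ ≤ 1) :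
    ‖z + b - z * star b * z‖ ≤ 1 + 2 * ‖b‖ ^ 2 := by
  have h := norm_sq_moebius_unital (B := Unitization ℂ A) (z : Unitization ℂ A)
    (b : Unitization ℂ A) (by rwa [Unitization.norm_inr])
  rw [← Unitization.inr_star, ← Unitization.inr_mul, ← Unitization.inr_mul,
    ← Unitization.inr_add, ← Unitization.inr_sub, Unitization.norm_inr, Unitization.norm_inr] at h
  refine le_of_sq_le_sq ?_ (by positivity)
  nlinarith [sq_nonneg (‖b‖ ^ 2)]

lemma norm_sq_add_skew_mul_le (z k : A) (hk : star k = -k) :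
    ‖z + k * z‖ ^ 2 ≤ (1 + ‖k‖ ^ 2) * ‖z‖ ^ 2 := by
  have h1 : star (z + k * z) * (z + k * z) = star z * z - star z * (k * k) * z := by
    simp only [star_add, star_mul, hk]
    noncomm_ring
  rw [sq, ← CStarRing.norm_star_mul_self, h1]
  calc _ ≤ ‖star z * z‖ + ‖star z * (k * k) * z‖ := norm_sub_le _ _
    _ ≤ ‖star z‖ * ‖z‖ + ‖star z‖ * (‖k‖ * ‖k‖) * ‖z‖ := by
        gcongr
        · exact norm_mul_le _ _
        · refine (norm_mul_le _ _).trans ?_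
          gcongr
          refine (norm_mul_le _ _).trans ?_
          gcongr
          exact norm_mul_le _ _
    _ = _ := by rw [norm_star]; ring

lemma norm_sq_add_mul_skew_le (z m : A) (hm : star m = -m) :
    ‖z + z * m‖ ^ 2 ≤ (1 + ‖m‖ ^ 2) * ‖z‖ ^ 2 := by
  have h := norm_sq_add_skew_mul_le (star z) (star m) (by rw [hm, star_neg, hm])
  rwa [← star_mul, ← star_add, norm_star, norm_star, norm_star] at h

lemma norm_skew_le (z k m : A) (hz : ‖z‖ ≤ 1) (hk : star k = -k) (hm : star m = -m) {r : ℝ}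
    (hr : 0 ≤ r) (hkr : ‖k‖ ≤ r) (hmr : ‖m‖ ≤ r) :
    ‖z + k * z + z * m‖ ≤ 1 + 2 * r ^ 2 := by
  have hkr2 : ‖k‖ ^ 2 ≤ r ^ 2 := by gcongr
  have hmr2 : ‖m‖ ^ 2 ≤ r ^ 2 := by gcongr
  have hz2 : ‖z‖ ^ 2 ≤ 1 := by nlinarith [norm_nonneg z]
  have h1 : ‖z + k * z‖ ^ 2 ≤ 1 + r ^ 2 :=
    calc _ ≤ (1 + ‖k‖ ^ 2) * ‖z‖ ^ 2 := norm_sq_add_skew_mul_le z k hk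
      _ ≤ (1 + r ^ 2) * 1 := by gcongr
      _ = _ := mul_one _
  have h2 : ‖(z + k * z) + (z + k * z) * m‖ ^ 2 ≤ (1 + r ^ 2) ^ 2 :=
    calc _ ≤ (1 + ‖m‖ ^ 2) * ‖z + k * z‖ ^ 2 := norm_sq_add_mul_skew_le _ m hm
      _ ≤ (1 + r ^ 2) * (1 + r ^ 2) := by gcongr
      _ = _ := (sq _).symm
  have h3 : ‖(z + k * z) + (z + k * z) * m‖ ≤ 1 + r ^ 2 := le_of_sq_le_sq h2 (by positivity)
  have h4 : ‖k * z * m‖ ≤ r ^ 2 :=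
    calc _ ≤ ‖k‖ * ‖z‖ * ‖m‖ := by
          refine (norm_mul_le _ _).trans ?_
          gcongr
          exact norm_mul_le _ _
      _ ≤ r * 1 * r := by gcongr
      _ = _ := by ring
  have h5 : z + k * z + z * m = ((z + k * z) + (z + k * z) * m) - k * z * m := by
    noncomm_ring
  rw [h5]
  linarith [norm_sub_le ((z + k * z) + (z + k * z) * m) (k * z * m)]

/-! ### The grading of the triple product -/

/-- The (unnormalised) Jordan triple product `{a, b, c} = a b* c + c b* a`. -/
def jtp (a b c : A) : A := a * star b * c + c * star b * a

lemma jtp_add_right (a b c d : A) : jtp a b (c + d) = jtp a b c + jtp a b d := by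
  simp only [jtp]; noncomm_ring

/-- The Jordan identity for the operator `{a, b, ·}`, on cubes. -/
lemma jordan_identity (a b x : A) :
    jtp a b (x * star x * x) = jtp (jtp a b x) x x - x * star (jtp b a x) * x := by
  simp only [jtp, star_add, star_mul, star_star]
  noncomm_ring

lemma differentiable_mul {f g : A → A} (hf : Differentiable ℂ f) (hg : Differentiable ℂ g) :
    Differentiable ℂ (fun z => f z * g z) :=
  (ContinuousLinearMap.mul ℂ A).isBoundedBilinearMap.differentiable.comp (hf.prodMk hg)

/-- `{X, Y, X} ⊆ Y` on the diagonal, for a contractive projection. -/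
lemma proj_mul_star_mul (P : A →L[ℂ] A) (hP : ∀ a, ‖P a‖ ≤ ‖a‖) (hidem : ∀ a, P (P a) = P a)
    {x y : A} (hx : P x = x) (hy : P y = 0) : P (x * star y * x) = 0 := by
  have hdiff : Differentiable ℂ (fun z : A => P (z * star y * z)) :=
    P.differentiable.comp
      (differentiable_mul (differentiable_mul differentiable_id (differentiable_const _))
        differentiable_id)
  refine eq_zero_of_norm_add_smul_le (LinearMap.eqLocus (P : A →ₗ[ℂ] A) LinearMap.id)
    (v := fun z => P (z * star y * z)) hdiff (d := 2) ?_ ?_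
    (C := 2 * ‖y‖ ^ 2) (by positivity) ?_ (z := x) hx
  · intro c z
    simp [smul_mul_assoc, mul_smul_comm, smul_smul, sq]
  · intro z _
    exact hidem _
  · intro z hz hz1 s _
    have hz' : P z = z := hz
    have h := norm_moebius_le z (-(star s • y)) hz1
    have h2 : P (z + -(star s • y) - z * star (-(star s • y)) * z)
        = z + s • P (z * star y * z) := by
      simp [hz', hy, star_smul, mul_smul_comm, smul_mul_assoc]
    rw [← h2]
    refine (hP _).trans (h.trans (le_of_eq ?_))
    rw [norm_neg, norm_smul, norm_star]
    ring

lemma proj_jordan_outer (P : A →L[ℂ] A) (hP : ∀ a, ‖P a‖ ≤ ‖a‖) (hidem : ∀ a, P (P a) = P a)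
    {x x' y : A} (hx : P x = x) (hx' : P x' = x') (hy : P y = 0) : P (jtp x y x') = 0 := by
  have h1 := proj_mul_star_mul P hP hidem (x := x + x') (by simp [hx, hx']) hy
  have h2 := proj_mul_star_mul P hP hidem hx hy
  have h3 := proj_mul_star_mul P hP hidem hx' hy
  have h4 : jtp x y x' = (x + x') * star y * (x + x') - x * star y * x - x' * star y * x' := by
    simp only [jtp]; noncomm_ring
  rw [h4, map_sub, map_sub, h1, h2, h3]
  simp

/-- `{Y, X, X} ⊆ Y` for a contractive projection. The infinitesimal isometry used is
`z ↦ k z + z m` with `k = s y x* - s̄ x y*` and `m = s x* y - s̄ y* x`. -/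
lemma proj_jordan_inner (P : A →L[ℂ] A) (hP : ∀ a, ‖P a‖ ≤ ‖a‖) (hidem : ∀ a, P (P a) = P a)
    {x x' y : A} (hx : P x = x) (hx' : P x' = x') (hy : P y = 0) : P (jtp y x x') = 0 := by
  have hdiff : Differentiable ℂ (fun z : A => P (jtp y x z)) :=
    P.differentiable.comp
      ((differentiable_mul (differentiable_const _) differentiable_id).add
        (differentiable_mul (differentiable_mul differentiable_id (differentiable_const _))
          (differentiable_const _)))
  refine eq_zero_of_norm_add_smul_le (LinearMap.eqLocus (P : A →ₗ[ℂ] A) LinearMap.id)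
    (v := fun z => P (jtp y x z)) hdiff (d := 1) ?_ ?_
    (C := 2 * (2 * ‖x‖ * ‖y‖) ^ 2) (by positivity) ?_ (z := x') hx'
  · intro c z
    simp [jtp, smul_mul_assoc, mul_smul_comm]
  · intro z _
    exact hidem _
  · intro z hz hz1 s _
    have hz' : P z = z := hz
    have hn : ∀ a b : A, ‖s • (a * star b)‖ ≤ ‖s‖ * (‖a‖ * ‖b‖) := by
      intro a b
      rw [norm_smul]
      gcongr
      simpa using norm_mul_le a (star b)
    have hn1 : ∀ a b : A, ‖star s • (a * star b)‖ ≤ ‖s‖ * (‖a‖ * ‖b‖) := by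
      intro a b
      rw [norm_smul, norm_star]
      gcongr
      simpa using norm_mul_le a (star b)
    have hn2 : ∀ a b : A, ‖s • (star a * b)‖ ≤ ‖s‖ * (‖a‖ * ‖b‖) := by
      intro a b
      rw [norm_smul]
      gcongr
      simpa using norm_mul_le (star a) b
    have hn3 : ∀ a b : A, ‖star s • (star a * b)‖ ≤ ‖s‖ * (‖a‖ * ‖b‖) := by
      intro a b
      rw [norm_smul, norm_star]
      gcongr
      simpa using norm_mul_le (star a) b
    have h := norm_skew_le z (s • (y * star x) - star s • (x * star y))
      (s • (star x * y) - star s • (star y * x)) hz1 (by simp [star_smul])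
      (by simp [star_smul]) (r := 2 * ‖x‖ * ‖y‖ * ‖s‖) (by positivity)
      (by linarith [norm_sub_le (s • (y * star x)) (star s • (x * star y)), hn y x, hn1 x y])
      (by linarith [norm_sub_le (s • (star x * y)) (star s • (star y * x)), hn2 x y, hn3 y x])
    have h0 := proj_jordan_outer P hP hidem hx hz' hy
    have h2 : P (z + (s • (y * star x) - star s • (x * star y)) * z
        + z * (s • (star x * y) - star s • (star y * x))) = z + s • P (jtp y x z) := by
      have h3 : z + (s • (y * star x) - star s • (x * star y)) * z
          + z * (s • (star x * y) - star s • (star y * x))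
          = z + s • jtp y x z - star s • jtp x y z := by
        simp only [jtp, sub_mul, mul_sub, smul_mul_assoc, mul_smul_comm, smul_add, mul_assoc]
        abel
      rw [h3, map_sub, map_add, map_smul, map_smul, h0, hz', smul_zero, sub_zero]
    change ‖z + s • P (jtp y x z)‖ ≤ _
    rw [← h2]
    refine (hP _).trans (h.trans (le_of_eq ?_))
    ring

/-- In a C⋆-algebra `{x, q, q} = 0` forces `q* x = 0`: `x* x` and `q* q` are commuting positive elements
whose product is minus the positive element `x* q q* x`. -/
lemma star_mul_eq_zero_of_jtp (x q : A) (h : jtp x q q = 0) : star q * x = 0 := by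
  let _ := CStarAlgebra.spectralOrder A
  have := CStarAlgebra.spectralOrderedRing A
  have h1 : star x * x * (star q * q) = -(star (star q * x) * (star q * x)) := by
    have h2 : star x * jtp x q q = 0 := by rw [h, mul_zero]
    rw [eq_neg_iff_add_eq_zero, ← h2]
    simp only [jtp, star_mul, star_star]
    noncomm_ring
  have hsa : IsSelfAdjoint (star x * x * (star q * q)) := by
    rw [h1]
    exact (IsSelfAdjoint.star_mul_self _).neg
  have hcomm := ((IsSelfAdjoint.star_mul_self x).commute_iff (IsSelfAdjoint.star_mul_self q)).2 hsa
  have hpos := Commute.mul_nonneg (star_mul_self_nonneg x) (star_mul_self_nonneg q) hcomm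
  rw [h1] at hpos
  have h3 : star (star q * x) * (star q * x) = 0 :=
    le_antisymm (neg_nonneg.1 hpos) (star_mul_self_nonneg _)
  exact CStarRing.star_mul_self_eq_zero_iff _ |>.1 h3

/-- The range of a bicontractive projection is closed under cubes. The complementary projection is
passed as a separate map `Q`. -/
lemma proj_cube (P Q : A →L[ℂ] A) (hQ : ∀ a, Q a = a - P a) (hP : ∀ a, ‖P a‖ ≤ ‖a‖)
    (hQn : ∀ a, ‖Q a‖ ≤ ‖a‖) (hidem : ∀ a, P (P a) = P a)
    {x : A} (hx : P x = x) : P (x * star x * x) = x * star x * x := by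
  have hQi : ∀ a, Q (Q a) = Q a := by intro a; simp [hQ, hidem]
  have hQ0 : ∀ {a}, P a = a → Q a = 0 := by intro a ha; rw [hQ, ha, sub_self]
  have hQ1 : ∀ {a}, P a = 0 → Q a = a := by intro a ha; rw [hQ, ha, sub_zero]
  have hP1 : ∀ {a}, Q a = 0 → P a = a := by
    intro a ha; rw [hQ, sub_eq_zero] at ha; exact ha.symm
  set q := Q (x * star x * x) with hq
  set p := P (x * star x * x) with hp
  have hsum : x * star x * x = p + q := by rw [hq, hQ]; abel
  have hPq : P q = 0 := by rw [hq, hQ, map_sub, hidem, sub_self]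
  have hPp : P p = p := hidem _
  have horth : ∀ x', P x' = x' → star q * x' = 0 := by
    intro x' hx'
    apply star_mul_eq_zero_of_jtp
    have h1 : P (jtp x' q x) = 0 := proj_jordan_outer P hP hidem hx' hx hPq
    have h2 : P (jtp q x' x) = 0 := proj_jordan_inner P hP hidem hx' hx hPq
    have h3 : P (jtp (jtp x' q x) x x) = 0 := proj_jordan_inner P hP hidem hx hx h1
    have h4 : P (x * star (jtp q x' x) * x) = 0 := proj_mul_star_mul P hP hidem hx h2
    have h5 : P (jtp x' q p) = 0 := proj_jordan_outer P hP hidem hx' hPp hPq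
    have h6 : P (jtp x' q q) = 0 := by
      have h := congrArg P (jordan_identity x' q x)
      rw [hsum, jtp_add_right, map_add, h5, map_sub, h3, h4, zero_add, sub_zero] at h
      exact h
    have h7 : Q (jtp x' q q) = 0 :=
      proj_jordan_inner Q hQn hQi (hQ1 hPq) (hQ1 hPq) (hQ0 hx')
    rw [← hP1 h7, h6]
  have h8 : star q * q = 0 := by
    have h := congrArg (fun t => star q * t) hsum
    simp only [mul_add] at h
    rw [horth p hPp, zero_add, ← mul_assoc, ← mul_assoc, horth x hx, zero_mul, zero_mul] at h
    exact h.symm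
  exact hP1 ((CStarRing.star_mul_self_eq_zero_iff _).1 h8)

/-! ### Cube-preserving maps are contractive -/

lemma norm_cube (z : A) : ‖z * star z * z‖ = ‖z‖ ^ 3 := by
  apply le_antisymm
  · calc _ ≤ ‖z‖ * ‖star z‖ * ‖z‖ := by
          refine (norm_mul_le _ _).trans ?_
          gcongr
          exact norm_mul_le _ _
      _ = _ := by rw [norm_star]; ring
  · rcases eq_or_ne z 0 with rfl | h0
    · simp
    have hpos : 0 < ‖z‖ := norm_pos_iff.2 h0
    have h1 : ‖star (star z * z) * (star z * z)‖ = ‖z‖ ^ 4 := by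
      rw [CStarRing.norm_star_mul_self, CStarRing.norm_star_mul_self]; ring
    have h2 : star (star z * z) * (star z * z) = star z * (z * star z * z) := by
      rw [star_mul, star_star]; noncomm_ring
    have h3 := norm_mul_le (star z) (z * star z * z)
    rw [← h2, h1, norm_star] at h3
    refine le_of_mul_le_mul_left ?_ hpos
    calc ‖z‖ * ‖z‖ ^ 3 = ‖z‖ ^ 4 := by ring
      _ ≤ _ := h3

lemma norm_le_of_map_cube (U : A → A) {K : ℝ} (hK : ∀ z, ‖U z‖ ≤ K * ‖z‖)
    (hU : ∀ z, U (z * star z * z) = U z * star (U z) * U z) (z : A) : ‖U z‖ ≤ ‖z‖ := by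
  have key : ∀ n : ℕ, ∀ z, ‖U z‖ ^ 3 ^ n ≤ K * ‖z‖ ^ 3 ^ n := by
    intro n
    induction n with
    | zero => simpa using hK
    | succ n ih =>
      intro z
      have h := ih (z * star z * z)
      rw [hU, norm_cube, norm_cube, ← pow_mul, ← pow_mul, ← pow_succ'] at h
      exact h
  by_contra! hlt
  rcases (norm_nonneg z).eq_or_lt with h0 | h0
  · have := hK z
    rw [← h0, mul_zero] at this
    linarith
  · have hr : 1 < ‖U z‖ / ‖z‖ := (one_lt_div h0).2 hlt
    obtain ⟨n, hn⟩ := pow_unbounded_of_one_lt K hr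
    have h1 : (‖U z‖ / ‖z‖) ^ n ≤ (‖U z‖ / ‖z‖) ^ 3 ^ n :=
      pow_le_pow_right₀ hr.le (Nat.lt_pow_self (by norm_num)).le
    have h2 : (‖U z‖ / ‖z‖) ^ 3 ^ n ≤ K := by
      rw [div_pow, div_le_iff₀ (by positivity)]
      exact key n z
    linarith

/-- The grading of the triple product by the ranges of `P` and `Q` makes `id - 2 P` preserve cubes. -/
lemma symmetry_map_cube (P Q : A →L[ℂ] A) (hQ : ∀ a, Q a = a - P a) (hP : ∀ a, ‖P a‖ ≤ ‖a‖)
    (hQn : ∀ a, ‖Q a‖ ≤ ‖a‖) (hidem : ∀ a, P (P a) = P a) (z : A) :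
    z * star z * z - (2 : ℕ) • P (z * star z * z)
      = (z - (2 : ℕ) • P z) * star (z - (2 : ℕ) • P z) * (z - (2 : ℕ) • P z) := by
  have hQi : ∀ a, Q (Q a) = Q a := by intro a; simp [hQ, hidem]
  have hP' : ∀ a, P a = a - Q a := by intro a; rw [hQ]; abel
  have hP1 : ∀ {a}, Q a = 0 → P a = a := by
    intro a ha; rw [hQ, sub_eq_zero] at ha; exact ha.symm
  set x := P z with hx
  set y := Q z with hy
  have hz : z = x + y := by rw [hy, hQ]; abel
  have hPx : P x = x := hidem _
  have hQy : Q y = y := hQi _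
  have hPy : P y = 0 := by rw [hy, hQ, map_sub, hidem, sub_self]
  have hQx : Q x = 0 := by rw [hQ, hPx, sub_self]
  have c1 : P (x * star x * x) = x * star x * x := proj_cube P Q hQ hP hQn hidem hPx
  have c2 : P (jtp y x x) = 0 := proj_jordan_inner P hP hidem hPx hPx hPy
  have c3 : P (x * star y * x) = 0 := proj_mul_star_mul P hP hidem hPx hPy
  have c4 : P (jtp x y y) = jtp x y y := hP1 (proj_jordan_inner Q hQn hQi hQy hQy hQx)
  have c5 : P (y * star x * y) = y * star x * y := hP1 (proj_mul_star_mul Q hQn hQi hQy hQx)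
  have c6 : P (y * star y * y) = 0 := by
    rw [hP', proj_cube Q P hP' hQn hP hQi hQy, sub_self]
  have hcube : z * star z * z = x * star x * x + jtp y x x + x * star y * x + jtp x y y
      + y * star x * y + y * star y * y := by
    rw [hz, jtp, jtp, star_add]
    noncomm_ring
  have hPc : P (z * star z * z) = x * star x * x + jtp x y y + y * star x * y := by
    rw [hcube]
    simp only [map_add, c1, c2, c3, c4, c5, c6]
    abel
  have hU : z - (2 : ℕ) • x = y - x := by rw [hz]; abel
  rw [hPc, hU, hcube, jtp, jtp, star_sub]
  noncomm_ring

end BicontractiveProjection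

open BicontractiveProjection in
/-- A linear projection on a C*-algebra is bicontractive if and only if it is symmetric. -/
theorem stmt_12 {A : Type*} [NonUnitalCStarAlgebra A]
    (P : A →ₗ[ℂ] A) (hidem : ∀ a, P (P a) = P a) :
    (∀ a : A, ‖P a‖ ≤ ‖a‖ ∧ ‖a - P a‖ ≤ ‖a‖) ↔ ∀ a : A, ‖a - 2 • P a‖ ≤ ‖a‖ := by
  constructor
  · intro h
    let Pc : A →L[ℂ] A := P.mkContinuous 1 (fun a => by simpa using (h a).1)
    let Qc : A →L[ℂ] A := ContinuousLinearMap.id ℂ A - Pc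
    have hcube := symmetry_map_cube Pc Qc (fun a => rfl) (fun a => (h a).1) (fun a => (h a).2)
      hidem
    refine norm_le_of_map_cube (fun a => a - 2 • P a) (K := 3) (fun a => ?_) hcube
    have h1 : a - 2 • P a = (a - P a) - P a := by abel
    change ‖a - 2 • P a‖ ≤ _
    rw [h1]
    linarith [norm_sub_le (a - P a) (P a), (h a).1, (h a).2, norm_nonneg a]
  · intro h a
    have half : ∀ b : A, ‖(2 : ℝ) • b‖ = 2 * ‖b‖ := by
      intro b
      rw [norm_smul, Real.norm_of_nonneg (by norm_num)]
    have h1 : (2 : ℝ) • P a = a - (a - 2 • P a) := by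
      rw [two_smul]; abel
    have h2 : (2 : ℝ) • (a - P a) = a + (a - 2 • P a) := by
      rw [two_smul]; abel
    have h3 := half (P a)
    have h4 := half (a - P a)
    rw [h1] at h3
    rw [h2] at h4
    constructor
    · linarith [norm_sub_le a (a - 2 • P a), h a]
    · linarith [norm_add_le a (a - 2 • P a), h a]
end

section
/- Let A be a complex C*-algebra and let P : A → A be a positive bicontractive linear projection: P is linear, P∘P = P, 0 ≤ a implies 0 ≤ P(a), and ‖P(a)‖ ≤ ‖a‖ and ‖a − P(a)‖ ≤ ‖a‖ for all a. Then the range of P is a JC*-subalgebra of A: for x, y in the range of P, both x* and x ∘ y = (xy + yx)/2 lie in the range of P. Moreover P is a Jordan conditional expectation: P(a ∘ P(b)) = P(a) ∘ P(b) for all a, b ∈ A. -/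
/-!
The theorem rests on the Kadison–Schwarz inequality `P(a)² ≤ P(a²)`, valid for every positive
contraction `P` and self-adjoint `a` (`kadison`). For its proof, take `‖a‖ ≤ 1` and approximate
`a` by combinations `∑ λᵢ eᵢ` of positive elements with `‖∑ eᵢ‖ ≤ 1`: the `eᵢ` are Bernstein
polynomials evaluated at the positive and negative parts of `a`, without the zeroth polynomial, so
that no unit is needed. They satisfy `∑ λᵢ eᵢ = a` exactly and `∑ λᵢ² eᵢ = a² + O(1/n)`, and for
the elements `P eᵢ` the inequality is the nonnegativity of a weighted variance (`sq_sum_le`).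

Let `x = P x` be self-adjoint.

* If `n` is self-adjoint and `P n = 0`, then applying `P` to the Kadison–Schwarz inequality for
  `x + t n` gives `0 ≤ t P(xn + nx) + t² P(n²)` for all real `t`, hence `P(xn + nx) = 0`
  (`map_jordan_ker`).
* Put `k = P(x²)` and `h = k - x²`. Then `0 ≤ h ≤ k`, `P h = 0` and `P k = k`. Since `id - P` is
  contractive, `‖h‖ ≤ ‖h - t k‖` for all `t`. But `-t k ≤ h - t k ≤ (1 - t) h` for small `t > 0`,
  so that `‖h - t k‖ ≤ max (t ‖k‖) ((1 - t) ‖h‖)`, which is less than `‖h‖` unless `h = 0`.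
  Therefore `P(x²) = x²` (`map_sq_of_fixed`).

Polarization, the decomposition `a = P a + (a - P a)`, and complex linearity give the theorem.
-/

section
open Finset

/-! ### Bernstein polynomials -/

/-- Total mass, first moment and second moment of the Bernstein weights of positive index. The
zeroth polynomial contributes only to the total mass, being weighted by `0` in the moments. -/
lemma bernstein_real (n : ℕ) (hn : 0 < n) (s : ℝ) :
    ∑ k ∈ range n, (bernsteinPolynomial ℝ n (k + 1)).eval s = 1 - (1 - s) ^ n ∧
    ∑ k ∈ range n, ((k + 1 : ℝ) / n) * (bernsteinPolynomial ℝ n (k + 1)).eval s = s ∧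
    ∑ k ∈ range n, ((k + 1 : ℝ) / n) ^ 2 * (bernsteinPolynomial ℝ n (k + 1)).eval s
      = s ^ 2 + (n : ℝ)⁻¹ * (s - s ^ 2) := by
  have hn' : (n : ℝ) ≠ 0 := by positivity
  have h0 := congrArg (Polynomial.eval s) (bernsteinPolynomial.sum ℝ n)
  have h1 := congrArg (Polynomial.eval s) (bernsteinPolynomial.sum_smul ℝ n)
  have h2 := congrArg (Polynomial.eval s) (bernsteinPolynomial.variance ℝ n)
  have e1 : ∑ k ∈ range n, ((k + 1 : ℝ)) * (bernsteinPolynomial ℝ n (k + 1)).eval s = n * s := by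
    simpa [Polynomial.eval_finsetSum, sum_range_succ'] using h1
  have e0 : ∑ k ∈ range n, (bernsteinPolynomial ℝ n (k + 1)).eval s = 1 - (1 - s) ^ n := by
    rw [Polynomial.eval_finsetSum, sum_range_succ'] at h0
    have : (bernsteinPolynomial ℝ n 0).eval s = (1 - s) ^ n := by simp [bernsteinPolynomial]
    rw [this] at h0
    simp at h0
    linarith
  have e2 : ∑ k ∈ range n, ((k + 1 : ℝ)) ^ 2 * (bernsteinPolynomial ℝ n (k + 1)).eval s
      = n ^ 2 * s ^ 2 + n * s * (1 - s) := by
    rw [Polynomial.eval_finsetSum, sum_range_succ'] at h2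
    have : (bernsteinPolynomial ℝ n 0).eval s = (1 - s) ^ n := by simp [bernsteinPolynomial]
    simp [this] at h2
    have : ∀ k : ℕ, (n * s - (k + 1 : ℝ)) ^ 2 * (bernsteinPolynomial ℝ n (k + 1)).eval s
      = n ^ 2 * s ^ 2 * (bernsteinPolynomial ℝ n (k + 1)).eval s
        - 2 * n * s * ((k + 1 : ℝ) * (bernsteinPolynomial ℝ n (k + 1)).eval s)
        + (k + 1 : ℝ) ^ 2 * (bernsteinPolynomial ℝ n (k + 1)).eval s := by
      intro k; ring
    simp only [this, sum_add_distrib, sum_sub_distrib, ← mul_sum, e0, e1] at h2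
    linear_combination h2
  refine ⟨e0, ?_, ?_⟩
  · have : ∀ k : ℕ, ((k + 1 : ℝ) / n) * (bernsteinPolynomial ℝ n (k + 1)).eval s =
      (n : ℝ)⁻¹ * ((k + 1 : ℝ) * (bernsteinPolynomial ℝ n (k + 1)).eval s) := by
      intro k; field_simp
    simp only [this, ← mul_sum, e1]
    field_simp
  · have : ∀ k : ℕ, ((k + 1 : ℝ) / n) ^ 2 * (bernsteinPolynomial ℝ n (k + 1)).eval s =
      ((n : ℝ)⁻¹) ^ 2 * ((k + 1 : ℝ) ^ 2 * (bernsteinPolynomial ℝ n (k + 1)).eval s) := by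
      intro k; field_simp
    simp only [this, ← mul_sum, e2]
    field_simp

/-- A subpartition of unity on `[-1, 1]`, with nodes `l i`, consisting of functions vanishing at `0`,
whose first moment is the identity and whose second moment is `t²` up to `O(1/n)`. The Boolean
component of the index separates the positive and the negative half-line. -/
lemma exists_partition (n : ℕ) (hn : 0 < n) :
    ∃ (l : ℕ × Bool → ℝ) (g : ℕ × Bool → ℝ → ℝ),
      (∀ i, Continuous (g i)) ∧ (∀ i, g i 0 = 0) ∧
      (∀ i t, |t| ≤ 1 → 0 ≤ g i t) ∧
      (∀ t, |t| ≤ 1 → ∑ i ∈ range n ×ˢ univ, g i t ≤ 1) ∧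
      (∀ t, ∑ i ∈ range n ×ˢ univ, l i * g i t = t) ∧
      (∀ t, ∑ i ∈ range n ×ˢ univ, l i ^ 2 * g i t = t * t + (n : ℝ)⁻¹ * (|t| - t * t)) := by
  refine ⟨fun i => (if i.2 then 1 else -1) * ((i.1 + 1 : ℝ) / n), fun i t =>
    (bernsteinPolynomial ℝ n (i.1 + 1)).eval (max ((if i.2 then 1 else -1) * t) 0),
    ?_, ?_, ?_, ?_, ?_, ?_⟩
  · intro i; fun_prop
  · intro i; simp [bernsteinPolynomial]
  · intro i t ht
    set s := max ((if i.2 then (1:ℝ) else -1) * t) 0 with hs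
    have h0 : 0 ≤ s := le_max_right _ _
    have h1 : 0 ≤ 1 - s := by
      rw [abs_le] at ht
      have : s ≤ 1 := by
        rw [hs]; apply max_le _ zero_le_one
        split_ifs <;> linarith
      linarith
    simp only [bernsteinPolynomial, Polynomial.eval_mul, Polynomial.eval_pow,
      Polynomial.eval_natCast, Polynomial.eval_X, Polynomial.eval_sub, Polynomial.eval_one]
    positivity
  · intro t ht
    rw [abs_le] at ht
    simp only [sum_product, Fintype.sum_bool, sum_add_distrib, if_true, Bool.false_eq_true, if_false]
    simp only [fun s => (bernstein_real n hn s).1]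
    rcases le_total 0 t with h | h
    · have : (0:ℝ) ≤ (1 - t) ^ n := pow_nonneg (by linarith) n
      simp [h]; linarith
    · have : (0:ℝ) ≤ (1 + t) ^ n := pow_nonneg (by linarith) n
      simp [h]; linarith
  · intro t
    simp only [sum_product, Fintype.sum_bool, sum_add_distrib, if_true, Bool.false_eq_true, if_false]
    simp only [mul_assoc, ← mul_sum,
      fun s => (bernstein_real n hn s).2.1]
    rcases le_total 0 t with h | h <;> simp [h]
  · intro t
    simp only [sum_product, Fintype.sum_bool, sum_add_distrib, if_true, Bool.false_eq_true, if_false]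
    simp only [mul_assoc, ← mul_sum, mul_pow,
      fun s => (bernstein_real n hn s).2.2]
    rcases le_total 0 t with h | h <;> simp [h, abs_of_nonneg, abs_of_nonpos] <;> ring

/-! ### Order and norm estimates -/

variable {A : Type*} [NonUnitalCStarAlgebra A] [PartialOrder A] [StarOrderedRing A]

lemma norm_le_of_between {y u v : A} {r : ℝ} (hu : IsSelfAdjoint u) (hy : IsSelfAdjoint y)
    (hv : IsSelfAdjoint v) (h1 : -u ≤ y) (h2 : y ≤ v) (hur : ‖u‖ ≤ r) (hvr : ‖v‖ ≤ r) :
    ‖y‖ ≤ r := by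
  have hy' : IsSelfAdjoint (y : Unitization ℂ A) := hy.inr ℂ
  have k1 : algebraMap ℝ (Unitization ℂ A) (-r) ≤ (y : Unitization ℂ A) := by
    have a1 := (Unitization.inr_le_iff (-u) y hu.neg hy).2 h1
    have a2 := (hu.inr ℂ).le_algebraMap_norm_self
    rw [Unitization.norm_inr] at a2
    have a3 : algebraMap ℝ (Unitization ℂ A) ‖u‖ ≤ algebraMap ℝ (Unitization ℂ A) r :=
      algebraMap_mono _ hur
    rw [map_neg]
    rw [Unitization.inr_neg] at a1
    exact (neg_le_neg (a2.trans a3)).trans a1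
  have k2 : (y : Unitization ℂ A) ≤ algebraMap ℝ (Unitization ℂ A) r := by
    have a1 := (Unitization.inr_le_iff y v hy hv).2 h2
    have a2 := (hv.inr ℂ).le_algebraMap_norm_self
    rw [Unitization.norm_inr] at a2
    exact a1.trans (a2.trans (algebraMap_mono _ hvr))
  rw [← Unitization.norm_inr (𝕜 := ℂ)]
  rw [algebraMap_le_iff_le_spectrum hy'] at k1
  rw [le_algebraMap_iff_spectrum_le hy'] at k2
  rcases CStarAlgebra.norm_or_neg_norm_mem_spectrum hy' with h | h
  · exact k2 _ h
  · linarith [k1 _ h]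


/-- Schwarz inequality for a finite family of positive elements `p i` of total norm at most one.
With `m = ∑ l i • p i`, it follows from `0 ≤ ∑ (l i - m) * p i * (l i - m)` together with
`m * (∑ p i) * m ≤ m * m`. -/
lemma sq_sum_le {ι : Type*} (s : Finset ι) (l : ι → ℝ) (p : ι → A) (hp : ∀ i ∈ s, 0 ≤ p i)
    (hs : ‖∑ i ∈ s, p i‖ ≤ 1) :
    (∑ i ∈ s, l i • p i) * (∑ i ∈ s, l i • p i) ≤ ∑ i ∈ s, (l i) ^ 2 • p i := by
  have hpsa : ∀ i ∈ s, IsSelfAdjoint (p i) := fun i hi => .of_nonneg (hp i hi)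
  have hmsa : IsSelfAdjoint (∑ i ∈ s, l i • p i) :=
    isSelfAdjoint_sum s fun i hi => (IsSelfAdjoint.all (l i)).smul (hpsa i hi)
  have hqsa : IsSelfAdjoint (∑ i ∈ s, p i) := isSelfAdjoint_sum s hpsa
  generalize hm : ∑ i ∈ s, l i • p i = m at *
  generalize hq : ∑ i ∈ s, p i = q at *
  have key : ∀ i ∈ s, 0 ≤ (l i) ^ 2 • p i - (m * (l i • p i) + (l i • p i) * m) + m * p i * m := by
    intro i hi
    obtain ⟨r, hr⟩ := CStarAlgebra.nonneg_iff_eq_star_mul_self.1 (hp i hi)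
    have : (l i) ^ 2 • p i - (m * (l i • p i) + (l i • p i) * m) + m * p i * m
        = star (l i • r - r * m) * (l i • r - r * m) := by
      simp only [star_sub, star_smul, star_mul, hmsa.star_eq, star_trivial, sub_mul, mul_sub,
        smul_mul_assoc, mul_smul_comm, hr, smul_sub, smul_smul, pow_two, mul_assoc]
      abel
    rw [this]
    exact star_mul_self_nonneg _
  have h := Finset.sum_nonneg key
  rw [sum_add_distrib, sum_sub_distrib, sum_add_distrib, ← mul_sum, ← sum_mul, ← sum_mul,
    ← mul_sum, hm, hq] at h
  have h2 : m * q * m ≤ m * m := by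
    have := CStarAlgebra.star_left_conjugate_le_norm_smul (a := m) (b := q) hqsa
    rw [hmsa.star_eq] at this
    refine this.trans ?_
    have h3 : 0 ≤ m * m := by simpa [hmsa.star_eq] using star_mul_self_nonneg m
    calc ‖q‖ • (m * m) ≤ (1 : ℝ) • (m * m) := smul_le_smul_of_nonneg_right hs h3
      _ = m * m := one_smul _ _
  have h4 := add_le_add h h2
  rw [← sub_nonneg] at h4 ⊢
  convert h4 using 1
  abel

/-! ### The Kadison–Schwarz inequality -/

lemma isSelfAdjoint_map_of_positive (P : A →ₗ[ℂ] A) (hpos : ∀ a : A, 0 ≤ a → 0 ≤ P a)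
    {a : A} (ha : IsSelfAdjoint a) : IsSelfAdjoint (P a) := by
  rw [← CFC.posPart_sub_negPart a, map_sub]
  exact (IsSelfAdjoint.of_nonneg (hpos _ (CFC.posPart_nonneg a))).sub
    (.of_nonneg (hpos _ (CFC.negPart_nonneg a)))

lemma map_star_of_positive (P : A →ₗ[ℂ] A) (hpos : ∀ a : A, 0 ≤ a → 0 ≤ P a)
    (a : A) : P (star a) = star (P a) := by
  conv_lhs => rw [← realPart_add_I_smul_imaginaryPart a]
  conv_rhs => rw [← realPart_add_I_smul_imaginaryPart a]
  have h1 := (isSelfAdjoint_map_of_positive P hpos (realPart a).2).star_eq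
  have h2 := (isSelfAdjoint_map_of_positive P hpos (imaginaryPart a).2).star_eq
  have h3 := (realPart a).2.star_eq
  have h4 := (imaginaryPart a).2.star_eq
  simp only [star_add, star_smul, map_add, map_smul, h1, h2, h3, h4]

lemma kadison_of_norm_le_one (P : A →ₗ[ℂ] A) (hpos : ∀ a : A, 0 ≤ a → 0 ≤ P a)
    (hc1 : ∀ a : A, ‖P a‖ ≤ ‖a‖) {a : A} (ha : IsSelfAdjoint a) (h1 : ‖a‖ ≤ 1) :
    P a * P a ≤ P (a * a) := by
  set c := cfcₙ (fun t : ℝ => |t| - t * t) a with hc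
  have hreal : ∀ (r : ℝ) (x : A), P (r • x) = r • P x := fun r x => P.map_smul_of_tower r x
  have hspec : ∀ t ∈ quasispectrum ℝ a, |t| ≤ 1 := fun t ht => by
    have h := norm_apply_le_norm_cfcₙ (fun t : ℝ => t) a ht
    rw [cfcₙ_id' ℝ a] at h
    exact (Real.norm_eq_abs t ▸ h).trans h1
  have step : ∀ n : ℕ, P a * P a ≤ P (a * a) + ((n + 1 : ℕ) : ℝ)⁻¹ • P c := by
    intro n
    obtain ⟨l, g, gc, g0, gnn, gsum, gl, gl2⟩ := exists_partition (n + 1) n.succ_pos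
    have H := sq_sum_le (range (n + 1) ×ˢ univ) l (fun i => P (cfcₙ (g i) a))
      (fun i _ => hpos _ (cfcₙ_nonneg fun t ht => gnn i t (hspec t ht))) ?_
    · have e1 : ∑ i ∈ range (n + 1) ×ˢ univ, l i • cfcₙ (g i) a = a := by
        have : ∀ i, l i • cfcₙ (g i) a = cfcₙ (fun t => l i • g i t) a := fun i =>
          (cfcₙ_smul (l i) (g i) a (gc i).continuousOn (g0 i)).symm
        simp only [this]
        rw [← cfcₙ_sum (fun i t => l i • g i t) a _ (fun i _ => ((gc i).const_smul (l i)).continuousOn)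
          (fun i _ => by simp [g0])]
        conv_rhs => rw [← cfcₙ_id' ℝ a]
        congr 1
        ext t
        simpa using gl t
      have e2 : ∑ i ∈ range (n + 1) ×ˢ univ, l i ^ 2 • cfcₙ (g i) a
          = a * a + ((n + 1 : ℕ) : ℝ)⁻¹ • c := by
        have : ∀ i, l i ^ 2 • cfcₙ (g i) a = cfcₙ (fun t => l i ^ 2 • g i t) a := fun i =>
          (cfcₙ_smul (l i ^ 2) (g i) a (gc i).continuousOn (g0 i)).symm
        simp only [this]
        rw [← cfcₙ_sum (fun i t => l i ^ 2 • g i t) a _ (fun i _ => ((gc i).const_smul (l i ^ 2)).continuousOn)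
          (fun i _ => by simp [g0])]
        have haa : a * a = cfcₙ (fun t : ℝ => t * t) a := by
          rw [cfcₙ_mul (fun t : ℝ => t) (fun t : ℝ => t) a, cfcₙ_id' ℝ a]
        rw [haa, hc, ← cfcₙ_smul _ _ a, ← cfcₙ_add _ _ a]
        congr 1
        ext t
        simpa using gl2 t
      simp only [← hreal, ← map_sum] at H
      rw [e1, e2, map_add, hreal] at H
      exact H
    · rw [← map_sum]
      refine (hc1 _).trans ?_
      rw [← cfcₙ_sum g a _ (fun i _ => (gc i).continuousOn) (fun i _ => g0 i)]
      refine norm_cfcₙ_le fun t ht => ?_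
      rw [Finset.sum_apply, Real.norm_of_nonneg (Finset.sum_nonneg fun i _ => gnn i t (hspec t ht))]
      exact gsum t (hspec t ht)
  have hlim : Filter.Tendsto (fun n : ℕ => P (a * a) + ((n + 1 : ℕ) : ℝ)⁻¹ • P c)
      Filter.atTop (nhds (P (a * a) + (0 : ℝ) • P c)) := by
    refine tendsto_const_nhds.add (Filter.Tendsto.smul_const ?_ _)
    exact (tendsto_inv_atTop_nhds_zero_nat (𝕜 := ℝ)).comp (Filter.tendsto_add_atTop_nat 1)
  have := ge_of_tendsto' hlim step
  simpa using this

/-- Kadison–Schwarz inequality for positive contractions, by rescaling. -/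
lemma kadison (P : A →ₗ[ℂ] A) (hpos : ∀ a : A, 0 ≤ a → 0 ≤ P a)
    (hc1 : ∀ a : A, ‖P a‖ ≤ ‖a‖) {a : A} (ha : IsSelfAdjoint a) : P a * P a ≤ P (a * a) := by
  have hreal : ∀ (r : ℝ) (x : A), P (r • x) = r • P x := fun r x => P.map_smul_of_tower r x
  set r : ℝ := ‖a‖ + 1 with hr
  have hr0 : 0 < r := by positivity
  have h := kadison_of_norm_le_one P hpos hc1 (a := r⁻¹ • a)
    ((IsSelfAdjoint.all _).smul ha) (by
      rw [norm_smul, Real.norm_of_nonneg (by positivity), inv_mul_le_one₀ hr0]; linarith)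
  simp only [hreal, smul_mul_assoc, mul_smul_comm, smul_smul] at h
  have h' := smul_le_smul_of_nonneg_left h (by positivity : 0 ≤ r * r)
  have : r * r * (r⁻¹ * r⁻¹) = 1 := by field_simp
  simpa only [smul_smul, this, one_smul] using h'

/-- Dividing by `t` and letting `t → 0` discards the second-order term. -/
lemma nonneg_of_forall_pos {X Y : A} (h : ∀ t : ℝ, 0 < t → 0 ≤ t • X + (t * t) • Y) : 0 ≤ X := by
  have h' : ∀ n : ℕ, 0 ≤ X + ((n + 1 : ℕ) : ℝ)⁻¹ • Y := fun n => by
    have hn : (0:ℝ) < ((n + 1 : ℕ) : ℝ) := by positivity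
    have := smul_nonneg hn.le (h _ (inv_pos.2 hn))
    rwa [smul_add, smul_smul, smul_smul, ← mul_assoc, mul_inv_cancel₀ hn.ne', one_smul,
      one_mul] at this
  have hlim : Filter.Tendsto (fun n : ℕ => X + ((n + 1 : ℕ) : ℝ)⁻¹ • Y)
      Filter.atTop (nhds (X + (0 : ℝ) • Y)) := by
    refine tendsto_const_nhds.add (Filter.Tendsto.smul_const ?_ _)
    exact (tendsto_inv_atTop_nhds_zero_nat (𝕜 := ℝ)).comp (Filter.tendsto_add_atTop_nat 1)
  simpa using ge_of_tendsto' hlim h'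

/-! ### Positive bicontractive projections -/

lemma map_jordan_ker (P : A →ₗ[ℂ] A) (hidem : ∀ a, P (P a) = P a)
    (hpos : ∀ a : A, 0 ≤ a → 0 ≤ P a) (hc1 : ∀ a : A, ‖P a‖ ≤ ‖a‖)
    {x n : A} (hx : IsSelfAdjoint x) (hn : IsSelfAdjoint n)
    (hPx : P x = x) (hPn : P n = 0) : P (x * n + n * x) = 0 := by
  have hreal : ∀ (r : ℝ) (x : A), P (r • x) = r • P x := fun r x => P.map_smul_of_tower r x
  have key : ∀ t : ℝ, 0 ≤ t • P (x * n + n * x) + (t * t) • P (n * n) := by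
    intro t
    have h := kadison P hpos hc1 (a := x + t • n) (hx.add ((IsSelfAdjoint.all _).smul hn))
    have hP : P (x + t • n) = x := by rw [map_add, hreal, hPx, hPn, smul_zero, add_zero]
    rw [hP] at h
    -- `h` reads `x * x ≤ P (…)`; applying `P` again replaces `x * x` by `P (x * x)`.
    have h2 := hpos _ (sub_nonneg.2 h)
    rw [map_sub, hidem, ← map_sub] at h2
    have e : (x + t • n) * (x + t • n) - x * x = t • (x * n + n * x) + (t * t) • (n * n) := by
      simp only [add_mul, mul_add, smul_mul_assoc, mul_smul_comm, smul_smul, smul_add]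
      abel
    rwa [e, map_add, hreal, hreal] at h2
  apply le_antisymm
  · rw [← neg_nonneg]
    refine nonneg_of_forall_pos (Y := P (n * n)) fun t _ => ?_
    simpa only [neg_smul, smul_neg, neg_mul_neg] using key (-t)
  · exact nonneg_of_forall_pos fun t _ => key t

/-- The range of `P` is closed under squares of self-adjoint elements. This is the step where
contractivity of `id - P` is used. -/
lemma map_sq_of_fixed (P : A →ₗ[ℂ] A) (hidem : ∀ a, P (P a) = P a)
    (hpos : ∀ a : A, 0 ≤ a → 0 ≤ P a) (hc1 : ∀ a : A, ‖P a‖ ≤ ‖a‖)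
    (hc2 : ∀ a : A, ‖a - P a‖ ≤ ‖a‖) {x : A} (hx : IsSelfAdjoint x)
    (hPx : P x = x) : P (x * x) = x * x := by
  have hreal : ∀ (r : ℝ) (x : A), P (r • x) = r • P x := fun r x => P.map_smul_of_tower r x
  have hxx : 0 ≤ x * x := by simpa [hx.star_eq] using star_mul_self_nonneg x
  set k := P (x * x) with hk
  set h := k - x * x with hh
  have hk0 : 0 ≤ k := hpos _ hxx
  have hh0 : 0 ≤ h := by
    have := kadison P hpos hc1 hx
    rw [hPx] at this
    exact sub_nonneg.2 this
  have hPk : P k = k := hidem _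
  have hPh : P h = 0 := by rw [hh, map_sub, hPk, ← hk, sub_self]
  have hle : h ≤ k := sub_le_self _ hxx
  suffices h = 0 from (sub_eq_zero.1 this)
  by_contra hne
  have hnorm : 0 < ‖h‖ := norm_pos_iff.2 hne
  have hkn : ‖h‖ ≤ ‖k‖ := CStarAlgebra.norm_le_norm_of_nonneg_of_le hh0 hle
  have hkpos : 0 < ‖k‖ := hnorm.trans_le hkn
  -- With this `t`, both bounds `t * ‖k‖ = ‖h‖ / 2` and `(1 - t) * ‖h‖` lie below `‖h‖`.
  set t : ℝ := ‖h‖ / (2 * ‖k‖) with ht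
  have ht0 : 0 < t := by positivity
  have ht1 : t ≤ 1 / 2 := by rw [ht, div_le_iff₀ (by positivity)]; linarith
  have htk : t * ‖k‖ = ‖h‖ / 2 := by rw [ht]; field_simp
  have hsa := IsSelfAdjoint.of_nonneg hh0
  have ksa := IsSelfAdjoint.of_nonneg hk0
  have b1 : ‖h‖ ≤ ‖h - t • k‖ := by
    have := hc2 (h - t • k)
    rwa [map_sub, hreal, hPh, hPk, zero_sub, sub_neg_eq_add, sub_add_cancel] at this
  have b2 : ‖h - t • k‖ ≤ (1 - t) * ‖h‖ := by
    refine norm_le_of_between (u := t • k) (v := (1 - t) • h) ((IsSelfAdjoint.all _).smul ksa)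
      (hsa.sub ((IsSelfAdjoint.all _).smul ksa)) ((IsSelfAdjoint.all _).smul hsa) ?_ ?_ ?_ ?_
    · rw [← sub_nonneg]
      simpa using hh0
    · rw [sub_smul, one_smul]
      exact sub_le_sub_left (smul_le_smul_of_nonneg_left hle ht0.le) _
    · rw [norm_smul, Real.norm_of_nonneg ht0.le, htk]
      nlinarith
    · rw [norm_smul, Real.norm_of_nonneg (by linarith)]
  nlinarith

lemma map_jordan_of_fixed (P : A →ₗ[ℂ] A) (hidem : ∀ a, P (P a) = P a)
    (hpos : ∀ a : A, 0 ≤ a → 0 ≤ P a) (hc1 : ∀ a : A, ‖P a‖ ≤ ‖a‖)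
    (hc2 : ∀ a : A, ‖a - P a‖ ≤ ‖a‖) {x y : A} (hx : IsSelfAdjoint x)
    (hy : IsSelfAdjoint y) (hPx : P x = x) (hPy : P y = y) :
    P (x * y + y * x) = x * y + y * x := by
  have h := map_sq_of_fixed P hidem hpos hc1 hc2 (hx.add hy) (by rw [map_add, hPx, hPy])
  have hx2 := map_sq_of_fixed P hidem hpos hc1 hc2 hx hPx
  have hy2 := map_sq_of_fixed P hidem hpos hc1 hc2 hy hPy
  have e : x * y + y * x = (x + y) * (x + y) - x * x - y * y := by noncomm_ring
  rw [e, map_sub, map_sub, h, hx2, hy2]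

lemma map_jordan_selfAdjoint (P : A →ₗ[ℂ] A) (hidem : ∀ a, P (P a) = P a)
    (hpos : ∀ a : A, 0 ≤ a → 0 ≤ P a) (hc1 : ∀ a : A, ‖P a‖ ≤ ‖a‖)
    (hc2 : ∀ a : A, ‖a - P a‖ ≤ ‖a‖) {a b : A} (ha : IsSelfAdjoint a)
    (hb : IsSelfAdjoint b) :
    P (a * P b + P b * a) = P a * P b + P b * P a := by
  have hPa := isSelfAdjoint_map_of_positive P hpos ha
  have hPb := isSelfAdjoint_map_of_positive P hpos hb
  have h1 := map_jordan_of_fixed P hidem hpos hc1 hc2 hPa hPb (hidem a) (hidem b)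
  have h2 := map_jordan_ker P hidem hpos hc1 hPb (ha.sub hPa) (hidem b)
    (by rw [map_sub, hidem, sub_self])
  have e : a * P b + P b * a = (P b * (a - P a) + (a - P a) * P b) + (P a * P b + P b * P a) := by
    noncomm_ring
  rw [e, map_add, h1, h2, zero_add]

lemma map_jordan (P : A →ₗ[ℂ] A) (hidem : ∀ a, P (P a) = P a)
    (hpos : ∀ a : A, 0 ≤ a → 0 ≤ P a) (hc1 : ∀ a : A, ‖P a‖ ≤ ‖a‖)
    (hc2 : ∀ a : A, ‖a - P a‖ ≤ ‖a‖) (a b : A) :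
    P (a * P b + P b * a) = P a * P b + P b * P a := by
  have key := fun {a b : A} (ha : IsSelfAdjoint a) (hb : IsSelfAdjoint b) =>
    map_jordan_selfAdjoint P hidem hpos hc1 hc2 ha hb
  rw [← realPart_add_I_smul_imaginaryPart a, ← realPart_add_I_smul_imaginaryPart b]
  have h11 := key (realPart a).2 (realPart b).2
  have h12 := key (realPart a).2 (imaginaryPart b).2
  have h21 := key (imaginaryPart a).2 (realPart b).2
  have h22 := key (imaginaryPart a).2 (imaginaryPart b).2
  generalize (realPart a : A) = a₁ at *
  generalize (imaginaryPart a : A) = a₂ at *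
  generalize (realPart b : A) = b₁ at *
  generalize (imaginaryPart b : A) = b₂ at *
  have e : ∀ u₁ u₂ v₁ v₂ : A, (u₁ + Complex.I • u₂) * (v₁ + Complex.I • v₂)
      + (v₁ + Complex.I • v₂) * (u₁ + Complex.I • u₂)
      = (u₁ * v₁ + v₁ * u₁) + Complex.I • (u₁ * v₂ + v₂ * u₁)
        + Complex.I • (u₂ * v₁ + v₁ * u₂) + (Complex.I * Complex.I) • (u₂ * v₂ + v₂ * u₂) := by
    intro u₁ u₂ v₁ v₂
    simp only [add_mul, mul_add, smul_mul_assoc, mul_smul_comm, smul_smul, smul_add]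
    abel
  simp only [map_add P _ (Complex.I • _), map_smul]
  rw [e, e, map_add, map_add, map_add, map_smul, map_smul, map_smul, h11, h12, h21, h22]

end

/-- Friedman–Russo/Størmer: the range of a positive bicontractive projection on a
C*-algebra is a JC*-subalgebra (closed under star and the Jordan product), and the
projection is a Jordan conditional expectation. -/
theorem stmt_13 {A : Type*} [NonUnitalCStarAlgebra A] [PartialOrder A] [StarOrderedRing A]
    (P : A →ₗ[ℂ] A) (hidem : ∀ a, P (P a) = P a)
    (hpos : ∀ a : A, 0 ≤ a → 0 ≤ P a)
    (hc1 : ∀ a : A, ‖P a‖ ≤ ‖a‖) (hc2 : ∀ a : A, ‖a - P a‖ ≤ ‖a‖) :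
    (∀ x : A, x ∈ Set.range P → star x ∈ Set.range P) ∧
    (∀ x y : A, x ∈ Set.range P → y ∈ Set.range P →
      (2 : ℂ)⁻¹ • (x * y + y * x) ∈ Set.range P) ∧
    ∀ a b : A, P ((2 : ℂ)⁻¹ • (a * P b + P b * a)) =
      (2 : ℂ)⁻¹ • (P a * P b + P b * P a) := by
  have key := map_jordan P hidem hpos hc1 hc2
  refine ⟨?_, ?_, fun a b => by rw [map_smul, key]⟩
  · rintro _ ⟨a, rfl⟩
    exact ⟨star a, map_star_of_positive P hpos a⟩
  · rintro _ _ ⟨a, rfl⟩ ⟨b, rfl⟩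
    exact ⟨(2 : ℂ)⁻¹ • (a * P b + P b * a), by rw [map_smul, key]⟩
end

section
/- Let A ⊆ B(H) be a unital operator algebra and let P : A → A be a real positive linear projection (P∘P = P) which is symmetric: ‖a − 2·P(a)‖ ≤ ‖a‖ for all a ∈ A. Then: (i) q := P(1) is an orthogonal projection (q = q* = q²) lying in A; (ii) P(a) = P(q·a·q) for every a ∈ A (so P vanishes on the other three corners of A determined by q); (iii) the map π := 2P − id maps the corner q·A·q = {q·a·q : a ∈ A} into itself, and on this corner π is isometric, of period 2 (π(π(x)) = x), and a Jordan homomorphism (π(x ∘ y) = π(x) ∘ π(y) for x, y ∈ q·A·q), so that P = (id + π)/2 on q·A·q; (iv) the range of P is a Jordan subalgebra of A (closed under the Jordan product), and P is a Jordan conditional expectation: P(a ∘ P(b)) = P(a) ∘ P(b) for all a, b ∈ A. -/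
/-!
The map `π = 2P - id` is a linear isometry of `A` with `π ∘ π = id`. As `P` is real positive,
`q = P 1` is self-adjoint. As `π` preserves extreme points of the unit ball and `1` is extreme,
`u = π 1 = 2q - 1` is extreme, and for a self-adjoint contraction this forces `u ^ 2 = 1`, that is,
`q ^ 2 = q`. Since `P (1 - q) = 0`, a Cauchy-Schwarz type argument with accretive elements shows that
`P` vanishes on `(1 - q) A` and on `A (1 - q)`; a similar one shows that `P` takes values in `q A q`.

The Jordan property rests on the identity `π (x ^ 2) = π x * u * π x`
(`StmtAux.isometry_map_sq`), a special case of the fact that surjective linear isometries preserve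
the partial triple product. The vector field `z ↦ 1 - z ^ 2` generates Möbius transformations of the
unit ball, so it is tangent to the ball (`StmtAux.norm_mobius_le`); so are its transport
`z ↦ u - π ((π z) ^ 2)` under `π` and the field `z ↦ u - z u z`. The difference of the last two is a
homogeneous quadratic tangent field, and it vanishes by an infinitesimal version of Cartan's
uniqueness theorem (`StmtAux.quadratic_eq_zero`): under iteration of its Euler steps the quadratic
Taylor coefficient would grow without bound while the ball stays bounded. On `q A q` the element `u`
acts as the unit, so `π` is a Jordan homomorphism there, and the statements about the range of `P`
and the conditional expectation follow from `P = (id + π) / 2`.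
-/

set_option maxHeartbeats 2000000
set_option synthInstance.maxHeartbeats 2000000

open ContinuousLinearMap

/-! ### Cartan's uniqueness theorem for quadratic vector fields -/

/-- The second order expansion at the origin, along the line `ℂ z`, of the `n`-th iterate of
`w ↦ w + t B(w, w)`: the linear part stays `z` and the quadratic parts add up. -/
theorem StmtAux.iterate_expansion {E : Type*} [NormedAddCommGroup E] [NormedSpace ℂ E]
    (B : E →L[ℂ] E →L[ℂ] E) (t : ℝ) (z : E) (n : ℕ) :
    ∃ R : ℂ → E, Differentiable ℂ R ∧ ∀ ζ : ℂ,
      (fun w : E => w + (t : ℂ) • B w w)^[n] (ζ • z) =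
        ζ • z + ζ ^ 2 • (((n : ℂ) * t) • B z z) + ζ ^ 3 • R ζ := by
  induction n with
  | zero => exact ⟨fun _ => 0, by fun_prop, fun ζ => by simp⟩
  | succ n ih =>
    obtain ⟨R, hR, h⟩ := ih
    set v : E := ((n : ℂ) * t) • B z z with hv
    refine ⟨fun ζ => R ζ + (t : ℂ) • (B z (v + ζ • R ζ) + B (v + ζ • R ζ) z)
      + ((t : ℂ) * ζ) • B (v + ζ • R ζ) (v + ζ • R ζ), by fun_prop, fun ζ => ?_⟩
    rw [Function.iterate_succ_apply', h]
    have hG : ζ • z + ζ ^ 2 • v + ζ ^ 3 • R ζ = ζ • z + ζ ^ 2 • (v + ζ • R ζ) := by module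
    rw [hG]
    beta_reduce
    generalize hS : v + ζ • R ζ = S
    have hS' : ζ ^ 2 • S = ζ ^ 2 • v + ζ ^ 3 • R ζ := by rw [← hS]; module
    simp only [map_add, map_smul, _root_.add_apply, _root_.smul_apply]
    rw [hS', hv]
    push_cast
    module

/-- Cauchy estimate for the second Taylor coefficient `v`: the even part of the function divided by
`ζ ^ 2` takes the value `v` at `0`, so the maximum principle applies. -/
theorem StmtAux.norm_coeff_two_le {E : Type*} [NormedAddCommGroup E] [NormedSpace ℂ E]
    (z v : E) (R : ℂ → E) (hR : Differentiable ℂ R) (M : ℝ)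
    (h : ∀ ζ : ℂ, ‖ζ‖ = 1 → ‖ζ • z + ζ ^ 2 • v + ζ ^ 3 • R ζ‖ ≤ M) : ‖v‖ ≤ M := by
  have hRn : Differentiable ℂ (fun ζ => R (-ζ)) := hR.comp differentiable_neg
  have hd : Differentiable ℂ
      (fun ζ : ℂ => v + ((2 : ℂ)⁻¹ * ζ) • (R ζ - R (-ζ))) := by fun_prop
  have key := Complex.norm_le_of_forall_mem_frontier_norm_le (U := Metric.ball (0 : ℂ) 1)
    (C := M) (z := 0) Metric.isBounded_ball hd.diffContOnCl (fun ζ hζ => ?_)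
    (subset_closure (by simp))
  · simpa using key
  · rw [frontier_ball _ one_ne_zero, mem_sphere_zero_iff_norm] at hζ
    have h1 := h ζ hζ
    have h2 := h (-ζ) (by simpa using hζ)
    have h3 : ‖ζ ^ 2 • (v + ((2 : ℂ)⁻¹ * ζ) • (R ζ - R (-ζ)))‖ ≤ M := by
      have : ζ ^ 2 • (v + ((2 : ℂ)⁻¹ * ζ) • (R ζ - R (-ζ))) =
        (2 : ℂ)⁻¹ • ((ζ • z + ζ ^ 2 • v + ζ ^ 3 • R ζ) +
          ((-ζ) • z + (-ζ) ^ 2 • v + (-ζ) ^ 3 • R (-ζ))) := by module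
      rw [this, norm_smul]
      have := norm_add_le (ζ • z + ζ ^ 2 • v + ζ ^ 3 • R ζ)
          ((-ζ) • z + (-ζ) ^ 2 • v + (-ζ) ^ 3 • R (-ζ))
      rw [norm_inv, Complex.norm_ofNat]
      linarith
    rwa [norm_smul, norm_pow, hζ, one_pow, one_mul] at h3

/-- Infinitesimal form of Cartan's uniqueness theorem: a homogeneous quadratic vector field which is
tangent to the unit ball, in the sense that its Euler steps of length `t` leave the ball by at most
`O(t ^ 2)`, vanishes. -/
theorem StmtAux.quadratic_eq_zero {E : Type*} [NormedAddCommGroup E] [NormedSpace ℂ E]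
    (B : E →L[ℂ] E →L[ℂ] E) (C : ℝ) (hC : 0 < C)
    (h : ∀ z : E, ‖z‖ ≤ 1 → ∀ t : ℝ, 0 ≤ t → t ≤ 1 →
      ‖z + (t : ℂ) • B z z‖ ≤ 1 + C * t ^ 2) (z : E) : B z z = 0 := by
  -- Rescaling the hypothesis gives a bound for vectors of arbitrary norm.
  have hom : ∀ w : E, ∀ t : ℝ, 0 ≤ t → t * ‖w‖ ≤ 1 →
      ‖w + (t : ℂ) • B w w‖ ≤ ‖w‖ * (1 + C * (t * ‖w‖) ^ 2) := by
    intro w t ht htw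
    rcases eq_or_ne w 0 with rfl | hw
    · simp
    have hw0 : (0 : ℝ) < ‖w‖ := norm_pos_iff.2 hw
    have hwc : ((‖w‖ : ℝ) : ℂ) ≠ 0 := by exact_mod_cast hw0.ne'
    have h1 := h (((‖w‖ : ℝ) : ℂ)⁻¹ • w) (by
      rw [norm_smul, norm_inv, Complex.norm_real, norm_norm, inv_mul_cancel₀ hw0.ne'])
      (t * ‖w‖) (by positivity) htw
    have h2 : w + (t : ℂ) • B w w = ((‖w‖ : ℝ) : ℂ) •
        ((((‖w‖ : ℝ) : ℂ)⁻¹ • w) + ((t * ‖w‖ : ℝ) : ℂ) •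
          B (((‖w‖ : ℝ) : ℂ)⁻¹ • w) (((‖w‖ : ℝ) : ℂ)⁻¹ • w)) := by
      simp only [map_smul, _root_.smul_apply, smul_add, smul_smul]
      push_cast
      congr 1
      · rw [mul_inv_cancel₀ hwc, one_smul]
      · congr 1; field_simp
    rw [h2, norm_smul, Complex.norm_real, norm_norm]
    gcongr
  wlog hz : ‖z‖ ≤ 1 generalizing z
  · push Not at hz
    have hz0 : (0 : ℝ) < ‖z‖ := by linarith
    have hzc : ((‖z‖ : ℝ) : ℂ) ≠ 0 := by exact_mod_cast hz0.ne'
    have := this (((‖z‖ : ℝ) : ℂ)⁻¹ • z) (by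
      rw [norm_smul, norm_inv, Complex.norm_real, norm_norm, inv_mul_cancel₀ hz0.ne'])
    simpa [hz0.ne'] using this
  obtain ⟨κ, hκ1, hκ2⟩ : ∃ κ : ℝ, 2 ≤ κ ∧ 8 * C ≤ κ ^ 2 :=
    ⟨8 * C + 2, by linarith, by nlinarith⟩
  -- With `t = 1 / (κ (k + 1))`, the first `(k + 1) ^ 2` iterates of the unit ball stay in the ball
  -- of radius `2`, while the quadratic coefficient grows to `((k + 1) / κ) B(z, z)`.
  have hb : ∀ k : ℕ, ‖B z z‖ * (k + 1) ≤ 2 * κ := by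
    intro k
    set t : ℝ := 1 / (κ * (k + 1)) with ht
    have hk : (0 : ℝ) < k + 1 := by positivity
    have hκ0 : 0 < κ := by linarith
    have ht0 : 0 < t := by positivity
    have htk : t * (κ * (k + 1)) = 1 := by rw [ht]; field_simp
    have ht1 : t * 2 ≤ 1 := by
      have : (0 : ℝ) ≤ k := by positivity
      nlinarith [mul_nonneg ht0.le this, mul_nonneg ht0.le (mul_nonneg hκ0.le this)]
    have hsum : 8 * C * t ^ 2 * (k + 1) ^ 2 ≤ 1 := by
      calc 8 * C * t ^ 2 * (k + 1) ^ 2 = 8 * C * (t * (k + 1)) ^ 2 := by ring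
        _ ≤ κ ^ 2 * (t * (k + 1)) ^ 2 := by gcongr
        _ = (t * (κ * (k + 1))) ^ 2 := by ring
        _ = 1 := by rw [htk, one_pow]
    have hit : ∀ n : ℕ, n ≤ (k + 1) ^ 2 → ∀ w : E, ‖w‖ ≤ 1 →
        ‖(fun w : E => w + (t : ℂ) • B w w)^[n] w‖ ≤ 1 + 8 * C * t ^ 2 * n := by
      intro n
      induction n with
      | zero => intro _ w hw; simpa using hw
      | succ n ih =>
        intro hn w hw
        have h1 := ih (by omega) w hw
        rw [Function.iterate_succ_apply']
        set g := (fun w : E => w + (t : ℂ) • B w w)^[n] w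
        have hn' : (n : ℝ) ≤ (k + 1) ^ 2 := by exact_mod_cast (by omega : n ≤ (k + 1) ^ 2)
        have hg2 : ‖g‖ ≤ 2 := by
          have : 8 * C * t ^ 2 * n ≤ 8 * C * t ^ 2 * (k + 1) ^ 2 := by gcongr
          linarith
        have h2 := hom g t ht0.le (by nlinarith)
        have h3 : ‖g‖ ^ 3 ≤ 2 ^ 3 := by gcongr
        have h4 : C * t ^ 2 * ‖g‖ ^ 3 ≤ C * t ^ 2 * 2 ^ 3 := by gcongr
        push_cast
        calc _ ≤ ‖g‖ * (1 + C * (t * ‖g‖) ^ 2) := h2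
          _ = ‖g‖ + C * t ^ 2 * ‖g‖ ^ 3 := by ring
          _ ≤ _ := by linarith
    obtain ⟨R, hR, hexp⟩ := StmtAux.iterate_expansion B t z ((k + 1) ^ 2)
    have h5 := StmtAux.norm_coeff_two_le z _ R hR 2 (fun ζ hζ => by
      rw [← hexp]
      refine (hit _ le_rfl (ζ • z) (by rw [norm_smul, hζ, one_mul]; exact hz)).trans ?_
      push_cast
      linarith)
    rw [norm_smul, norm_mul, Complex.norm_real, Complex.norm_natCast, Real.norm_of_nonneg ht0.le]
      at h5
    push_cast at h5
    have h6 : ‖B z z‖ * (k + 1) = κ * (((k : ℝ) + 1) ^ 2 * t * ‖B z z‖) := by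
      calc _ = ‖B z z‖ * (k + 1) * (t * (κ * (k + 1))) := by rw [htk, mul_one]
        _ = _ := by ring
    rw [h6]
    nlinarith
  by_contra hne
  have hpos : 0 < ‖B z z‖ := norm_pos_iff.2 hne
  obtain ⟨k, hk⟩ := exists_nat_gt (2 * κ / ‖B z z‖)
  rw [div_lt_iff₀ hpos] at hk
  nlinarith [hb k]

/-! ### Möbius vector fields on the unit ball of an operator algebra -/

/-- The vector field `z ↦ 1 - z ^ 2`, which generates the Möbius flow `(z + r) (1 + r z)⁻¹`, is
tangent to the unit ball of `B(H)`. -/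
theorem StmtAux.norm_mobius_le {H : Type*} [NormedAddCommGroup H] [InnerProductSpace ℂ H]
    (z : H →L[ℂ] H) (hz : ‖z‖ ≤ 1) (t : ℝ) :
    ‖z + (t : ℂ) • (1 - z * z)‖ ≤ 1 + 2 * t ^ 2 := by
  refine ContinuousLinearMap.opNorm_le_bound _ (by positivity) fun x => ?_
  refine le_of_sq_le_sq ?_ (by positivity)
  have hc : ∀ y, ‖z y‖ ≤ ‖y‖ := fun y => by
    simpa using z.le_of_opNorm_le hz y
  -- The value at `x` is `z η + t x` with `η = x - t z x`, and `‖z η‖ ≤ ‖η‖`; after expanding the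
  -- squares the terms of first order in `t` cancel.
  set a := z x with ha
  set b := z a with hb
  have e1 : (z + (t : ℂ) • (1 - z * z)) x = z (x - (t : ℂ) • a) + (t : ℂ) • x := by
    simp [← ha, ← hb]; module
  have e2 : ‖z (x - (t : ℂ) • a)‖ ^ 2 ≤ ‖x - (t : ℂ) • a‖ ^ 2 := by
    gcongr; exact hc _
  rw [e1, norm_add_sq (𝕜 := ℂ)]
  rw [norm_sub_sq (𝕜 := ℂ)] at e2
  have e3 : RCLike.re (inner ℂ (z (x - (t : ℂ) • a)) ((t : ℂ) • x)) =
      t * RCLike.re (inner ℂ a x) - t ^ 2 * RCLike.re (inner ℂ b x) := by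
    rw [map_sub, map_smul, ← ha, ← hb, inner_smul_right, inner_sub_left, inner_smul_left]
    simp
    ring
  have e4 : RCLike.re (inner ℂ x ((t : ℂ) • a)) = t * RCLike.re (inner ℂ a x) := by
    rw [inner_re_symm, inner_smul_left]
    simp
  rw [e4] at e2
  rw [e3]
  have e5 : ‖a‖ ≤ ‖x‖ := hc x
  have e6 : |RCLike.re (inner ℂ b x)| ≤ ‖x‖ * ‖x‖ :=
    ((RCLike.abs_re_le_norm _).trans (norm_inner_le_norm b x)).trans (by gcongr; exact (hc a).trans e5)
  have e7 : ‖(t : ℂ) • a‖ ^ 2 = t ^ 2 * ‖a‖ ^ 2 := by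
    rw [norm_smul, Complex.norm_real, mul_pow, Real.norm_eq_abs, sq_abs]
  have e8 : ‖(t : ℂ) • x‖ ^ 2 = t ^ 2 * ‖x‖ ^ 2 := by
    rw [norm_smul, Complex.norm_real, mul_pow, Real.norm_eq_abs, sq_abs]
  rw [e7] at e2
  rw [e8]
  have e9 : t ^ 2 * ‖a‖ ^ 2 ≤ t ^ 2 * ‖x‖ ^ 2 := by gcongr
  have e10 : t ^ 2 * (-RCLike.re (inner ℂ b x)) ≤ t ^ 2 * (‖x‖ * ‖x‖) := by
    gcongr
    exact (neg_le_abs _).trans e6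
  nlinarith [mul_nonneg (sq_nonneg (t ^ 2)) (sq_nonneg ‖x‖)]

/-- The analogue of `StmtAux.norm_mobius_le` for the field `z ↦ u - z u z`, where `u` is a
contraction with `u ^ 2 = 1`, on the ball of radius `m ≥ 1`. It reduces to the case `u = 1`, `m = 1`
for the contraction `m⁻¹ u z`. -/
theorem StmtAux.norm_mobius_le_of_symmetry {H : Type*} [NormedAddCommGroup H]
    [InnerProductSpace ℂ H] [CompleteSpace H] (u : H →L[ℂ] H) (hu : u * u = 1) (hu1 : ‖u‖ ≤ 1)
    (z : H →L[ℂ] H) (m : ℝ) (hm : 1 ≤ m) (hz : ‖z‖ ≤ m) (t : ℝ) :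
    ‖z + (t : ℂ) • (u - z * u * z)‖ ≤ m * (1 + 2 * (t * m) ^ 2) + |t| * (m ^ 2 - 1) := by
  have hm0 : (m : ℂ) ≠ 0 := by
    have : m ≠ 0 := by linarith
    exact_mod_cast this
  set v : H →L[ℂ] H := (m : ℂ)⁻¹ • (u * z) with hv
  have huz : ‖u * z‖ ≤ m := (norm_mul_le _ _).trans (by
    calc ‖u‖ * ‖z‖ ≤ 1 * m := by gcongr
      _ = m := one_mul m)
  have hv1 : ‖v‖ ≤ 1 := by
    rw [hv, norm_smul, norm_inv, Complex.norm_real, Real.norm_of_nonneg (by linarith)]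
    rw [inv_mul_le_one₀ (by linarith)]
    exact huz
  have h1 := StmtAux.norm_mobius_le v hv1 (t * m)
  have hz' : z = (m : ℂ) • (u * v) := by
    rw [hv, mul_smul_comm, ← mul_assoc, hu, one_mul, smul_smul, mul_inv_cancel₀ hm0, one_smul]
  have h2 : z + (t : ℂ) • (u - z * u * z) =
      u * ((m : ℂ) • (v + ((t * m : ℝ) : ℂ) • (1 - v * v)) - ((t * (m ^ 2 - 1) : ℝ) : ℂ) • 1) := by
    have h3 : z * u * z = ((m : ℂ) ^ 2) • (u * (v * v)) := by
      conv_lhs => rw [hz']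
      simp only [smul_mul_assoc, mul_smul_comm, smul_smul]
      rw [show u * v * u * (u * v) = u * v * (u * u) * v by noncomm_ring, hu, mul_one, mul_assoc,
        pow_two]
    rw [h3]
    conv_lhs => enter [1]; rw [hz']
    simp only [mul_sub, mul_add, mul_smul_comm, smul_sub, smul_add, mul_one, smul_smul]
    push_cast
    module
  rw [h2]
  calc _ ≤ ‖u‖ * ‖(m : ℂ) • (v + ((t * m : ℝ) : ℂ) • (1 - v * v)) -
          ((t * (m ^ 2 - 1) : ℝ) : ℂ) • (1 : H →L[ℂ] H)‖ := norm_mul_le _ _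
    _ ≤ 1 * (‖(m : ℂ) • (v + ((t * m : ℝ) : ℂ) • (1 - v * v))‖ +
          ‖((t * (m ^ 2 - 1) : ℝ) : ℂ) • (1 : H →L[ℂ] H)‖) := by
        gcongr
        exact norm_sub_le _ _
    _ ≤ _ := by
        rw [one_mul, norm_smul, norm_smul, Complex.norm_real, Complex.norm_real,
          Real.norm_of_nonneg (by linarith : 0 ≤ m), Real.norm_eq_abs, abs_mul,
          abs_of_nonneg (by nlinarith : 0 ≤ m ^ 2 - 1)]
        have h4 : ‖(1 : H →L[ℂ] H)‖ ≤ 1 := ContinuousLinearMap.norm_id_le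
        have h5 : 0 ≤ |t| * (m ^ 2 - 1) := mul_nonneg (abs_nonneg _) (by nlinarith)
        exact add_le_add (by gcongr) (mul_le_of_le_one_right h5 h4)

/-- An isometric linear involution of a unital operator algebra with `T 1 = u` and `u ^ 2 = 1`
preserves the partial triple product `{x, 1, x} = x ^ 2`. The field `u - z u z` and the
transport `u - T ((T z) ^ 2)` of `1 - z ^ 2` by `T` are both tangent to the unit ball; their difference
is quadratic and tangent, so it vanishes. -/
theorem StmtAux.isometry_map_sq {H : Type*} [NormedAddCommGroup H]
    [InnerProductSpace ℂ H] [CompleteSpace H] (A : Subalgebra ℂ (H →L[ℂ] H))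
    (T : A →ₗ[ℂ] A) (hT2 : ∀ a, T (T a) = a) (hT : ∀ a, ‖T a‖ = ‖a‖)
    (u : A) (hu1 : T 1 = u) (hu : u * u = 1) (x : A) : T (x * x) = T x * u * T x := by
  have hone : ‖(1 : A)‖ ≤ 1 := ContinuousLinearMap.norm_id_le
  have hun : ‖u‖ ≤ 1 := by rw [← hu1, hT]; exact hone
  have hu' : (u : H →L[ℂ] H) * u = 1 := by exact_mod_cast congrArg Subtype.val hu
  let B0 : A →ₗ[ℂ] A →ₗ[ℂ] A := LinearMap.mk₂ ℂ (fun x y => x * u * y - T (T x * T y))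
    (fun x y z => by simp only [map_add, add_mul]; abel)
    (fun c x y => by simp only [map_smul, smul_mul_assoc, smul_sub])
    (fun x y z => by simp only [map_add, mul_add]; abel)
    (fun c x y => by simp only [map_smul, mul_smul_comm, smul_sub])
  let B : A →L[ℂ] A →L[ℂ] A := B0.mkContinuous₂ 2 (fun x y => by
    change ‖x * u * y - T (T x * T y)‖ ≤ _
    calc _ ≤ ‖x * u * y‖ + ‖T (T x * T y)‖ := norm_sub_le _ _
      _ ≤ ‖x‖ * ‖u‖ * ‖y‖ + ‖T x‖ * ‖T y‖ := by
        rw [hT]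
        gcongr
        · exact norm_mul₃_le
        · exact norm_mul_le _ _
      _ ≤ ‖x‖ * 1 * ‖y‖ + ‖x‖ * ‖y‖ := by rw [hT, hT]; gcongr
      _ = _ := by ring)
  have hB : ∀ z, B z z = z * u * z - T (T z * T z) := fun z => rfl
  have mob1 : ∀ z : A, ‖z‖ ≤ 1 → ∀ t : ℝ, ‖z + (t : ℂ) • (1 - z * z)‖ ≤ 1 + 2 * t ^ 2 :=
    fun z hz t => StmtAux.norm_mobius_le (z : H →L[ℂ] H) hz t
  have mobu : ∀ (z : A) (m : ℝ), 1 ≤ m → ‖z‖ ≤ m → ∀ t : ℝ,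
      ‖z + (t : ℂ) • (u - z * u * z)‖ ≤ m * (1 + 2 * (t * m) ^ 2) + |t| * (m ^ 2 - 1) :=
    fun z m hm hz t => StmtAux.norm_mobius_le_of_symmetry (u : H →L[ℂ] H) hu' hun z m hm hz t
  have key := StmtAux.quadratic_eq_zero B 72 (by norm_num) (fun z hz t ht0 ht1 => by
    rw [hB]
    set y : A := T (T z * T z) with hy
    have hyn : ‖y‖ ≤ 1 := by
      rw [hy, hT]
      refine (norm_mul_le _ _).trans ?_
      rw [hT]
      nlinarith [norm_nonneg z]
    -- an Euler step along the transported field, followed below by a backward step along `u - z u z`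
    set w : A := z + (t : ℂ) • (u - y) with hw
    have hwT : w = T (T z + (t : ℂ) • (1 - T z * T z)) := by
      rw [map_add, hT2, map_smul, map_sub, hu1, ← hy]
    have hwn : ‖w‖ ≤ 1 + 2 * t ^ 2 := by
      rw [hwT, hT]
      exact mob1 _ (by rw [hT]; exact hz) t
    have ht2 : t ^ 2 ≤ 1 := by nlinarith
    have h1 := mobu w (1 + 2 * t ^ 2) (by nlinarith) hwn (-t)
    have hd : ‖w - z‖ ≤ 2 * t := by
      rw [hw, add_sub_cancel_left, norm_smul, Complex.norm_real, Real.norm_of_nonneg ht0]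
      have := norm_sub_le u y
      nlinarith
    have hq : ‖w * u * (w - z) + (w - z) * u * z‖ ≤ 8 * t := by
      calc _ ≤ ‖w * u * (w - z)‖ + ‖(w - z) * u * z‖ := norm_add_le _ _
        _ ≤ ‖w‖ * ‖u‖ * ‖w - z‖ + ‖w - z‖ * ‖u‖ * ‖z‖ := by
          gcongr <;> exact norm_mul₃_le
        _ ≤ 3 * 1 * (2 * t) + (2 * t) * 1 * 1 := by
          gcongr
          linarith
        _ = _ := by ring
    have e : z + (t : ℂ) • (z * u * z - y) =
        (w + ((-t : ℝ) : ℂ) • (u - w * u * w)) -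
          (t : ℂ) • (w * u * (w - z) + (w - z) * u * z) := by
      have e1 : w * u * (w - z) + (w - z) * u * z = w * u * w - z * u * z := by
        simp only [mul_sub, sub_mul]; abel
      rw [e1]
      conv_rhs => enter [1, 1]; rw [hw]
      push_cast
      module
    rw [e]
    refine (norm_sub_le _ _).trans ?_
    rw [norm_smul, Complex.norm_real, Real.norm_of_nonneg ht0]
    rw [abs_neg, abs_of_nonneg ht0] at h1
    have h4 : t * ‖w * u * (w - z) + (w - z) * u * z‖ ≤ 8 * t ^ 2 := by nlinarith
    have ht3 : t ^ 3 ≤ t ^ 2 := by nlinarith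
    have ht4 : t ^ 4 ≤ t ^ 2 := by nlinarith [sq_nonneg t]
    have ht5 : t ^ 5 ≤ t ^ 2 := by nlinarith [sq_nonneg t, pow_nonneg ht0 3]
    have ht6 : t ^ 6 ≤ t ^ 2 := by nlinarith [sq_nonneg t, pow_nonneg ht0 4]
    have ht8 : t ^ 8 ≤ t ^ 2 := by nlinarith [sq_nonneg t, pow_nonneg ht0 6]
    refine (add_le_add h1 h4).trans ?_
    have : (1 + 2 * t ^ 2) * (1 + 2 * (-t * (1 + 2 * t ^ 2)) ^ 2) +
        t * ((1 + 2 * t ^ 2) ^ 2 - 1) + 8 * t ^ 2 = 1 + 12 * t ^ 2 + 12 * t ^ 4 + 24 * t ^ 6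
          + 16 * t ^ 8 + 4 * t ^ 3 + 4 * t ^ 5 := by ring
    rw [this]
    linarith) (T x)
  rw [hB, hT2, sub_eq_zero] at key
  exact key.symm

/-! ### Accretive operators and elementary operator estimates -/

theorem StmtAux.accretive_iff {H : Type*} [NormedAddCommGroup H]
    [InnerProductSpace ℂ H] [CompleteSpace H] (a : H →L[ℂ] H) :
    (a + adjoint a).IsPositive ↔ ∀ x, 0 ≤ (inner ℂ (a x) x).re := by
  have h : ∀ x, RCLike.re (inner ℂ ((a + adjoint a) x) x) = 2 * (inner ℂ (a x) x).re := by
    intro x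
    rw [_root_.add_apply, inner_add_left, adjoint_inner_left, map_add, inner_re_symm x (a x)]
    change (inner ℂ (a x) x).re + (inner ℂ (a x) x).re = _
    ring
  constructor
  · intro hp x
    have h1 := hp.re_inner_nonneg_left x
    rw [h] at h1
    linarith
  · intro hp
    refine ⟨?_, fun x => ?_⟩
    · have : IsSelfAdjoint (a + adjoint a) := IsSelfAdjoint.add_star_self a
      exact this.isSymmetric
    · rw [ContinuousLinearMap.reApplyInnerSelf_apply, h]
      linarith [hp x]

theorem StmtAux.eq_zero_of_accretive {H : Type*} [NormedAddCommGroup H]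
    [InnerProductSpace ℂ H] (y : H →L[ℂ] H)
    (h : ∀ (c : ℂ) (x : H), 0 ≤ (inner ℂ ((c • y) x) x).re) : y = 0 := by
  have h0 : ∀ x, inner ℂ (y x) x = 0 := by
    intro x
    have h1 := h 1 x
    have h2 := h (-1) x
    have h3 := h Complex.I x
    have h4 := h (-Complex.I) x
    simp [inner_smul_left] at h1 h2 h3 h4
    apply Complex.ext
    · simp; linarith
    · simp; linarith
  ext x
  have := (inner_map_self_eq_zero (y : H →ₗ[ℂ] H)).1 h0
  exact congrArg (fun f : H →ₗ[ℂ] H => f x) this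

/-- If the quadratic form of `y` is dominated by that of `q* q`, then the sesquilinear form of `y`
vanishes against the kernel of `q`, by polarization and scaling. -/
theorem StmtAux.inner_eq_zero_of_form_le {H : Type*} [NormedAddCommGroup H]
    [InnerProductSpace ℂ H] (y q : H →L[ℂ] H) (M : ℝ) (hM : 0 ≤ M)
    (h : ∀ x, ‖inner ℂ (y x) x‖ ≤ M * ‖q x‖ ^ 2) (x v : H) (hx : q x = 0) :
    inner ℂ (y x) v = 0 ∧ inner ℂ (y v) x = 0 := by
  have pol : ∀ a b : H, ‖inner ℂ (y b) a‖ ≤ M * (‖q a‖ + ‖q b‖) ^ 2 := by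
    intro a b
    have hc : ∀ c : ℂ, ‖c‖ = 1 → ‖inner ℂ (y (a + c • b)) (a + c • b)‖ ≤
        M * (‖q a‖ + ‖q b‖) ^ 2 := by
      intro c hc
      refine (h _).trans ?_
      gcongr
      rw [map_add, map_smul]
      refine (norm_add_le _ _).trans ?_
      rw [norm_smul, hc, one_mul]
    have p := inner_map_polarization (y : H →ₗ[ℂ] H) a b
    simp only [ContinuousLinearMap.coe_coe] at p
    have h1 := hc 1 (by simp)
    have h2 := hc (-1) (by simp)
    have h3 := hc Complex.I (by simp)
    have h4 := hc (-Complex.I) (by simp)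
    simp only [one_smul, neg_smul, ← sub_eq_add_neg] at h1 h2 h3 h4
    rw [p, norm_div, Complex.norm_ofNat, div_le_iff₀ (by norm_num)]
    refine (norm_sub_le _ _).trans ?_
    refine (add_le_add_left ((norm_add_le _ _).trans (add_le_add_left (norm_sub_le _ _) _)) _).trans ?_
    rw [norm_mul, norm_mul, Complex.norm_I, one_mul, one_mul]
    linarith
  -- Replacing `x` by `s x` multiplies the left side of `pol` by `s` and leaves the right side fixed.
  have small : ∀ (r : ℂ) (K : ℝ), (∀ s : ℝ, 0 < s → s * ‖r‖ ≤ K) → r = 0 := by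
    intro r K hr
    by_contra hne
    have hpos : 0 < ‖r‖ := norm_pos_iff.2 hne
    have h1 := hr ((|K| + 1) / ‖r‖) (by positivity)
    rw [div_mul_cancel₀ _ hpos.ne'] at h1
    linarith [le_abs_self K]
  constructor
  · refine small _ (M * ‖q v‖ ^ 2) fun s hs => ?_
    have h1 := pol v ((s : ℂ) • x)
    rw [map_smul, map_smul, hx, inner_smul_left] at h1
    simpa [abs_of_pos hs] using h1
  · refine small _ (M * ‖q v‖ ^ 2) fun s hs => ?_
    have h1 := pol ((s : ℂ) • x) v
    rw [map_smul, hx, inner_smul_right] at h1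
    simpa [abs_of_pos hs] using h1

/-- For a self-adjoint contraction `p` one has `0 ≤ p ^ 2 ≤ 1`, hence `-1 ≤ 1 - 2 p ^ 2 ≤ 1`. -/
theorem StmtAux.norm_one_sub_two_sq_le {H : Type*} [NormedAddCommGroup H]
    [InnerProductSpace ℂ H] [CompleteSpace H] (p : H →L[ℂ] H) (hp : adjoint p = p)
    (hp1 : ‖p‖ ≤ 1) : ‖1 - (2 : ℂ) • (p * p)‖ ≤ 1 := by
  refine ContinuousLinearMap.opNorm_le_bound _ zero_le_one fun x => ?_
  rw [one_mul]
  refine le_of_sq_le_sq ?_ (norm_nonneg _)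
  have e : (1 - (2 : ℂ) • (p * p)) x = x - (2 : ℂ) • p (p x) := by simp
  have e1 : RCLike.re (inner ℂ x ((2 : ℂ) • p (p x))) = 2 * ‖p x‖ ^ 2 := by
    rw [inner_smul_right]
    have : inner ℂ x (p (p x)) = inner ℂ (p x) (p x) := by
      conv_lhs => rw [← hp]
      rw [adjoint_inner_right, hp]
    have h2 : RCLike.re (inner ℂ (p x) (p x)) = ‖p x‖ ^ 2 := inner_self_eq_norm_sq (p x)
    rw [this, ← h2]
    simp
  have e2 : ‖p (p x)‖ ≤ ‖p x‖ := by simpa using p.le_of_opNorm_le hp1 (p x)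
  have e3 : ‖p (p x)‖ ^ 2 ≤ ‖p x‖ ^ 2 := by gcongr
  rw [e, norm_sub_sq (𝕜 := ℂ), e1, norm_smul, mul_pow, Complex.norm_ofNat]
  linarith

/-- The identity is an extreme point of the unit ball of `B(H)`. -/
theorem StmtAux.eq_zero_of_norm_one_add_le {H : Type*} [NormedAddCommGroup H]
    [InnerProductSpace ℂ H] (v : H →L[ℂ] H) (h1 : ‖1 + v‖ ≤ 1) (h2 : ‖1 - v‖ ≤ 1) : v = 0 := by
  ext x
  have a1 : ‖x + v x‖ ≤ ‖x‖ := by simpa using (1 + v).le_of_opNorm_le h1 x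
  have a2 : ‖x - v x‖ ≤ ‖x‖ := by simpa using (1 - v).le_of_opNorm_le h2 x
  have a3 := parallelogram_law_with_norm ℂ x (v x)
  have a4 : ‖x + v x‖ * ‖x + v x‖ ≤ ‖x‖ * ‖x‖ := by gcongr
  have a5 : ‖x - v x‖ * ‖x - v x‖ ≤ ‖x‖ * ‖x‖ := by gcongr
  have a6 : ‖v x‖ = 0 := by nlinarith [norm_nonneg (v x)]
  simpa using a6

/-! ### Symmetric real positive projections -/

/-- Characterization of symmetric real positive projections `P` on a unital operator
algebra `A`: `q = P 1` is an orthogonal projection, `P` vanishes off the corner `q A q`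
(i.e. `P a = P (q a q)`), `π = 2P - id` maps the corner `q A q` into itself and is an
isometric period-2 Jordan homomorphism on it (so `P = (id + π)/2` there), the range of
`P` is a Jordan subalgebra of `A`, and `P` is a Jordan conditional expectation. -/
theorem stmt_14 {H : Type*} [NormedAddCommGroup H] [InnerProductSpace ℂ H] [CompleteSpace H]
    (A : Subalgebra ℂ (H →L[ℂ] H)) (hA : IsClosed (A : Set (H →L[ℂ] H)))
    (P : A →ₗ[ℂ] A) (hidem : ∀ a, P (P a) = P a)
    (hreal : ∀ a : A, ((a : H →L[ℂ] H) + adjoint (a : H →L[ℂ] H)).IsPositive →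
      ((P a : H →L[ℂ] H) + adjoint (P a : H →L[ℂ] H)).IsPositive)
    (hsymm : ∀ a : A, ‖a - 2 • P a‖ ≤ ‖a‖)
    (π : A →ₗ[ℂ] A) (hπ : ∀ a : A, π a = 2 • P a - a)
    (q : A) (hq : q = P 1) :
    (adjoint (q : H →L[ℂ] H) = (q : H →L[ℂ] H) ∧
      (q : H →L[ℂ] H) * (q : H →L[ℂ] H) = (q : H →L[ℂ] H)) ∧
    (∀ a : A, P a = P (q * a * q)) ∧
    (∀ a : A, ∃ b : A, π (q * a * q) = q * b * q) ∧
    (∀ a : A, ‖π (q * a * q)‖ = ‖q * a * q‖) ∧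
    (∀ a : A, π (π (q * a * q)) = q * a * q) ∧
    (∀ a b : A,
      π ((2 : ℂ)⁻¹ • ((q * a * q) * (q * b * q) + (q * b * q) * (q * a * q))) =
        (2 : ℂ)⁻¹ • (π (q * a * q) * π (q * b * q) + π (q * b * q) * π (q * a * q))) ∧
    (∀ a b : A, (2 : ℂ)⁻¹ • (P a * P b + P b * P a) ∈ Set.range P) ∧
    ∀ a b : A, P ((2 : ℂ)⁻¹ • (a * P b + P b * a)) =
      (2 : ℂ)⁻¹ • (P a * P b + P b * P a) := by
  have hacc : ∀ a : A, (∀ x, 0 ≤ (inner ℂ ((a : H →L[ℂ] H) x) x).re) →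
      ∀ x, 0 ≤ (inner ℂ ((P a : H →L[ℂ] H) x) x).re := fun a ha =>
    (StmtAux.accretive_iff _).1 (hreal a ((StmtAux.accretive_iff _).2 ha))
  have hone : ‖(1 : A)‖ ≤ 1 := ContinuousLinearMap.norm_id_le
  have hPq : P q = q := by rw [hq, hidem]
  -- `π` is an isometric involution.
  have hπ2 : ∀ a, π (π a) = a := fun a => by
    rw [hπ (π a), hπ a, map_sub, map_nsmul, hidem]; module
  have hπle : ∀ a, ‖π a‖ ≤ ‖a‖ := fun a => by
    rw [hπ, norm_sub_rev]; exact hsymm a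
  have hπn : ∀ a, ‖π a‖ = ‖a‖ := fun a => le_antisymm (hπle a) (by
    conv_lhs => rw [← hπ2 a]
    exact hπle _)
  have hπ1 : π 1 = 2 • q - 1 := by rw [hπ, ← hq]
  -- Both `i 1` and `-i 1` are accretive, so `i q` has zero real part.
  have hqsa : adjoint (q : H →L[ℂ] H) = (q : H →L[ℂ] H) := by
    have him : ∀ c : ℂ, c.re = 0 → ∀ x, 0 ≤ (inner ℂ ((P (c • 1) : H →L[ℂ] H) x) x).re := by
      intro c hc
      refine hacc _ fun x => le_of_eq ?_
      have : ((c • (1 : A) : A) : H →L[ℂ] H) x = c • x := rfl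
      rw [this, inner_smul_left, Complex.mul_re,
        show (inner ℂ x x).im = 0 from inner_self_im (𝕜 := ℂ) x]
      simp [hc]
    have hsym : ((q : H →L[ℂ] H) : H →ₗ[ℂ] H).IsSymmetric := by
      rw [LinearMap.isSymmetric_iff_inner_map_self_real]
      intro x
      have h1 := him Complex.I (by simp) x
      have h2 := him (-Complex.I) (by simp) x
      rw [map_smul, ← hq] at h1 h2
      simp [inner_smul_left] at h1 h2
      rw [Complex.conj_eq_iff_im]
      exact le_antisymm (by simpa using h2) (by simpa using h1)
    exact (ContinuousLinearMap.isSelfAdjoint_iff_isSymmetric.2 hsym)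
  have hun : ‖2 • q - 1‖ ≤ 1 := by rw [← hπ1, hπn]; exact hone
  -- `π` preserves extreme points, so `π 1 = 2q - 1` is extreme; with `w = 2 (q - q ^ 2)` both
  -- `π 1 + w` and `π 1 - w` are contractions, hence `w = 0`.
  have hqq : q * q = q := by
    have hqn : ‖q‖ ≤ 1 := by
      have e : q = (2 : ℂ)⁻¹ • ((2 • q - 1) + 1) := by module
      rw [e, norm_smul, norm_inv, Complex.norm_ofNat]
      linarith [norm_add_le (2 • q - 1) (1 : A)]
    have hpn : ‖1 - q‖ ≤ 1 := by
      have e : 1 - q = (2 : ℂ)⁻¹ • (1 - (2 • q - 1)) := by module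
      rw [e, norm_smul, norm_inv, Complex.norm_ofNat]
      linarith [norm_sub_le (1 : A) (2 • q - 1)]
    have hpsa : adjoint ((1 - q : A) : H →L[ℂ] H) = ((1 - q : A) : H →L[ℂ] H) := by
      have : IsSelfAdjoint (1 - (q : H →L[ℂ] H)) := (IsSelfAdjoint.one _).sub hqsa
      exact this
    have b1 : ‖1 - (2 : ℂ) • (q * q)‖ ≤ 1 := StmtAux.norm_one_sub_two_sq_le _ hqsa hqn
    have b2 : ‖1 - (2 : ℂ) • ((1 - q) * (1 - q))‖ ≤ 1 :=
      StmtAux.norm_one_sub_two_sq_le _ hpsa hpn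
    set w : A := 2 • q - 2 • (q * q) with hw
    have c1 : 1 - (2 : ℂ) • (q * q) = w - π 1 := by rw [hπ1, hw]; module
    have c2 : 1 - (2 : ℂ) • ((1 - q) * (1 - q)) = w + π 1 := by
      rw [hπ1, hw, show (1 - q) * (1 - q) = 1 - 2 • q + q * q by
      simp only [mul_sub, sub_mul, mul_one, one_mul]; abel]; module
    rw [c1, ← hπn, map_sub, hπ2, norm_sub_rev] at b1
    rw [c2, ← hπn, map_add, hπ2, add_comm] at b2
    have d : π w = 0 := Subtype.ext (StmtAux.eq_zero_of_norm_one_add_le _ b2 b1)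
    have d' : w = 0 := by rw [← hπ2 w, d, map_zero]
    have : q - q * q = (2 : ℂ)⁻¹ • w := by rw [hw]; module
    rw [d', smul_zero, sub_eq_zero] at this
    exact this.symm
  have hqq' : (q : H →L[ℂ] H) * (q : H →L[ℂ] H) = (q : H →L[ℂ] H) := congrArg Subtype.val hqq
  set e : A := 1 - q with he
  have hPe : P e = 0 := by rw [he, map_sub, ← hq, hPq, sub_self]
  have hesa : IsSelfAdjoint (e : H →L[ℂ] H) := by
    have : IsSelfAdjoint (1 - (q : H →L[ℂ] H)) := (IsSelfAdjoint.one _).sub hqsa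
    exact this
  have hee : e * e = e := by
    rw [he, show (1 - q) * (1 - q) = 1 - 2 • q + q * q by
      simp only [mul_sub, sub_mul, mul_one, one_mul]; abel, hqq]; module
  have heinner : ∀ x v : H, inner ℂ ((e : H →L[ℂ] H) x) v = inner ℂ x ((e : H →L[ℂ] H) v) :=
    fun x v => hesa.isSymmetric x v
  have hqinner : ∀ x v : H, inner ℂ ((q : H →L[ℂ] H) x) v = inner ℂ x ((q : H →L[ℂ] H) v) :=
    fun x v => (show IsSelfAdjoint (q : H →L[ℂ] H) from hqsa).isSymmetric x v
  have hee' : ∀ x : H, (e : H →L[ℂ] H) ((e : H →L[ℂ] H) x) = (e : H →L[ℂ] H) x :=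
    fun x => congrArg (fun f : A => (f : H →L[ℂ] H) x) hee
  have hqq2 : ∀ x : H, (q : H →L[ℂ] H) ((q : H →L[ℂ] H) x) = (q : H →L[ℂ] H) x :=
    fun x => congrArg (fun f : A => (f : H →L[ℂ] H) x) hqq
  have hex : ∀ x : H, (inner ℂ ((e : H →L[ℂ] H) x) x).re = ‖(e : H →L[ℂ] H) x‖ ^ 2 := by
    intro x
    rw [← hee' x, heinner, hee', inner_self_eq_norm_sq_to_K]; norm_cast
  have hqx : ∀ x : H, (inner ℂ ((q : H →L[ℂ] H) x) x).re = ‖(q : H →L[ℂ] H) x‖ ^ 2 := by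
    intro x
    rw [← hqq2 x, hqinner, hqq2, inner_self_eq_norm_sq_to_K]; norm_cast
  have hcs : ∀ (a : A) (x v : H),
      ‖inner ℂ ((a : H →L[ℂ] H) x) v‖ ≤ ‖a‖ * ‖x‖ * ‖v‖ := fun a x v =>
    (norm_inner_le_norm _ _).trans (by gcongr; exact (a : H →L[ℂ] H).le_opNorm x)
  -- Since `P e = 0`, an element `b` whose form is dominated by `‖x‖ ‖e x‖` is killed by `P`: for
  -- every `δ > 0` and `c`, the element `N e + δ + c b` is accretive when `N` is large, and `P` maps
  -- it to `δ q + c P b`.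
  have hkill : ∀ (b : A) (M : ℝ), (∀ (x : H), ‖inner ℂ ((b : H →L[ℂ] H) x) x‖ ≤
      M * ‖x‖ * ‖(e : H →L[ℂ] H) x‖) → P b = 0 := by
    intro b M hb
    refine Subtype.ext (StmtAux.eq_zero_of_accretive _ fun c x => ?_)
    refine le_of_forall_pos_le_add fun ε hε => ?_
    obtain ⟨δ, hδ, hδε⟩ : ∃ δ : ℝ, 0 < δ ∧ δ * ‖(q : H →L[ℂ] H) x‖ ^ 2 ≤ ε := by
      refine ⟨ε / (‖(q : H →L[ℂ] H) x‖ ^ 2 + 1), by positivity, ?_⟩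
      rw [div_mul_eq_mul_div, div_le_iff₀ (by positivity)]
      nlinarith
    set L : ℝ := ‖c‖ * M with hL
    have h1 := hacc (((L ^ 2 / δ : ℝ) : ℂ) • e + (δ : ℂ) • 1 + c • b) (fun v => ?_) x
    · rw [map_add, map_add, map_smul, map_smul, map_smul, hPe, ← hq, smul_zero, zero_add] at h1
      have h2 : (inner ℂ ((((δ : ℂ) • q + c • P b : A) : H →L[ℂ] H) x) x).re =
          δ * ‖(q : H →L[ℂ] H) x‖ ^ 2 + (inner ℂ ((c • (P b : H →L[ℂ] H)) x) x).re := by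
        have : (((δ : ℂ) • q + c • P b : A) : H →L[ℂ] H) x =
          (δ : ℂ) • (q : H →L[ℂ] H) x + (c • (P b : H →L[ℂ] H)) x := rfl
        rw [this, inner_add_left, inner_smul_left, Complex.add_re, Complex.conj_ofReal,
          Complex.re_ofReal_mul, hqx]
      rw [h2] at h1
      linarith
    · have h3 : ((((L ^ 2 / δ : ℝ) : ℂ) • e + (δ : ℂ) • 1 + c • b : A) : H →L[ℂ] H) v =
        ((L ^ 2 / δ : ℝ) : ℂ) • (e : H →L[ℂ] H) v + (δ : ℂ) • v + c • (b : H →L[ℂ] H) v := rfl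
      rw [h3, inner_add_left, inner_add_left, inner_smul_left, inner_smul_left, inner_smul_left,
        Complex.add_re, Complex.add_re, Complex.conj_ofReal, Complex.conj_ofReal,
        Complex.re_ofReal_mul, Complex.re_ofReal_mul, hex, inner_self_eq_norm_sq_to_K]
      have h4 : ‖(starRingEnd ℂ) c * inner ℂ ((b : H →L[ℂ] H) v) v‖ ≤
          L * ‖v‖ * ‖(e : H →L[ℂ] H) v‖ := by
        rw [norm_mul, RCLike.norm_conj, hL, mul_assoc, mul_assoc]
        gcongr
        rw [← mul_assoc]
        exact hb v
      have h5 := (abs_le.1 ((Complex.abs_re_le_norm _).trans h4)).1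
      have h6 : (((‖v‖ : ℝ) : ℂ) ^ 2).re = ‖v‖ ^ 2 := by norm_cast
      have h7 : L * ‖v‖ * ‖(e : H →L[ℂ] H) v‖ ≤
          L ^ 2 / δ * ‖(e : H →L[ℂ] H) v‖ ^ 2 + δ * ‖v‖ ^ 2 := by
        have h8 : L ^ 2 / δ * ‖(e : H →L[ℂ] H) v‖ ^ 2 + δ * ‖v‖ ^ 2 -
            L * ‖v‖ * ‖(e : H →L[ℂ] H) v‖ =
            ((L * ‖(e : H →L[ℂ] H) v‖ - δ * ‖v‖ / 2) ^ 2 + 3 / 4 * (δ * ‖v‖) ^ 2) / δ := by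
          field_simp
          ring
        have : 0 ≤ ((L * ‖(e : H →L[ℂ] H) v‖ - δ * ‖v‖ / 2) ^ 2 + 3 / 4 * (δ * ‖v‖) ^ 2) / δ := by
          positivity
        linarith
      have h9 : (((RCLike.ofReal ‖v‖ : ℂ)) ^ 2).re = ‖v‖ ^ 2 := h6
      rw [h9]
      linarith
  have hPleft : ∀ a : A, P (e * a) = 0 := fun a => hkill _ ‖a‖ fun x => by
    have : ((e * a : A) : H →L[ℂ] H) x = (e : H →L[ℂ] H) ((a : H →L[ℂ] H) x) := rfl
    rw [this, heinner]
    exact hcs a _ _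
  have hPright : ∀ a : A, P (a * e) = 0 := fun a => hkill _ ‖a‖ fun x => by
    have : ((a * e : A) : H →L[ℂ] H) x = (a : H →L[ℂ] H) ((e : H →L[ℂ] H) x) := rfl
    rw [this]
    exact (hcs a _ _).trans (le_of_eq (by ring))
  have hcorner : ∀ a : A, P a = P (q * a * q) := by
    intro a
    have : q * a * q = a - e * a - (q * a) * e := by
      rw [he]; simp only [mul_sub, sub_mul, mul_one, one_mul]; abel
    rw [this, map_sub, map_sub, hPleft, hPright, sub_zero, sub_zero]
  -- `P` maps the accretive elements `‖a‖ 1 + c a` with `‖c‖ = 1` to `‖a‖ q + c P a`; this bounds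
  -- the form of `P a` by that of `q`, and puts `P a` into the corner.
  have hform : ∀ (a : A) (x : H),
      ‖inner ℂ ((P a : H →L[ℂ] H) x) x‖ ≤ ‖a‖ * ‖(q : H →L[ℂ] H) x‖ ^ 2 := by
    intro a x
    set r : ℂ := inner ℂ ((P a : H →L[ℂ] H) x) x with hr
    obtain ⟨c, hc1, hc⟩ : ∃ c : ℂ, ‖c‖ = 1 ∧ (starRingEnd ℂ) c * r = -(‖r‖ : ℂ) := by
      rcases eq_or_ne r 0 with h0 | h0
      · exact ⟨1, by simp, by simp [h0]⟩
      · have hn : (‖r‖ : ℂ) ≠ 0 := by exact_mod_cast norm_ne_zero_iff.2 h0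
        refine ⟨-(r / ‖r‖), ?_, ?_⟩
        · rw [norm_neg, norm_div, Complex.norm_real, norm_norm, div_self (norm_ne_zero_iff.2 h0)]
        · rw [map_neg, map_div₀, Complex.conj_ofReal, neg_mul, div_mul_eq_mul_div,
            Complex.conj_mul']
          field_simp
    have h1 := hacc (((‖a‖ : ℝ) : ℂ) • 1 + c • a) (fun v => ?_) x
    · rw [map_add, map_smul, map_smul, ← hq] at h1
      have h2 : ((((‖a‖ : ℝ) : ℂ) • q + c • P a : A) : H →L[ℂ] H) x =
        ((‖a‖ : ℝ) : ℂ) • (q : H →L[ℂ] H) x + c • (P a : H →L[ℂ] H) x := rfl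
      rw [h2, inner_add_left, inner_smul_left, inner_smul_left, ← hr, hc, Complex.add_re,
        Complex.conj_ofReal, Complex.re_ofReal_mul, hqx, Complex.neg_re, Complex.ofReal_re] at h1
      linarith
    · have h2 : ((((‖a‖ : ℝ) : ℂ) • 1 + c • a : A) : H →L[ℂ] H) v =
        ((‖a‖ : ℝ) : ℂ) • v + c • (a : H →L[ℂ] H) v := rfl
      rw [h2, inner_add_left, inner_smul_left, inner_smul_left, Complex.add_re,
        Complex.conj_ofReal, Complex.re_ofReal_mul, inner_self_eq_norm_sq_to_K]
      have h9 : (((RCLike.ofReal ‖v‖ : ℂ)) ^ 2).re = ‖v‖ ^ 2 := by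
        change (((‖v‖ : ℝ) : ℂ) ^ 2).re = ‖v‖ ^ 2
        norm_cast
      have h4 : ‖(starRingEnd ℂ) c * inner ℂ ((a : H →L[ℂ] H) v) v‖ ≤ ‖a‖ * ‖v‖ * ‖v‖ := by
        rw [norm_mul, RCLike.norm_conj, hc1, one_mul]
        exact hcs a v v
      have h5 := (abs_le.1 ((Complex.abs_re_le_norm _).trans h4)).1
      rw [h9]
      nlinarith
  have hqe : ∀ x, (q : H →L[ℂ] H) ((e : H →L[ℂ] H) x) = 0 := fun x => by
    have : q * e = 0 := by rw [he, mul_sub, hqq, mul_one, sub_self]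
    exact congrArg (fun f : A => (f : H →L[ℂ] H) x) this
  have hPe_right : ∀ a : A, P a * e = 0 := by
    intro a
    ext x
    refine ext_inner_right ℂ fun v => ?_
    have := (StmtAux.inner_eq_zero_of_form_le _ _ _ (norm_nonneg a) (hform a) _ v (hqe x)).1
    exact this.trans (inner_zero_left v).symm
  have hPe_left : ∀ a : A, e * P a = 0 := by
    intro a
    ext x
    refine ext_inner_right ℂ fun v => ?_
    have := (StmtAux.inner_eq_zero_of_form_le _ _ _ (norm_nonneg a) (hform a) _ x (hqe v)).2
    rw [← heinner] at this
    exact this.trans (inner_zero_left v).symm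
  have hPq_right : ∀ a : A, P a * q = P a := fun a => by
    have := hPe_right a
    rw [he, mul_sub, mul_one, sub_eq_zero] at this
    exact this.symm
  have hPq_left : ∀ a : A, q * P a = P a := fun a => by
    have := hPe_left a
    rw [he, sub_mul, one_mul, sub_eq_zero] at this
    exact this.symm
  have hπcorner : ∀ a : A, π (q * a * q) = q * π a * q := by
    intro a
    rw [hπ, hπ, ← hcorner, mul_sub, sub_mul, mul_smul_comm, hPq_left, smul_mul_assoc, hPq_right]
  have husq : (2 • q - 1) * (2 • q - 1) = 1 := by
    rw [show (2 • q - 1) * (2 • q - 1) = 4 • (q * q) - 4 • q + 1 by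
      simp only [mul_sub, sub_mul, mul_one, one_mul, smul_mul_assoc, mul_smul_comm]; abel, hqq]
    module
  have hsq : ∀ x : A, π (x * x) = π x * (2 • q - 1) * π x :=
    StmtAux.isometry_map_sq A π hπ2 hπn _ hπ1 husq
  have hjordan : ∀ x y : A, π (x * y + y * x) =
      π x * (2 • q - 1) * π y + π y * (2 • q - 1) * π x := by
    intro x y
    have h1 := hsq (x + y)
    have h2 : (x + y) * (x + y) = x * x + y * y + (x * y + y * x) := by noncomm_ring
    rw [h2, map_add, map_add (f := π) (x * x), hsq x, hsq y] at h1
    have h3 := eq_sub_of_add_eq' h1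
    rw [h3, map_add]
    simp only [add_mul, mul_add]
    abel
  -- On the corner `u = 2q - 1` acts as the identity.
  have hcq : ∀ b c : A, q * b * q * (2 • q - 1) * c = q * b * q * c := by
    intro b c
    rw [mul_sub, mul_smul_comm, mul_assoc (q * b) q q, hqq, mul_one]
    congr 1
    module
  have hJ : ∀ a b : A,
      π ((2 : ℂ)⁻¹ • ((q * a * q) * (q * b * q) + (q * b * q) * (q * a * q))) =
        (2 : ℂ)⁻¹ • (π (q * a * q) * π (q * b * q) + π (q * b * q) * π (q * a * q)) := by
    intro a b
    rw [map_smul, hjordan]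
    rw [hπcorner a, hπcorner b, hcq, hcq]
  have hPcorner : ∀ a : A, q * P a * q = P a := fun a => by rw [hPq_left, hPq_right]
  have hπP : ∀ a : A, π (P a) = P a := fun a => by rw [hπ, hidem]; module
  have hPπ : ∀ a : A, P a = (2 : ℂ)⁻¹ • (a + π a) := fun a => by rw [hπ]; module
  have hexp : ∀ a b : A, P ((2 : ℂ)⁻¹ • (a * P b + P b * a)) =
      (2 : ℂ)⁻¹ • (P a * P b + P b * P a) := by
    intro a b
    have h1 : q * ((2 : ℂ)⁻¹ • (a * P b + P b * a)) * q =
        (2 : ℂ)⁻¹ • ((q * a * q) * (q * P b * q) + (q * P b * q) * (q * a * q)) := by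
      rw [hPcorner, mul_smul_comm, smul_mul_assoc, mul_add, add_mul]
      congr 2
      · rw [mul_assoc (q * a) q, hPq_left, ← mul_assoc, mul_assoc (q * a), hPq_right]
      · rw [← mul_assoc, hPq_left, ← mul_assoc, ← mul_assoc, hPq_right]
    rw [hcorner, h1, hPπ, hJ, hPcorner, hπP, hcorner a, hPπ (q * a * q)]
    simp only [smul_mul_assoc, mul_smul_comm, add_mul, mul_add, smul_add]
    module
  refine ⟨⟨hqsa, hqq'⟩, hcorner, fun a => ⟨π a, hπcorner a⟩, fun a => hπn _, fun a => hπ2 _,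
    hJ, fun a b => ?_, hexp⟩
  refine ⟨(2 : ℂ)⁻¹ • (P a * P b + P b * P a), ?_⟩
  rw [hexp, hidem]
end

section
/- Let A ⊆ B(H) be a unital operator algebra and let P : A → A be a contractive real positive linear projection whose range is contained in Δ(A) = {x ∈ A : x* ∈ A}. Then the P-product (x, y) ↦ P(x·y) on the range of P is associative — i.e. P(P(x·y)·z) = P(x·P(y·z)) for all x, y, z in the range of P — if and only if P(P(a)·P(b)) = P(a·P(b)) and P(P(a)·P(b)) = P(P(a)·b) for all a, b ∈ A. -/
set_option maxHeartbeats 1000000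
set_option synthInstance.maxHeartbeats 1000000

open ContinuousLinearMap

/-!
The nontrivial direction: if the `P`-product is associative then `P (k x) = P (x k) = 0` whenever
`P k = 0` and `P x = x`; the identities follow with `k = a - P a`. No positivity is available for a
non-self-adjoint `k`, so the argument passes through derivations.

*Order.* `P` is self-adjoint on `Δ(A)` and satisfies Kadison's inequality `P(a)² ≤ P(a²)`
(`Setup.kadison`, from Bernstein polynomials, which stay in the algebra). Together with a
Schwarz-type estimate this gives an ideal-like set `Nul P` of elements `l` with
`P (a l) = P (l a) = 0` for all `a`; for `x` self-adjoint and fixed by `P` it contains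
`y - P y` for `y = x ^ n` and `y = exp (z x)` (`Setup.nul_pow`, `Setup.nul_exp`).

*Jordan identity.* For fixed `x` and arbitrary `k`,
`P (x k + k x) = P (x P(k) + P(k) x)` (`Setup.jordan`). With `x` self-adjoint, the entire function
`z ↦ P (e^{-zx} P (e^{zx} k e^{zx}) e^{-zx})` is bounded on the imaginary axis because `e^{isx}` is
unitary, and on the real axis because the map there is real positive and sends `1` to `P 1`. It has
exponential type, so Phragmén–Lindelöf and Liouville make it constant; differentiate at `0`.

*Associativity.* It forces `x y - P (x y) ∈ Nul P` for all fixed `x`, `y` (`Setup.nul_mul`). For `k`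
in the kernel put `δ(x) = P (k x)`, so `P (x k) = -δ(x)`. The Jordan identity for `k x` and `y k`
gives `2 δ(x·y) = δ(x)·y + y·δ(x) + δ(y)·x + x·δ(y)`, hence `δ(x·y) = δ(y·x)`. Applying the latter
to the kernel elements `k x - P (k x)` and `x k - P (x k)` makes `δ` linear over commutators. The
range of `P` is a semiprime ring, and pure ring theory shows that `δ` has central values and is a
derivation (`central_of_trace`, `leibniz_of_central`). Consequently
`s ↦ δ(e^{ish})·e^{-ish}` is additive for self-adjoint fixed `h`; being bounded it vanishes, and
its derivative at `0` is `i δ(h)` (`Setup.ker_mul_sa`).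
-/

set_option linter.unusedSectionVars false

namespace PProduct


variable {H : Type*} [NormedAddCommGroup H] [InnerProductSpace ℂ H] [CompleteSpace H]
variable {A : Subalgebra ℂ (H →L[ℂ] H)}

/-! ### Quadratic forms and adjoints inside the algebra -/

/-- The quadratic form `ξ ↦ ⟨ξ, a ξ⟩` of an element of the operator algebra. -/
noncomputable def qf (a : A) (ξ : H) : ℂ := inner ℂ ξ ((a : H →L[ℂ] H) ξ)

/-- `b` is the adjoint of `a`, both being elements of `A`; in particular `a ∈ Δ(A)`, and
`IsAdj a a` says that `a` is self-adjoint. -/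
def IsAdj (a b : A) : Prop := adjoint (a : H →L[ℂ] H) = (b : H →L[ℂ] H)

/-- The hypotheses on the projection `P`, with real positivity expressed through quadratic forms. -/
structure Setup (P : A →ₗ[ℂ] A) : Prop where
  closed : IsClosed (A : Set (H →L[ℂ] H))
  idem : ∀ a, P (P a) = P a
  contr : ∀ a : A, ‖P a‖ ≤ ‖a‖
  rp : ∀ a : A, (∀ ξ, 0 ≤ (qf a ξ).re) → ∀ ξ, 0 ≤ (qf (P a) ξ).re
  diag : ∀ a : A, ∃ b : A, IsAdj (P a) b

lemma qf_add (a b : A) (ξ : H) : qf (a + b) ξ = qf a ξ + qf b ξ := by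
  simp [qf, inner_add_right]

lemma qf_sub (a b : A) (ξ : H) : qf (a - b) ξ = qf a ξ - qf b ξ := by
  simp [qf, inner_sub_right]

lemma qf_smul (c : ℂ) (a : A) (ξ : H) : qf (c • a) ξ = c * qf a ξ := by
  simp [qf, inner_smul_right]

lemma qf_one (ξ : H) : qf (1 : A) ξ = (‖ξ‖ : ℂ) ^ 2 := by
  simp [qf, inner_self_eq_norm_sq_to_K]

lemma qf_zero (ξ : H) : qf (0 : A) ξ = 0 := by
  simp [qf]

lemma norm_qf_le (a : A) (ξ : H) : ‖qf a ξ‖ ≤ ‖a‖ * ‖ξ‖ ^ 2 := by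
  have h1 := norm_inner_le_norm (𝕜 := ℂ) ξ ((a : H →L[ℂ] H) ξ)
  have h2 := (a : H →L[ℂ] H).le_opNorm ξ
  have h3 : ‖a‖ = ‖(a : H →L[ℂ] H)‖ := rfl
  unfold qf
  rw [h3]
  nlinarith [norm_nonneg ξ]

lemma eq_zero_of_qf {a : A} (h : ∀ ξ, qf a ξ = 0) : a = 0 := by
  apply Subtype.ext
  have := (inner_map_self_eq_zero ((a : H →L[ℂ] H) : H →ₗ[ℂ] H)).1
    (fun ξ => inner_eq_zero_symm.1 (h ξ))
  ext ξ
  simpa using congrArg (fun T : H →ₗ[ℂ] H => T ξ) this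

lemma IsAdj.symm {a b : A} (h : IsAdj a b) : IsAdj b a := by
  unfold IsAdj at *
  rw [← h, adjoint_adjoint]

lemma IsAdj.add {a b c d : A} (h : IsAdj a b) (h' : IsAdj c d) : IsAdj (a + c) (b + d) := by
  unfold IsAdj at *
  simp [h, h']

lemma IsAdj.sub {a b c d : A} (h : IsAdj a b) (h' : IsAdj c d) : IsAdj (a - c) (b - d) := by
  unfold IsAdj at *
  simp [h, h']

lemma IsAdj.mul {a b c d : A} (h : IsAdj a b) (h' : IsAdj c d) : IsAdj (a * c) (d * b) := by
  unfold IsAdj at *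
  change adjoint ((a : H →L[ℂ] H) * (c : H →L[ℂ] H)) = (d : H →L[ℂ] H) * (b : H →L[ℂ] H)
  rw [← h, ← h', ← star_eq_adjoint, ← star_eq_adjoint, ← star_eq_adjoint]
  exact star_mul _ _

lemma IsAdj.smul {a b : A} (h : IsAdj a b) (c : ℂ) : IsAdj (c • a) (star c • b) := by
  unfold IsAdj at *
  rw [← star_eq_adjoint] at *
  simp [← h]

lemma IsAdj.rsmul {a : A} (h : IsAdj a a) (c : ℝ) : IsAdj ((c : ℂ) • a) ((c : ℂ) • a) := by
  simpa using h.smul (c : ℂ)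

lemma isAdj_one : IsAdj (1 : A) 1 := by
  unfold IsAdj
  simp [← star_eq_adjoint]

lemma IsAdj.unique {a b c : A} (h : IsAdj a b) (h' : IsAdj a c) : b = c :=
  Subtype.ext (Eq.trans (Eq.symm h) h')

lemma IsAdj.inner_left {a b : A} (h : IsAdj a b) (ξ η : H) :
    inner ℂ ξ ((a : H →L[ℂ] H) η) = inner ℂ ((b : H →L[ℂ] H) ξ) η := by
  unfold IsAdj at h
  rw [← h, adjoint_inner_left]

lemma IsAdj.qf_im {a : A} (h : IsAdj a a) (ξ : H) : (qf a ξ).im = 0 := by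
  have := h.inner_left ξ ξ
  have h2 : (starRingEnd ℂ) (qf a ξ) = qf a ξ := by
    unfold qf
    rw [inner_conj_symm, ← this]
  exact Complex.conj_eq_iff_im.1 h2

lemma isAdj_of_qf_im {a : A} (h : ∀ ξ, (qf a ξ).im = 0) : IsAdj a a := by
  unfold IsAdj
  have : LinearMap.IsSymmetric ((a : H →L[ℂ] H) : H →ₗ[ℂ] H) := by
    rw [LinearMap.isSymmetric_iff_inner_map_self_real]
    intro v
    have := Complex.conj_eq_iff_im.2 (h v)
    unfold qf at this
    rw [inner_conj_symm] at this
    simp only [coe_coe]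
    rw [inner_conj_symm, this]
  exact (isSelfAdjoint_iff_isSymmetric.2 this).adjoint_eq

lemma qf_adj_mul {a b : A} (h : IsAdj a b) (ξ : H) :
    qf (b * a) ξ = ((‖(a : H →L[ℂ] H) ξ‖ : ℝ) : ℂ) ^ 2 := by
  have := h.symm.inner_left ξ ((a : H →L[ℂ] H) ξ)
  rw [inner_self_eq_norm_sq_to_K] at this
  simpa [qf] using this

/-- The elements `l` with `P (a l) = P (l a) = 0` for all `a`. -/
def Nul (P : A →ₗ[ℂ] A) (l : A) : Prop := ∀ a, P (a * l) = 0 ∧ P (l * a) = 0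

lemma eq_zero_of_quad {C : ℝ} {z : ℂ}
    (h : ∀ μ : ℂ, 0 ≤ ‖μ‖ ^ 2 * C + 2 * (μ * z).re) : z = 0 := by
  by_contra hz
  have hpos : 0 < Complex.normSq z := Complex.normSq_pos.2 hz
  have key : ∀ ε : ℝ, 0 ≤ ε ^ 2 * Complex.normSq z * C - 2 * ε * Complex.normSq z := by
    intro ε
    have h1 := h (-(ε : ℂ) * (starRingEnd ℂ) z)
    have h2 : (-(ε : ℂ) * (starRingEnd ℂ) z * z) = ((-(ε * Complex.normSq z) : ℝ) : ℂ) := by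
      rw [mul_assoc, ← Complex.normSq_eq_conj_mul_self]; push_cast; ring
    rw [h2, Complex.ofReal_re] at h1
    have h3 : ‖-(ε : ℂ) * (starRingEnd ℂ) z‖ ^ 2 = ε ^ 2 * Complex.normSq z := by
      rw [norm_mul, mul_pow, norm_neg, Complex.norm_real, RCLike.norm_conj, Real.norm_eq_abs,
        sq_abs, Complex.normSq_eq_norm_sq]
    rw [h3] at h1
    linarith
  have h4 := key (1 / (|C| + 1))
  have hC : 0 < |C| + 1 := by positivity
  have h5 : (1 / (|C| + 1)) * C < 2 := by
    rw [div_mul_eq_mul_div, div_lt_iff₀ hC]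
    linarith [le_abs_self C, abs_nonneg C]
  have h6 : 0 < (1 / (|C| + 1)) * Complex.normSq z := by positivity
  nlinarith

lemma coe_mul_apply (a b : A) (ξ : H) :
    ((a * b : A) : H →L[ℂ] H) ξ = (a : H →L[ℂ] H) ((b : H →L[ℂ] H) ξ) := rfl

lemma norm_apply_le (a : A) (ξ : H) : ‖(a : H →L[ℂ] H) ξ‖ ≤ ‖a‖ * ‖ξ‖ :=
  (a : H →L[ℂ] H).le_opNorm ξ

/-- A real positive map is bounded by its value at `1`, in the sense of quadratic forms. -/
lemma norm_qf_le_of_rp (Q : A →ₗ[ℂ] A)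
    (hQ : ∀ a : A, (∀ ξ, 0 ≤ (qf a ξ).re) → ∀ ξ, 0 ≤ (qf (Q a) ξ).re) (a : A) (ξ : H) :
    ‖qf (Q a) ξ‖ ≤ ‖a‖ * (qf (Q 1) ξ).re := by
  have key : ∀ μ : ℂ, ‖μ‖ = 1 → 0 ≤ ‖a‖ * (qf (Q 1) ξ).re + (μ * qf (Q a) ξ).re := by
    intro μ hμ
    have := hQ ((‖a‖ : ℂ) • 1 + μ • a) (fun ζ => by
      rw [qf_add, qf_smul, qf_smul, qf_one, Complex.add_re]
      have h1 := norm_qf_le a ζ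
      have h2 := Complex.abs_re_le_norm (μ * qf a ζ)
      rw [norm_mul, hμ, one_mul] at h2
      have h3 : ((‖a‖ : ℂ) * (‖ζ‖ : ℂ) ^ 2).re = ‖a‖ * ‖ζ‖ ^ 2 := by
        norm_cast
      rw [h3]
      linarith [neg_abs_le (μ * qf a ζ).re]) ξ
    rw [map_add, map_smul, map_smul, qf_add, qf_smul, qf_smul, Complex.add_re,
      Complex.re_ofReal_mul] at this
    exact this
  by_cases hz : qf (Q a) ξ = 0
  · have h1 := key 1 (by simp)
    have h2 := key (-1) (by simp)
    rw [hz] at h1 ⊢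
    simpa using h1
  · have hn : ‖qf (Q a) ξ‖ ≠ 0 := norm_ne_zero_iff.2 hz
    -- the phase `μ` turns `qf (Q a) ξ` into `-‖qf (Q a) ξ‖`
    have := key (-(starRingEnd ℂ (qf (Q a) ξ)) / ‖qf (Q a) ξ‖) (by
      rw [norm_div, norm_neg, RCLike.norm_conj, Complex.norm_real, norm_norm, div_self hn])
    have h2 : (-(starRingEnd ℂ (qf (Q a) ξ)) / ‖qf (Q a) ξ‖ * qf (Q a) ξ)
        = ((-‖qf (Q a) ξ‖ : ℝ) : ℂ) := by
      rw [div_mul_eq_mul_div, neg_mul, ← Complex.normSq_eq_conj_mul_self,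
        Complex.normSq_eq_norm_sq]
      have : (‖qf (Q a) ξ‖ : ℂ) ≠ 0 := by exact_mod_cast hn
      push_cast
      field_simp
    rw [h2, Complex.ofReal_re] at this
    linarith

/-! ### Self-adjointness of the projection and a Schwarz estimate -/

namespace Setup

variable {P : A →ₗ[ℂ] A} (S : Setup P)
include S

lemma map_sa {a : A} (h : IsAdj a a) : IsAdj (P a) (P a) := by
  apply isAdj_of_qf_im
  intro ξ
  have h1 := S.rp (Complex.I • a) (fun ζ => by rw [qf_smul]; simp [h.qf_im ζ]) ξ
  have h2 := S.rp ((-Complex.I) • a) (fun ζ => by rw [qf_smul]; simp [h.qf_im ζ]) ξ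
  rw [map_smul, qf_smul] at h1 h2
  simp at h1 h2
  linarith

lemma map_adj {a b : A} (h : IsAdj a b) : IsAdj (P a) (P b) := by
  have h1 := S.map_sa (h.add h.symm |>.trans (by rw [add_comm]) : IsAdj (a + b) (a + b))
  have h2 := S.map_sa (a := Complex.I • (a - b)) (by
    have := (h.sub h.symm).smul Complex.I
    refine this.trans ?_
    congr 1
    simp [smul_sub]
    abel)
  rw [map_add] at h1
  rw [map_smul, map_sub] at h2
  have h3 := (h2.smul (-Complex.I))
  unfold IsAdj at *
  simp [smul_smul] at h1 h3
  have e : (2 : ℂ) • adjoint (P a : H →L[ℂ] H) = (2 : ℂ) • (P b : H →L[ℂ] H) := by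
    have := congrArg₂ (· + ·) h1 h3
    rw [two_smul, two_smul]
    calc _ = _ := by abel
      _ = _ := this
      _ = _ := by abel
  exact smul_right_injective _ (two_ne_zero) e

lemma re_qf_one_le (ξ : H) : (qf (P 1) ξ).re ≤ ‖ξ‖ ^ 2 := by
  have h1 := norm_qf_le (P 1) ξ
  have h2 := Complex.re_le_norm (qf (P 1) ξ)
  have h3 : ‖(1 : A)‖ ≤ 1 := ContinuousLinearMap.norm_id_le
  have h4 := S.contr 1
  nlinarith [sq_nonneg ‖ξ‖]

/-- Apply `P` to the Schwarz-type inequality `‖μ a‖² 1 + c* c + 2 Re (μ a c) ≥ 0` and let the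
scalar `μ` vary. -/
lemma map_mul_eq_zero {c c' : A} (h : IsAdj c c') (h0 : P (c' * c) = 0) (a : A) :
    P (a * c) = 0 := by
  apply eq_zero_of_qf
  intro ξ
  apply eq_zero_of_quad (C := ‖a‖ ^ 2 * (qf (P 1) ξ).re)
  intro μ
  have := S.rp (((‖μ • a‖ ^ 2 : ℝ) : ℂ) • 1 + c' * c + (2 * μ) • (a * c)) (fun ζ => by
    rw [qf_add, qf_add, qf_smul, qf_one, qf_adj_mul h, mul_smul, ← smul_mul_assoc, qf_smul]
    generalize hb : μ • a = b
    have h1 : ‖qf (b * c) ζ‖ ≤ ‖ζ‖ * (‖b‖ * ‖(c : H →L[ℂ] H) ζ‖) := by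
      unfold qf
      rw [coe_mul_apply]
      exact (norm_inner_le_norm _ _).trans
        (mul_le_mul_of_nonneg_left (norm_apply_le _ _) (norm_nonneg _))
    have h2 := Complex.abs_re_le_norm (qf (b * c) ζ)
    have h3 := neg_abs_le (qf (b * c) ζ).re
    have h4 : (((‖b‖ ^ 2 : ℝ) : ℂ) * (‖ζ‖ : ℂ) ^ 2
        + ((‖(c : H →L[ℂ] H) ζ‖ : ℝ) : ℂ) ^ 2 + 2 * qf (b * c) ζ).re
        = ‖b‖ ^ 2 * ‖ζ‖ ^ 2 + ‖(c : H →L[ℂ] H) ζ‖ ^ 2 + 2 * (qf (b * c) ζ).re := by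
      simp only [Complex.add_re, ← Complex.ofReal_pow, ← Complex.ofReal_mul, Complex.ofReal_re]
      simp
    rw [h4]
    nlinarith [sq_nonneg (‖b‖ * ‖ζ‖ - ‖(c : H →L[ℂ] H) ζ‖)]) ξ
  rw [map_add, map_add, map_smul, map_smul, h0, add_zero, qf_add, qf_smul, qf_smul,
    Complex.add_re, Complex.re_ofReal_mul, mul_assoc, norm_smul] at this
  have h5 : (2 * (μ * qf (P (a * c)) ξ)).re = 2 * (μ * qf (P (a * c)) ξ).re := by simp
  rw [h5] at this
  nlinarith

lemma map_mul_eq_zero' {c c' : A} (h : IsAdj c c') (h0 : P (c * c') = 0) (a : A) :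
    P (c * a) = 0 := by
  apply eq_zero_of_qf
  intro ξ
  apply eq_zero_of_quad (C := ‖a‖ ^ 2 * (qf (P 1) ξ).re)
  intro μ
  have := S.rp (((‖μ • a‖ ^ 2 : ℝ) : ℂ) • 1 + c * c' + (2 * μ) • (c * a)) (fun ζ => by
    rw [qf_add, qf_add, qf_smul, qf_one, qf_adj_mul h.symm, mul_smul, ← mul_smul_comm, qf_smul]
    generalize hb : μ • a = b
    have h1 : ‖qf (c * b) ζ‖ ≤ ‖(c' : H →L[ℂ] H) ζ‖ * (‖b‖ * ‖ζ‖) := by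
      unfold qf
      rw [coe_mul_apply, h.inner_left]
      exact (norm_inner_le_norm _ _).trans
        (mul_le_mul_of_nonneg_left (norm_apply_le _ _) (norm_nonneg _))
    have h2 := Complex.abs_re_le_norm (qf (c * b) ζ)
    have h3 := neg_abs_le (qf (c * b) ζ).re
    have h4 : (((‖b‖ ^ 2 : ℝ) : ℂ) * (‖ζ‖ : ℂ) ^ 2
        + ((‖(c' : H →L[ℂ] H) ζ‖ : ℝ) : ℂ) ^ 2 + 2 * qf (c * b) ζ).re
        = ‖b‖ ^ 2 * ‖ζ‖ ^ 2 + ‖(c' : H →L[ℂ] H) ζ‖ ^ 2 + 2 * (qf (c * b) ζ).re := by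
      simp only [Complex.add_re, ← Complex.ofReal_pow, ← Complex.ofReal_mul, Complex.ofReal_re]
      simp
    rw [h4]
    nlinarith [sq_nonneg (‖b‖ * ‖ζ‖ - ‖(c' : H →L[ℂ] H) ζ‖)]) ξ
  rw [map_add, map_add, map_smul, map_smul, h0, add_zero, qf_add, qf_smul, qf_smul,
    Complex.add_re, Complex.re_ofReal_mul, mul_assoc, norm_smul] at this
  have h5 : (2 * (μ * qf (P (c * a)) ξ)).re = 2 * (μ * qf (P (c * a)) ξ).re := by simp
  rw [h5] at this
  nlinarith

lemma nul_of_sq {l : A} (h : IsAdj l l) (h0 : P (l * l) = 0) : Nul P l :=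
  fun a => ⟨S.map_mul_eq_zero h h0 a, S.map_mul_eq_zero' h h0 a⟩

end Setup

/-! ### Kadison's inequality -/

lemma coe_nonneg_of_qf {d : A} (hd : IsAdj d d) (hp : ∀ ξ, 0 ≤ (qf d ξ).re) :
    0 ≤ (d : H →L[ℂ] H) := by
  rw [nonneg_iff_isPositive, isPositive_def']
  refine ⟨hd, fun ξ => ?_⟩
  rw [reApplyInnerSelf_apply, ← inner_re_symm]
  exact hp ξ

lemma qf_nonneg_of_coe {d : A} (hd : 0 ≤ (d : H →L[ℂ] H)) (ξ : H) : 0 ≤ (qf d ξ).re := by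
  rw [nonneg_iff_isPositive] at hd
  exact hd.re_inner_nonneg_right ξ

lemma coe_nonneg_pow_mul {h : A} (h0 : 0 ≤ (h : H →L[ℂ] H)) (h1 : 0 ≤ ((1 - h : A) : H →L[ℂ] H))
    (i j : ℕ) : 0 ≤ ((h ^ i * (1 - h) ^ j : A) : H →L[ℂ] H) := by
  have hp : ∀ (T : H →L[ℂ] H), 0 ≤ T → ∀ n : ℕ, 0 ≤ T ^ n := by
    intro T hT n
    induction n with
    | zero => simp
    | succ n ih => rw [pow_succ]; exact Commute.mul_nonneg ih hT ((Commute.refl T).pow_left n)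
  have hc : Commute (h : H →L[ℂ] H) ((1 - h : A) : H →L[ℂ] H) := by
    simp only [AddSubgroupClass.coe_sub, OneMemClass.coe_one]
    exact (Commute.one_right _).sub_right (Commute.refl _)
  have := Commute.mul_nonneg (hp _ h0 i) (hp _ h1 j) (hc.pow_pow i j)
  simpa using this

lemma sum_bernstein (h : A) (n : ℕ) :
    ∑ j ∈ Finset.range (n + 1), (n.choose j : ℂ) • (h ^ j * (1 - h) ^ (n - j)) = 1 := by
  have := congrArg (Polynomial.aeval (R := ℂ) h) (bernsteinPolynomial.sum ℂ n)
  simpa [bernsteinPolynomial, map_sum, Algebra.smul_def, mul_assoc] using this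

lemma sum_bernstein_one (h : A) (n : ℕ) :
    ∑ j ∈ Finset.range (n + 1), (j : ℂ) • ((n.choose j : ℂ) • (h ^ j * (1 - h) ^ (n - j)))
      = (n : ℂ) • h := by
  have := congrArg (Polynomial.aeval (R := ℂ) h) (bernsteinPolynomial.sum_smul ℂ n)
  simpa [bernsteinPolynomial, map_sum, Algebra.smul_def, mul_assoc] using this

lemma sum_bernstein_two (h : A) (n : ℕ) :
    ∑ j ∈ Finset.range (n + 1),
      ((j : ℂ) * (j - 1)) • ((n.choose j : ℂ) • (h ^ j * (1 - h) ^ (n - j)))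
      = ((n : ℂ) * (n - 1)) • h ^ 2 := by
  have := congrArg (Polynomial.aeval (R := ℂ) h) (bernsteinPolynomial.sum_mul_smul ℂ n)
  have hc : ∀ m : ℕ, ((m * (m - 1) : ℕ) : ℂ) = (m : ℂ) * (m - 1) := by
    intro m
    cases m <;> simp
  simp only [bernsteinPolynomial, map_sum, ← Nat.cast_smul_eq_nsmul ℂ, hc] at this
  simpa [Algebra.smul_def, mul_assoc] using this

/-- Kadison's inequality up to an error of relative order `1 / n`. With `h = (1 + a) / 2`, the
Bernstein elements `f j` of degree `n` in `h` are positive, so `P (f j)` has a nonnegative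
quadratic form at `(2 j - n) ξ - n P(a) ξ`. Summing over `j` gives the estimate, the moments of the
Bernstein polynomials being explicit. -/
lemma Setup.kadison_aux {P : A →ₗ[ℂ] A} (S : Setup P) {a : A} (ha : IsAdj a a) (ha1 : ‖a‖ ≤ 1)
    (ξ : H) (n : ℕ) :
    0 ≤ ((n : ℝ) ^ 2 - n) * (qf (P (a * a)) ξ).re + n * (qf (P 1) ξ).re
      - n ^ 2 * ‖(P a : H →L[ℂ] H) ξ‖ ^ 2 := by
  set η : H := (P a : H →L[ℂ] H) ξ with hη
  set h : A := (2⁻¹ : ℂ) • (1 + a) with hh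
  have habs : ∀ ζ, |(qf a ζ).re| ≤ ‖ζ‖ ^ 2 := fun ζ =>
    (Complex.abs_re_le_norm _).trans ((norm_qf_le a ζ).trans (by nlinarith [sq_nonneg ‖ζ‖]))
  have hone : ∀ ζ : H, (qf (1 : A) ζ).re = ‖ζ‖ ^ 2 := fun ζ => by
    rw [qf_one]; norm_cast
  have h2 : (2⁻¹ : ℂ) = ((2⁻¹ : ℝ) : ℂ) := by push_cast; rfl
  have hsa : IsAdj h h := by
    rw [hh, h2]
    exact (isAdj_one.add ha).rsmul _
  have hpos : 0 ≤ (h : H →L[ℂ] H) := coe_nonneg_of_qf hsa (fun ζ => by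
    rw [hh, h2, qf_smul, Complex.re_ofReal_mul, qf_add, Complex.add_re, hone]
    have := neg_abs_le (qf a ζ).re
    have := habs ζ
    linarith)
  have hpos' : 0 ≤ ((1 - h : A) : H →L[ℂ] H) := coe_nonneg_of_qf (isAdj_one.sub hsa) (fun ζ => by
    rw [qf_sub, Complex.sub_re, hh, h2, qf_smul, Complex.re_ofReal_mul, qf_add, Complex.add_re,
      hone]
    have := le_abs_self (qf a ζ).re
    have := habs ζ
    linarith)
  set f : ℕ → A := fun j => (n.choose j : ℂ) • (h ^ j * (1 - h) ^ (n - j)) with hf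
  have hfpos : ∀ j ζ, 0 ≤ (qf (P (f j)) ζ).re := fun j ζ => S.rp _ (fun ζ' => by
    rw [hf]
    simp only
    rw [qf_smul, ← Complex.ofReal_natCast, Complex.re_ofReal_mul]
    exact mul_nonneg (Nat.cast_nonneg _) (qf_nonneg_of_coe (coe_nonneg_pow_mul hpos hpos' _ _) _)) ζ
  have e0 : ∑ j ∈ Finset.range (n + 1), f j = 1 := sum_bernstein h n
  have e1 : ∑ j ∈ Finset.range (n + 1), (j : ℂ) • f j = (n : ℂ) • h := sum_bernstein_one h n
  have e2 : ∑ j ∈ Finset.range (n + 1), ((j : ℂ) * (j - 1)) • f j = ((n : ℂ) * (n - 1)) • h ^ 2 :=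
    sum_bernstein_two h n
  have E1 : ∑ j ∈ Finset.range (n + 1), (2 * (j : ℂ) - n) • f j = (n : ℂ) • a := by
    have : ∀ j : ℕ, (2 * (j : ℂ) - n) • f j = (2 : ℂ) • ((j : ℂ) • f j) - (n : ℂ) • f j := by
      intro j; module
    simp only [this, Finset.sum_sub_distrib, ← Finset.smul_sum, e0, e1, hh]
    module
  have E2 : ∑ j ∈ Finset.range (n + 1), (2 * (j : ℂ) - n) ^ 2 • f j
      = ((n : ℂ) ^ 2 - n) • (a * a) + (n : ℂ) • (1 : A) := by
    have : ∀ j : ℕ, (2 * (j : ℂ) - n) ^ 2 • f j = (4 : ℂ) • (((j : ℂ) * (j - 1)) • f j)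
        + (4 - 4 * (n : ℂ)) • ((j : ℂ) • f j) + ((n : ℂ) ^ 2) • f j := by
      intro j; module
    have hsq : h ^ 2 = (4⁻¹ : ℂ) • (1 + (2 : ℂ) • a + a * a) := by
      rw [hh, smul_pow, sq (1 + a), mul_add, add_mul, add_mul]
      simp only [one_mul, mul_one]
      module
    simp only [this, Finset.sum_add_distrib, ← Finset.smul_sum, e0, e1, e2, hsq]
    rw [hh]
    module
  have hsum : 0 ≤ ∑ j ∈ Finset.range (n + 1),
      (qf (P (f j)) ((2 * (j : ℂ) - n) • ξ - (n : ℂ) • η)).re :=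
    Finset.sum_nonneg fun j _ => hfpos j _
  have hexp : ∀ j : ℕ, qf (P (f j)) ((2 * (j : ℂ) - n) • ξ - (n : ℂ) • η)
      = inner ℂ ξ ((P ((2 * (j : ℂ) - n) ^ 2 • f j) : H →L[ℂ] H) ξ)
        - n * inner ℂ ξ ((P ((2 * (j : ℂ) - n) • f j) : H →L[ℂ] H) η)
        - n * inner ℂ η ((P ((2 * (j : ℂ) - n) • f j) : H →L[ℂ] H) ξ)
        + n ^ 2 * inner ℂ η ((P (f j) : H →L[ℂ] H) η) := by
    intro j
    have hr : (starRingEnd ℂ) (2 * (j : ℂ) - n) = 2 * (j : ℂ) - n := by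
      have e : 2 * (j : ℂ) - n = ((2 * j - n : ℝ) : ℂ) := by push_cast; rfl
      rw [e, Complex.conj_ofReal]
    have hn : (starRingEnd ℂ) (n : ℂ) = n := by simp
    simp only [qf, map_smul, map_sub, inner_sub_left, inner_sub_right, inner_smul_left,
      inner_smul_right, hr, hn, SetLike.val_smul, FunLike.coe_smul, Pi.smul_apply]
    ring
  have hlin : ∀ (g : ℕ → A) (x y : H),
      ∑ j ∈ Finset.range (n + 1), inner ℂ x ((P (g j) : H →L[ℂ] H) y)
      = inner ℂ x ((P (∑ j ∈ Finset.range (n + 1), g j) : H →L[ℂ] H) y) := by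
    intro g x y
    rw [map_sum, AddSubmonoidClass.coe_finsetSum, _root_.sum_apply, inner_sum]
  rw [← Complex.re_sum] at hsum
  simp only [hexp] at hsum
  rw [Finset.sum_add_distrib, Finset.sum_sub_distrib, Finset.sum_sub_distrib, ← Finset.mul_sum,
    ← Finset.mul_sum, ← Finset.mul_sum, hlin, hlin, hlin, hlin, E1, E2, e0] at hsum
  have hPa : IsAdj (P a) (P a) := S.map_sa ha
  have i1 : inner ℂ ξ ((P a : H →L[ℂ] H) η) = ((‖η‖ ^ 2 : ℝ) : ℂ) := by
    rw [hPa.inner_left, ← hη, inner_self_eq_norm_sq_to_K]; simp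
  have i2 : inner ℂ η ((P a : H →L[ℂ] H) ξ) = ((‖η‖ ^ 2 : ℝ) : ℂ) := by
    rw [← hη, inner_self_eq_norm_sq_to_K]; simp
  have i3 : inner ℂ ξ ((P (((n : ℂ) ^ 2 - n) • (a * a) + (n : ℂ) • (1 : A)) : H →L[ℂ] H) ξ)
      = (((n : ℝ) ^ 2 - n : ℝ) : ℂ) * qf (P (a * a)) ξ + ((n : ℝ) : ℂ) * qf (P 1) ξ := by
    have := qf_add (P (((n : ℂ) ^ 2 - n) • (a * a))) (P ((n : ℂ) • (1 : A))) ξ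
    rw [← map_add, map_smul, map_smul, qf_smul, qf_smul] at this
    simpa [qf] using this
  have i4 : ∀ x y : H, inner ℂ x ((P ((n : ℂ) • a) : H →L[ℂ] H) y)
      = n * inner ℂ x ((P a : H →L[ℂ] H) y) := by
    intro x y
    rw [map_smul]
    simp [inner_smul_right]
  rw [i4, i4, i1, i2, i3] at hsum
  have i5 : (n : ℂ) * ((n : ℂ) * ((‖η‖ ^ 2 : ℝ) : ℂ)) = ((n ^ 2 * ‖η‖ ^ 2 : ℝ) : ℂ) := by
    push_cast; ring
  have i6 : (n : ℂ) ^ 2 * inner ℂ η ((P 1 : H →L[ℂ] H) η) = ((n ^ 2 : ℝ) : ℂ) * qf (P 1) η := by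
    simp [qf]
  rw [i5, i6] at hsum
  simp only [Complex.add_re, Complex.sub_re, Complex.re_ofReal_mul, Complex.ofReal_re] at hsum
  have := S.re_qf_one_le η
  nlinarith [sq_nonneg (n : ℝ)]

lemma le_of_forall_nat {x y c : ℝ} (h : ∀ n : ℕ, (n : ℝ) * (x - y) ≤ c) : x ≤ y := by
  by_contra hlt
  push Not at hlt
  obtain ⟨n, hn⟩ := exists_nat_gt (c / (x - y))
  have := h n
  rw [div_lt_iff₀ (by linarith)] at hn
  linarith

/-- Kadison's inequality `P(a)² ≤ P(a²)` for self-adjoint `a`. -/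
lemma Setup.kadison {P : A →ₗ[ℂ] A} (S : Setup P) {a : A} (ha : IsAdj a a) (ξ : H) :
    ‖(P a : H →L[ℂ] H) ξ‖ ^ 2 ≤ (qf (P (a * a)) ξ).re := by
  have main : ∀ b : A, IsAdj b b → ‖b‖ ≤ 1 →
      ‖(P b : H →L[ℂ] H) ξ‖ ^ 2 ≤ (qf (P (b * b)) ξ).re := by
    intro b hb hb1
    apply le_of_forall_nat (c := (qf (P 1) ξ).re - (qf (P (b * b)) ξ).re)
    intro n
    rcases Nat.eq_zero_or_pos n with rfl | hn
    · have := S.kadison_aux hb hb1 ξ 1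
      have := sq_nonneg ‖(P b : H →L[ℂ] H) ξ‖
      have hle := norm_qf_le_of_rp P S.rp (b * b) ξ
      have h1 : ‖b * b‖ ≤ 1 := (norm_mul_le b b).trans (by nlinarith [norm_nonneg b])
      have h2 := Complex.re_le_norm (qf (P (b * b)) ξ)
      have h3 := S.rp 1 (fun ζ => by rw [qf_one]; norm_cast; positivity) ξ
      simp only [Nat.cast_zero, zero_mul, sub_nonneg]
      nlinarith
    · have h1 := S.kadison_aux hb hb1 ξ n
      have hn' : (0 : ℝ) < n := by exact_mod_cast hn
      have h2 : 0 ≤ (n : ℝ) * ((n - 1) * (qf (P (b * b)) ξ).re + (qf (P 1) ξ).re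
          - n * ‖(P b : H →L[ℂ] H) ξ‖ ^ 2) := by linarith
      have h3 := nonneg_of_mul_nonneg_right h2 hn'
      linarith
  by_cases h0 : a = 0
  · simp [h0, qf_zero]
  have hn : 0 < ‖a‖ := norm_pos_iff.2 h0
  have := main (((‖a‖⁻¹ : ℝ) : ℂ) • a) (ha.rsmul _) (by
    rw [norm_smul, Complex.norm_real, norm_inv, norm_norm, inv_mul_cancel₀ hn.ne'])
  rw [smul_mul_smul_comm, map_smul, map_smul, qf_smul, ← Complex.ofReal_mul,
    Complex.re_ofReal_mul] at this
  have e : ‖((((‖a‖⁻¹ : ℝ) : ℂ) • P a : A) : H →L[ℂ] H) ξ‖ = ‖a‖⁻¹ * ‖(P a : H →L[ℂ] H) ξ‖ := by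
    simp [norm_smul]
  rw [e, mul_pow, sq (‖a‖⁻¹)] at this
  exact le_of_mul_le_mul_left this (by positivity)

/-! ### Null elements and the self-adjoint Jordan identity -/

namespace Setup

variable {P : A →ₗ[ℂ] A} (S : Setup P)
include S

lemma continuous : Continuous P :=
  AddMonoidHomClass.continuous_of_bound P 1 (fun a => by rw [one_mul]; exact S.contr a)

lemma exists_adj {x : A} (hx : P x = x) : ∃ x', IsAdj x x' ∧ P x' = x' := by
  obtain ⟨b, hb⟩ := S.diag x
  rw [hx] at hb
  have := S.map_adj hb
  rw [hx] at this
  exact ⟨b, hb, this.unique hb⟩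

omit S in
lemma eq_zero_of_linear {C B : ℝ} (h : ∀ t : ℝ, 0 ≤ C + t * B) : B = 0 := by
  by_contra hB
  have := h (-(|C| + 1) / B)
  rw [div_mul_cancel₀ _ hB] at this
  linarith [le_abs_self C]

/-- The Jordan identity for self-adjoint kernel elements: apply `P` to `P((k + t x)²) ≥ t² x²` for
real `t`. -/
lemma jordan_sa {k x : A} (hk : IsAdj k k) (hk0 : P k = 0) (hx : IsAdj x x) (hPx : P x = x) :
    P (k * x + x * k) = 0 := by
  apply eq_zero_of_qf
  intro ξ
  apply Complex.ext
  swap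
  · have h1 : IsAdj (k * x + x * k) (k * x + x * k) := by
      have := (hk.mul hx).add (hx.mul hk)
      rwa [add_comm (x * k)] at this
    simpa using (S.map_sa h1).qf_im ξ
  apply eq_zero_of_linear (C := (qf (P (k * k)) ξ).re)
  intro t
  have h1 := S.rp (P ((k + (t : ℂ) • x) * (k + (t : ℂ) • x)) - ((t : ℂ) • x) * ((t : ℂ) • x))
    (fun ζ => by
      have h2 := S.kadison (hk.add (hx.rsmul t)) ζ
      rw [map_add, hk0, zero_add, map_smul, hPx] at h2
      rw [qf_sub, qf_adj_mul (hx.rsmul t), Complex.sub_re, ← Complex.ofReal_pow,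
        Complex.ofReal_re]
      linarith) ξ
  rw [map_sub, S.idem, ← map_sub] at h1
  have e : (k + (t : ℂ) • x) * (k + (t : ℂ) • x) - ((t : ℂ) • x) * ((t : ℂ) • x)
      = k * k + (t : ℂ) • (k * x + x * k) := by
    simp only [add_mul, mul_add, smul_mul_assoc, mul_smul_comm, smul_add]
    abel
  rw [e, map_add, map_smul, qf_add, qf_smul, Complex.add_re, Complex.re_ofReal_mul] at h1
  exact h1

/-- A positive `d` in the kernel of `P` is null, since `d² ≤ ‖d‖ d`. -/
lemma nul_of_nonneg {d : A} (hd : IsAdj d d) (hp : ∀ ξ, 0 ≤ (qf d ξ).re) (h0 : P d = 0) :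
    Nul P d := by
  apply S.nul_of_sq hd
  apply eq_zero_of_qf
  intro ξ
  apply Complex.ext
  swap
  · simpa using (S.map_sa (hd.mul hd)).qf_im ξ
  have h1 := S.rp (d * d) (fun ζ => by
    rw [qf_adj_mul hd]; norm_cast; positivity) ξ
  have hpos := coe_nonneg_of_qf hd hp
  have hpos' : 0 ≤ (((‖d‖ : ℂ) • (1 : A) - d : A) : H →L[ℂ] H) :=
    coe_nonneg_of_qf ((isAdj_one.rsmul _).sub hd) (fun ζ => by
      have := (Complex.re_le_norm _).trans (norm_qf_le d ζ)
      rw [qf_sub, qf_smul, Complex.sub_re, Complex.re_ofReal_mul, qf_one]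
      norm_cast
      linarith)
  have hc : Commute (d : H →L[ℂ] H) (((‖d‖ : ℂ) • (1 : A) - d : A) : H →L[ℂ] H) := by
    have : Commute d ((‖d‖ : ℂ) • (1 : A) - d) :=
      ((Commute.one_right d).smul_right _).sub_right (Commute.refl d)
    exact congrArg (Subtype.val) this
  have h2 := S.rp (d * ((‖d‖ : ℂ) • (1 : A) - d))
    (qf_nonneg_of_coe (by simpa using Commute.mul_nonneg hpos hpos' hc)) ξ
  rw [mul_sub, mul_smul_comm, mul_one, map_sub, map_smul, h0, smul_zero, zero_sub,
    ← neg_one_smul ℂ, qf_smul, neg_one_mul, Complex.neg_re] at h2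
  rw [Complex.zero_re]
  linarith

omit S in
lemma _root_.PProduct.Nul.add {l m : A} (hl : Nul P l) (hm : Nul P m) : Nul P (l + m) := fun a => by
  simp [mul_add, add_mul, hl a, hm a]

omit S in
lemma _root_.PProduct.Nul.smul {l : A} (hl : Nul P l) (c : ℂ) : Nul P (c • l) := fun a => by
  simp [hl a]

omit S in
lemma _root_.PProduct.Nul.neg {l : A} (hl : Nul P l) : Nul P (-l) := by
  simpa using hl.smul (-1)

omit S in
lemma _root_.PProduct.Nul.sub {l m : A} (hl : Nul P l) (hm : Nul P m) : Nul P (l - m) := fun a => by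
  simp [mul_sub, sub_mul, hl a, hm a]

omit S in
lemma _root_.PProduct.Nul.map_eq_zero {l : A} (hl : Nul P l) : P l = 0 := by
  simpa using (hl 1).1

omit S in
lemma _root_.PProduct.Nul.left {y : A} (h : Nul P (y - P y)) (a : A) : P (a * y) = P (a * P y) := by
  have := (h a).1
  rwa [mul_sub, map_sub, sub_eq_zero] at this

omit S in
lemma _root_.PProduct.Nul.right {y : A} (h : Nul P (y - P y)) (a : A) :
    P (y * a) = P (P y * a) := by
  have := (h a).2
  rwa [sub_mul, map_sub, sub_eq_zero] at this

/-- `P (x²) - x²` is positive by Kadison's inequality, and `P` kills it. -/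
lemma nul_sq {x : A} (hx : IsAdj x x) (hPx : P x = x) : Nul P (x * x - P (x * x)) := by
  have h2 : Nul P (P (x * x) - x * x) := by
    apply S.nul_of_nonneg
    · exact (S.map_sa (hx.mul hx)).sub (hx.mul hx)
    · intro ξ
      have := S.kadison hx ξ
      rw [hPx] at this
      rw [qf_sub, qf_adj_mul hx, Complex.sub_re, ← Complex.ofReal_pow, Complex.ofReal_re]
      linarith
    · rw [map_sub, S.idem, sub_self]
  simpa using h2.neg

lemma nul_jordan {x y : A} (hx : IsAdj x x) (hPx : P x = x) (hy : IsAdj y y) (hPy : P y = y) :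
    Nul P (x * y + y * x - P (x * y + y * x)) := by
  have h := ((S.nul_sq (hx.add hy) (by rw [map_add, hPx, hPy])).sub (S.nul_sq hx hPx)).sub
    (S.nul_sq hy hPy)
  convert h using 1
  simp only [add_mul, mul_add, map_add]
  abel

/-- Two applications of the Jordan identity, via
`2 x k x = (k x + x k) x + x (k x + x k) - (k x² + x² k)`. -/
lemma tri_sa {k x : A} (hk : IsAdj k k) (hk0 : P k = 0) (hx : IsAdj x x) (hPx : P x = x) :
    P (x * k * x) = 0 := by
  have hk' : IsAdj (k * x + x * k) (k * x + x * k) := by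
    have := (hk.mul hx).add (hx.mul hk)
    rwa [add_comm (x * k)] at this
  have h1 := S.jordan_sa hk' (S.jordan_sa hk hk0 hx hPx) hx hPx
  have h2 := S.jordan_sa hk hk0 (S.map_sa (hx.mul hx)) (S.idem _)
  have h3 := (S.nul_sq hx hPx).left k
  have h4 := (S.nul_sq hx hPx).right k
  rw [map_add, ← h3, ← h4] at h2
  have e : (k * x + x * k) * x + x * (k * x + x * k)
      = (k * (x * x) + x * x * k) + (2 : ℂ) • (x * k * x) := by
    rw [two_smul]; noncomm_ring
  rw [e, map_add, map_add, h2, zero_add, map_smul] at h1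
  exact (smul_eq_zero.1 h1).resolve_left two_ne_zero

lemma nul_one : Nul P (1 - P 1) := by
  apply S.nul_of_nonneg (isAdj_one.sub (S.map_sa isAdj_one))
  · intro ξ
    have := S.re_qf_one_le ξ
    rw [qf_sub, qf_one, Complex.sub_re]
    norm_cast
    linarith
  · rw [map_sub, S.idem, sub_self]

omit S in
lemma isAdj_pow {x : A} (hx : IsAdj x x) (n : ℕ) : IsAdj (x ^ n) (x ^ n) := by
  induction n with
  | zero => simpa using isAdj_one
  | succ n ih =>
    have := ih.mul hx
    rwa [← pow_succ, ← pow_succ'] at this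

lemma nul_pow {x : A} (hx : IsAdj x x) (hPx : P x = x) (n : ℕ) : Nul P (x ^ n - P (x ^ n)) := by
  induction n with
  | zero => simpa using S.nul_one
  | succ n ih =>
    have hb := S.map_sa (isAdj_pow hx n)
    have hl := (isAdj_pow hx n).sub hb
    set b := P (x ^ n) with hbdef
    set l := x ^ n - b with hldef
    have hw : Nul P (x * l + l * x) := by
      apply S.nul_of_sq
      · have := (hx.mul hl).add (hl.mul hx)
        rwa [add_comm (l * x)] at this
      · have e : (x * l + l * x) * (x * l + l * x)
            = (x * l * x) * l + x * (l * l) * x + l * (x * x * l) + l * (x * l * x) := by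
          noncomm_ring
        rw [e, map_add, map_add, map_add, (ih _).1, (ih _).2, (ih _).2,
          S.tri_sa (hl.mul hl) (ih _).1 hx hPx]
        simp
    have hj := S.nul_jordan hx hPx hb (by rw [hbdef, S.idem])
    have e : x ^ (n + 1) = (2⁻¹ : ℂ) • ((x * b + b * x) + (x * l + l * x)) := by
      have : (x * b + b * x) + (x * l + l * x) = (2 : ℂ) • x ^ (n + 1) := by
        have p1 : x * x ^ n = x ^ (n + 1) := (pow_succ' x n).symm
        have p2 : x ^ n * x = x ^ (n + 1) := (pow_succ x n).symm
        rw [hldef, two_smul, mul_sub, sub_mul, p1, p2]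
        abel
      rw [this, smul_smul]
      norm_num
    have e2 : x ^ (n + 1) - P (x ^ (n + 1)) = (2⁻¹ : ℂ) • ((x * b + b * x - P (x * b + b * x))
        + (x * l + l * x)) := by
      rw [e, map_smul, map_add P (x * b + b * x), hw.map_eq_zero]
      module
    rw [e2]
    exact (hj.add hw).smul _

lemma complete : CompleteSpace A := S.closed.completeSpace_coe

lemma nul_exp {x : A} (hx : IsAdj x x) (hPx : P x = x) (z : ℂ) :
    Nul P (NormedSpace.exp (z • x) - P (NormedSpace.exp (z • x))) := by
  have := S.complete
  have hs := NormedSpace.exp_series_hasSum_exp' (𝕂 := ℂ) (z • x)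
  have hP := S.continuous
  have hterm : ∀ n : ℕ, Nul P (((n.factorial : ℂ)⁻¹) • (z • x) ^ n
      - P (((n.factorial : ℂ)⁻¹) • (z • x) ^ n)) := fun n => by
    have e : ((n.factorial : ℂ)⁻¹) • (z • x) ^ n - P (((n.factorial : ℂ)⁻¹) • (z • x) ^ n)
        = ((n.factorial : ℂ)⁻¹) • (z ^ n • (x ^ n - P (x ^ n))) := by
      rw [smul_pow, map_smul, map_smul]
      module
    rw [e]
    exact ((S.nul_pow hx hPx n).smul _).smul _
  intro a
  constructor
  · let f : A →+ A := ((P.comp (LinearMap.mulLeft ℂ a)).comp (LinearMap.id - P)).toAddMonoidHom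
    have hf : Continuous f := by
      change Continuous (fun y => P (a * (y - P y)))
      fun_prop
    have h1 := hs.map f hf
    have h2 : (f ∘ fun n : ℕ => ((n.factorial : ℂ)⁻¹) • (z • x) ^ n) = fun _ => 0 := by
      funext n
      exact (hterm n a).1
    rw [h2] at h1
    exact h1.unique hasSum_zero
  · let f : A →+ A := ((P.comp (LinearMap.mulRight ℂ a)).comp (LinearMap.id - P)).toAddMonoidHom
    have hf : Continuous f := by
      change Continuous (fun y => P ((y - P y) * a))
      fun_prop
    have h1 := hs.map f hf
    have h2 : (f ∘ fun n : ℕ => ((n.factorial : ℂ)⁻¹) • (z • x) ^ n) = fun _ => 0 := by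
      funext n
      exact (hterm n a).2
    rw [h2] at h1
    exact h1.unique hasSum_zero

end Setup

/-! ### Entire functions and exponentials -/

/-- Phragmén–Lindelöf in the four quadrants, followed by Liouville's theorem. -/
lemma eq_of_bounded_on_axes {f : ℂ → ℂ} (hf : Differentiable ℂ f) {B C D : ℝ}
    (hg : ∀ z, ‖f z‖ ≤ D * Real.exp (B * ‖z‖)) (hre : ∀ x : ℝ, ‖f x‖ ≤ C)
    (him : ∀ x : ℝ, ‖f (x * Complex.I)‖ ≤ C) (z w : ℂ) : f z = f w := by
  have hB : ∀ s : Set ℂ, ∃ c < (2 : ℝ), ∃ B,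
      f =O[Bornology.cobounded ℂ ⊓ Filter.principal s] fun z => Real.exp (B * ‖z‖ ^ c) := by
    intro s
    refine ⟨1, by norm_num, B, Asymptotics.IsBigO.of_bound D (Filter.Eventually.of_forall ?_)⟩
    intro z
    rw [Real.norm_eq_abs, Real.abs_exp, Real.rpow_one]
    exact hg z
  have hbd : ∀ z, ‖f z‖ ≤ C := by
    intro z
    rcases le_total 0 z.re with h1 | h1 <;> rcases le_total 0 z.im with h2 | h2
    · exact PhragmenLindelof.quadrant_I hf.diffContOnCl (hB _) (fun x _ => hre x)
        (fun x _ => him x) h1 h2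
    · exact PhragmenLindelof.quadrant_IV hf.diffContOnCl (hB _) (fun x _ => hre x)
        (fun x _ => him x) h1 h2
    · exact PhragmenLindelof.quadrant_II hf.diffContOnCl (hB _) (fun x _ => hre x)
        (fun x _ => him x) h1 h2
    · exact PhragmenLindelof.quadrant_III hf.diffContOnCl (hB _) (fun x _ => hre x)
        (fun x _ => him x) h1 h2
  refine hf.apply_eq_apply_of_bounded ?_ z w
  refine isBounded_iff_forall_norm_le.2 ⟨C, ?_⟩
  rintro _ ⟨z, rfl⟩
  exact hbd z

lemma norm_one_le : ‖(1 : A)‖ ≤ 1 := ContinuousLinearMap.norm_id_le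

section Exp

variable [CompleteSpace A]

lemma mem_expBall (x : A) : x ∈ Metric.eball (0 : A) (NormedSpace.expSeries ℂ A).radius :=
  (NormedSpace.expSeries_radius_eq_top ℂ A).symm ▸ edist_lt_top _ _

lemma exp_smul_mul (x : A) (z w : ℂ) :
    NormedSpace.exp (z • x) * NormedSpace.exp (w • x) = NormedSpace.exp ((z + w) • x) := by
  rw [add_smul, NormedSpace.exp_add_of_commute_of_mem_ball (𝕂 := ℂ)
    (((Commute.refl x).smul_left z).smul_right w) (mem_expBall _) (mem_expBall _)]

lemma exp_smul_mul_neg (x : A) (z : ℂ) :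
    NormedSpace.exp (z • x) * NormedSpace.exp ((-z) • x) = 1 := by
  rw [exp_smul_mul, add_neg_cancel, zero_smul, NormedSpace.exp_zero]

lemma norm_exp_le (x : A) : ‖NormedSpace.exp x‖ ≤ Real.exp ‖x‖ := by
  have h1 := NormedSpace.exp_series_hasSum_exp' (𝕂 := ℂ) x
  have h2 := NormedSpace.expSeries_div_hasSum_exp ‖x‖
  rw [← Real.exp_eq_exp_ℝ] at h2
  refine h1.norm_le_of_bounded h2 (fun n => ?_)
  rw [norm_smul, norm_inv, Complex.norm_natCast, div_eq_inv_mul]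
  refine mul_le_mul_of_nonneg_left ?_ (by positivity)
  rcases n with _ | n
  · simpa using norm_one_le
  · exact norm_pow_le' x n.succ_pos

lemma isAdj_exp {x : A} (hx : IsAdj x x) (z : ℂ) :
    IsAdj (NormedSpace.exp (z • x)) (NormedSpace.exp (star z • x)) := by
  have key : ∀ y : A, ((NormedSpace.exp y : A) : H →L[ℂ] H) = NormedSpace.exp (y : H →L[ℂ] H) :=
    fun y => NormedSpace.map_exp_of_mem_ball (𝕂 := ℂ) A.val continuous_subtype_val y
      (mem_expBall _)
  unfold IsAdj
  rw [key, key, ← star_eq_adjoint, NormedSpace.star_exp]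
  congr 1
  exact hx.smul z

lemma norm_le_one_of_isometry {u v : A} (h : IsAdj u v) (huv : v * u = 1) : ‖u‖ ≤ 1 := by
  refine ContinuousLinearMap.opNorm_le_bound _ zero_le_one (fun ξ => ?_)
  have h1 := qf_adj_mul h ξ
  rw [huv, qf_one] at h1
  have h2 : ‖ξ‖ ^ 2 = ‖(u : H →L[ℂ] H) ξ‖ ^ 2 := by exact_mod_cast h1
  rw [one_mul]
  exact ((sq_eq_sq₀ (norm_nonneg _) (norm_nonneg _)).1 h2).ge

lemma norm_exp_I_le {x : A} (hx : IsAdj x x) (s : ℝ) :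
    ‖NormedSpace.exp (((s : ℂ) * Complex.I) • x)‖ ≤ 1 := by
  refine norm_le_one_of_isometry (isAdj_exp hx _) ?_
  rw [exp_smul_mul]
  simp

end Exp

/-! ### The Jordan identity -/

lemma qf_conj {e : A} (he : IsAdj e e) (k : A) (ξ : H) :
    qf (e * k * e) ξ = qf k ((e : H →L[ℂ] H) ξ) := by
  have := he.inner_left ξ ((k : H →L[ℂ] H) ((e : H →L[ℂ] H) ξ))
  exact this

/-- The map `k ↦ P (e' P (e k e) e')`. -/
noncomputable def conjMap (P : A →ₗ[ℂ] A) (e e' : A) : A →ₗ[ℂ] A :=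
  P ∘ₗ (LinearMap.mulRight ℂ e' ∘ₗ LinearMap.mulLeft ℂ e') ∘ₗ P ∘ₗ
    (LinearMap.mulRight ℂ e ∘ₗ LinearMap.mulLeft ℂ e)

lemma conjMap_apply (P : A →ₗ[ℂ] A) (e e' k : A) :
    conjMap P e e' k = P (e' * P (e * k * e) * e') := rfl

lemma Setup.norm_conjMap_le {P : A →ₗ[ℂ] A} (S : Setup P) (e e' k : A) :
    ‖conjMap P e e' k‖ ≤ (‖e‖ * ‖e'‖) ^ 2 * ‖k‖ := by
  rw [conjMap_apply]
  have h1 : ‖P (e * k * e)‖ ≤ ‖e‖ * ‖k‖ * ‖e‖ := (S.contr _).trans (norm_mul₃_le)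
  calc _ ≤ ‖e' * P (e * k * e) * e'‖ := S.contr _
    _ ≤ ‖e'‖ * ‖P (e * k * e)‖ * ‖e'‖ := norm_mul₃_le
    _ ≤ ‖e'‖ * (‖e‖ * ‖k‖ * ‖e‖) * ‖e'‖ := by gcongr
    _ = _ := by ring

/-- On the real axis the conjugated map is real positive and sends `1` to `P 1`. -/
lemma Setup.norm_qf_conj_real {P : A →ₗ[ℂ] A} (S : Setup P) {x : A} (hx : IsAdj x x)
    (hPx : P x = x) (k : A) (ξ : H) (t : ℝ) :
    ‖qf (conjMap P (NormedSpace.exp ((t : ℂ) • x)) (NormedSpace.exp ((-(t : ℂ)) • x)) k) ξ‖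
      ≤ ‖k‖ * ‖ξ‖ ^ 2 := by
  have := S.complete
  have hsa : ∀ s : ℝ, IsAdj (NormedSpace.exp ((s : ℂ) • x)) (NormedSpace.exp ((s : ℂ) • x)) :=
    fun s => by simpa using isAdj_exp hx (s : ℂ)
  have he := hsa t
  have he' := hsa (-t)
  have hE2 := hsa (t + t)
  rw [Complex.ofReal_neg] at he'
  have hq := S.re_qf_one_le ξ
  have hinv : NormedSpace.exp ((-(t : ℂ)) • x) * NormedSpace.exp (((t + t : ℝ) : ℂ) • x)
      * NormedSpace.exp ((-(t : ℂ)) • x) = 1 := by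
    rw [exp_smul_mul, exp_smul_mul]
    push_cast
    rw [show -(t : ℂ) + (t + t) + -t = 0 by ring, zero_smul, NormedSpace.exp_zero]
  have h1 : conjMap P (NormedSpace.exp ((t : ℂ) • x)) (NormedSpace.exp ((-(t : ℂ)) • x)) 1
      = P 1 := by
    rw [conjMap_apply, mul_one, exp_smul_mul, ← Complex.ofReal_add]
    have hn := S.nul_exp hx hPx (-(t : ℂ))
    generalize NormedSpace.exp (((t + t : ℝ) : ℂ) • x) = E at *
    generalize NormedSpace.exp ((-(t : ℂ)) • x) = e at *
    have h2 : P (e * (E - P E) * e) = 0 := by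
      rw [hn.left, mul_assoc, hn.right, ← mul_assoc]
      exact S.tri_sa (hE2.sub (S.map_sa hE2)) (by rw [map_sub, S.idem, sub_self])
        (S.map_sa he') (S.idem _)
    rw [mul_sub, sub_mul, map_sub, sub_eq_zero, hinv] at h2
    exact h2.symm
  refine (norm_qf_le_of_rp _ ?_ k ξ).trans ?_
  · intro a ha
    exact S.rp _ fun ζ => by
      refine le_of_le_of_eq ?_ (congrArg Complex.re (qf_conj he' _ ζ).symm)
      exact S.rp _ (fun η => le_of_le_of_eq (ha _) (congrArg Complex.re (qf_conj he _ η).symm)) _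
  · rw [h1]
    gcongr

/-- For a self-adjoint `x` fixed by `P`, the entire function
`z ↦ P (e^{-zx} P (e^{zx} k e^{zx}) e^{-zx})` is of exponential type and bounded on both axes,
hence constant. -/
lemma Setup.conjMap_exp {P : A →ₗ[ℂ] A} (S : Setup P) {x : A} (hx : IsAdj x x)
    (hPx : P x = x) (k : A) (z : ℂ) :
    conjMap P (NormedSpace.exp (z • x)) (NormedSpace.exp ((-z) • x)) k = P k := by
  have := S.complete
  let Pc : A →L[ℂ] A := ⟨P, S.continuous⟩
  have hE : Differentiable ℂ (fun z : ℂ => NormedSpace.exp (z • x)) :=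
    differentiable_exp_smul_const ℂ x
  have hE' : Differentiable ℂ (fun z : ℂ => NormedSpace.exp ((-z) • x)) :=
    hE.comp differentiable_neg
  have hdiff : Differentiable ℂ (fun z : ℂ =>
      conjMap P (NormedSpace.exp (z • x)) (NormedSpace.exp ((-z) • x)) k) :=
    Pc.differentiable.comp ((hE'.mul (Pc.differentiable.comp ((hE.mul_const k).mul hE))).mul hE')
  rw [← sub_eq_zero]
  apply eq_zero_of_qf
  intro ξ
  let L : A →L[ℂ] ℂ := LinearMap.mkContinuous
    { toFun := fun a => qf a ξ, map_add' := fun a b => qf_add a b ξ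
      map_smul' := fun c a => qf_smul c a ξ } (‖ξ‖ ^ 2)
    (fun a => (norm_qf_le a ξ).trans_eq (mul_comm _ _))
  have hconst := eq_of_bounded_on_axes (f := fun z : ℂ =>
      qf (conjMap P (NormedSpace.exp (z • x)) (NormedSpace.exp ((-z) • x)) k) ξ)
    (L.differentiable.comp hdiff) (B := 4 * ‖x‖) (C := ‖k‖ * ‖ξ‖ ^ 2) (D := ‖k‖ * ‖ξ‖ ^ 2)
    (fun z => by
      have h1 := norm_exp_le (z • x)
      have h2 := norm_exp_le ((-z) • x)
      rw [norm_smul] at h1 h2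
      rw [norm_neg] at h2
      calc _ ≤ ‖conjMap P (NormedSpace.exp (z • x)) (NormedSpace.exp ((-z) • x)) k‖ * ‖ξ‖ ^ 2 :=
            norm_qf_le _ _
        _ ≤ ((‖NormedSpace.exp (z • x)‖ * ‖NormedSpace.exp ((-z) • x)‖) ^ 2 * ‖k‖) * ‖ξ‖ ^ 2 := by
            gcongr
            exact S.norm_conjMap_le _ _ _
        _ ≤ ((Real.exp (‖z‖ * ‖x‖) * Real.exp (‖z‖ * ‖x‖)) ^ 2 * ‖k‖) * ‖ξ‖ ^ 2 := by
            gcongr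
        _ = ‖k‖ * ‖ξ‖ ^ 2 * Real.exp (4 * ‖x‖ * ‖z‖) := by
            rw [← Real.exp_add, ← Real.exp_nat_mul, mul_comm, ← mul_assoc, mul_comm _ ‖k‖]
            push_cast
            ring_nf)
    (fun t => S.norm_qf_conj_real hx hPx k ξ t)
    (fun t => by
      have h1 := norm_exp_I_le hx t
      have h2 := norm_exp_I_le hx (-t)
      rw [Complex.ofReal_neg, neg_mul] at h2
      refine (norm_qf_le _ _).trans ?_
      gcongr
      refine (S.norm_conjMap_le _ _ _).trans ?_
      have h3 := mul_le_one₀ h1 (norm_nonneg _) h2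
      have h4 := pow_le_one₀ (n := 2) (by positivity) h3
      exact mul_le_of_le_one_left (norm_nonneg k) h4)
    z 0
  simp only [zero_smul, neg_zero, NormedSpace.exp_zero] at hconst
  rw [conjMap_apply P 1 1, one_mul, mul_one, one_mul, mul_one, S.idem] at hconst
  rw [qf_sub, hconst, sub_self]

/-- The Jordan identity for self-adjoint `x`: the derivative of the previous identity at `z = 0`. -/
lemma Setup.jordan_of_sa {P : A →ₗ[ℂ] A} (S : Setup P) {x : A} (hx : IsAdj x x)
    (hPx : P x = x) (k : A) : P (x * k + k * x) = P (x * P k + P k * x) := by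
  have := S.complete
  let Pc : A →L[ℂ] A := ⟨P, S.continuous⟩
  have hE : HasDerivAt (fun z : ℂ => NormedSpace.exp (z • x)) x 0 := by
    simpa using hasDerivAt_exp_smul_const (𝕂 := ℂ) x 0
  have hE' : HasDerivAt (fun z : ℂ => NormedSpace.exp ((-z) • x)) (-x) 0 := by
    simpa using hasDerivAt_exp_smul_const (𝕂 := ℂ) (-x) 0
  have h1 := Pc.hasFDerivAt.comp_hasDerivAt 0 ((hE.mul_const k).mul hE)
  have h2 := Pc.hasFDerivAt.comp_hasDerivAt 0 ((hE'.mul h1).mul hE')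
  have h3 : HasDerivAt (fun z : ℂ =>
      conjMap P (NormedSpace.exp (z • x)) (NormedSpace.exp ((-z) • x)) k) _ 0 := h2
  rw [show (fun z : ℂ => conjMap P (NormedSpace.exp (z • x)) (NormedSpace.exp ((-z) • x)) k)
    = fun _ => P k from funext (S.conjMap_exp hx hPx k)] at h3
  have h4 := h3.unique (hasDerivAt_const _ _)
  simp only [Function.comp_apply, Pi.mul_apply, zero_smul, neg_zero, NormedSpace.exp_zero,
    one_mul, mul_one] at h4
  change P (-x * P k + P (x * k + k * x) + P k * -x) = 0 at h4
  have e : -x * P k + P (x * k + k * x) + P k * -x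
      = P (x * k + k * x) - (x * P k + P k * x) := by
    have n1 : -x * P k = -(x * P k) := neg_mul x (P k)
    have n2 : P k * -x = -(P k * x) := mul_neg (P k) x
    rw [n1, n2]
    abel
  rw [e, map_sub, S.idem, sub_eq_zero] at h4
  exact h4

/-- Every fixed point is a combination of two self-adjoint fixed points. -/
lemma Setup.exists_re_im {P : A →ₗ[ℂ] A} (S : Setup P) {x : A} (hPx : P x = x) :
    ∃ u v : A, IsAdj u u ∧ P u = u ∧ IsAdj v v ∧ P v = v ∧ x = u + Complex.I • v := by
  obtain ⟨x', hx, hx'⟩ := S.exists_adj hPx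
  refine ⟨(2⁻¹ : ℂ) • (x + x'), (-(2⁻¹ : ℂ) * Complex.I) • (x - x'), ?_, ?_, ?_, ?_, ?_⟩
  · have := (hx.add hx.symm).smul (2⁻¹ : ℂ)
    rw [add_comm x'] at this
    simpa using this
  · rw [map_smul, map_add, hPx, hx']
  · have := (hx.sub hx.symm).smul (-(2⁻¹ : ℂ) * Complex.I)
    refine this.trans (congrArg _ ?_)
    simp [smul_sub]
    abel
  · rw [map_smul, map_sub, hPx, hx']
  · rw [smul_smul, show Complex.I * (-(2⁻¹ : ℂ) * Complex.I) = 2⁻¹ by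
      linear_combination (-(2⁻¹ : ℂ)) * Complex.I_mul_I]
    module

/-- The Jordan identity `P (x k + k x) = P (x P(k) + P(k) x)` for `x` in the range of `P` and
arbitrary `k`. -/
lemma Setup.jordan {P : A →ₗ[ℂ] A} (S : Setup P) {x : A} (hPx : P x = x) (k : A) :
    P (x * k) + P (k * x) = P (x * P k) + P (P k * x) := by
  obtain ⟨u, v, hu, hPu, hv, hPv, rfl⟩ := S.exists_re_im hPx
  have h1 := S.jordan_of_sa hu hPu k
  have h2 := S.jordan_of_sa hv hPv k
  rw [map_add, map_add] at h1 h2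
  simp only [add_mul, mul_add, map_add, smul_mul_assoc, mul_smul_comm, map_smul]
  linear_combination (norm := module) h1 + Complex.I • h2

/-! ### Ring theory -/

section Ring

variable {R : Type*} [NonUnitalRing R] (h2 : ∀ x : R, x + x = 0 → x = 0)
  (hsp : ∀ c : R, (∀ y, c * y * c = 0) → c = 0) (δ : R →+ R)
  (hT : ∀ x y, δ (x * y) = δ (y * x))
  (hD : ∀ x y, δ (x * y) + δ (x * y) = δ x * y + y * δ x + (δ y * x + x * δ y))
  (hI1 : ∀ x y z, δ (x * (y * z)) - δ x * (y * z) = δ (x * (z * y)) - δ x * (z * y))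
  (hI2 : ∀ x y z, δ (y * z * x) - y * z * δ x = δ (z * y * x) - z * y * δ x)

include h2 hsp hT hI1 hI2 in
/-- In a 2-torsion-free semiprime ring, an additive map that vanishes on commutators and is
linear over them takes central values: first `δ(x)[y,x] = 0`, then `δ(x) v [w,z] = 0` by
polarization and semiprimeness. -/
lemma central_of_trace (x z : R) : δ x * z = z * δ x := by
  have e1 : ∀ x y z, δ x * (y * z - z * y) = δ (x * (y * z)) - δ (x * (z * y)) := fun x y z => by
    have := hI1 x y z
    rw [mul_sub, sub_eq_sub_iff_add_eq_add, ← sub_eq_zero]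
    rw [← sub_eq_zero] at this
    calc _ = -(δ (x * (y * z)) - δ x * (y * z) - (δ (x * (z * y)) - δ x * (z * y))) := by abel
      _ = 0 := by rw [this, neg_zero]
  have e2 : ∀ x y z, (y * z - z * y) * δ x = δ (y * z * x) - δ (z * y * x) := fun x y z => by
    have := hI2 x y z
    rw [sub_mul, sub_eq_sub_iff_add_eq_add, ← sub_eq_zero]
    rw [← sub_eq_zero] at this
    calc _ = -(δ (y * z * x) - y * z * δ x - (δ (z * y * x) - z * y * δ x)) := by abel
      _ = 0 := by rw [this, neg_zero]
  have comm : ∀ x y z, δ x * (y * z - z * y) = (y * z - z * y) * δ x := fun x y z => by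
    rw [e1, e2, hT x, hT x]
  have shift : ∀ x y z, δ x * (y * z - z * y) = (x * y - y * x) * δ z := fun x y z => by
    rw [e1, e2, hT x (z * y), mul_assoc, mul_assoc, mul_assoc, hT z (y * x), mul_assoc]
  have v1 : ∀ x y, δ x * (y * x - x * y) = 0 := fun x y => by
    apply h2
    nth_rewrite 1 [shift]
    rw [comm, ← add_mul]
    simp
  have v1' : ∀ x y, (y * x - x * y) * δ x = 0 := fun x y => by rw [← comm, v1]
  have v2 : ∀ x v y, δ x * v * (y * x - x * y) = 0 := fun x v y => by
    have : δ x * v * (y * x - x * y)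
        = δ x * (v * y * x - x * (v * y)) - δ x * (v * x - x * v) * y := by
      simp only [mul_sub, sub_mul, mul_assoc]; abel
    rw [this, v1, v1, zero_mul, sub_zero]
  have v2' : ∀ x v y, (y * x - x * y) * v * δ x = 0 := fun x v y => by
    have : (y * x - x * y) * v * δ x
        = (y * v * x - x * (y * v)) * δ x - y * ((v * x - x * v) * δ x) := by
      simp only [mul_sub, sub_mul, mul_assoc]; abel
    rw [this, v1', v1', mul_zero, sub_zero]
  have pol : ∀ x z v w, δ x * v * (w * z - z * w) = -(δ z * v * (w * x - x * w)) :=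
    fun x z v w => by
      have h := v2 (x + z) v w
      have h' : δ (x + z) * v * (w * (x + z) - (x + z) * w)
          = δ x * v * (w * x - x * w) + δ z * v * (w * z - z * w)
            + (δ x * v * (w * z - z * w) + δ z * v * (w * x - x * w)) := by
        rw [map_add]; simp only [mul_sub, mul_add, add_mul]; abel
      rw [h', v2, v2, zero_add, zero_add] at h
      exact eq_neg_of_add_eq_zero_left h
  have v3 : ∀ x z v w, δ x * v * (w * z - z * w) = 0 := fun x z v w => by
    apply hsp
    intro y
    nth_rewrite 1 [pol]
    have : -(δ z * v * (w * x - x * w)) * y * (δ x * v * (w * z - z * w))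
        = -(δ z * v * ((w * x - x * w) * y * δ x) * (v * (w * z - z * w))) := by
      simp only [neg_mul, mul_assoc]
    rw [this, v2', mul_zero, zero_mul, neg_zero]
  rw [← sub_eq_zero]
  apply hsp
  intro v
  have : (δ x * z - z * δ x) * v * (δ x * z - z * δ x)
      = δ x * (z * v) * (δ x * z - z * δ x) - z * (δ x * v * (δ x * z - z * δ x)) := by
    simp only [mul_sub, sub_mul, mul_assoc]; abel
  rw [this, v3, v3, mul_zero, sub_zero]

include h2 hD in
lemma leibniz_of_central (hc : ∀ x z, δ x * z = z * δ x) (x y : R) :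
    δ (x * y) = δ x * y + x * δ y := by
  rw [← sub_eq_zero]
  apply h2
  have h := hD x y
  rw [← hc x y, hc y x] at h
  rw [← sub_eq_zero] at h
  rw [← h]
  abel

/-- The logarithmic derivative of a central-valued derivation along a one-parameter family is
additive. -/
lemma logDeriv_add (hc : ∀ x z, δ x * z = z * δ x)
    (hL : ∀ x y, δ (x * y) = δ x * y + x * δ y) (E : ℝ → R) (hE : ∀ s t, E s * E t = E (s + t))
    (s t : ℝ) :
    δ (E (s + t)) * E (-(s + t)) = δ (E s) * E (-s) + δ (E t) * E (-t) := by
  have h1 : E t * E (-(s + t)) = E (-s) := by rw [hE]; congr 1; ring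
  have h2 : E s * E (-(s + t)) = E (-t) := by rw [hE]; congr 1; ring
  rw [← hE, hL, add_mul, mul_assoc, h1, ← hc, mul_assoc, h2]

end Ring

/-! ### Consequences of associativity -/

/-- Associativity of the product `(x, y) ↦ P (x y)` on the fixed points of `P`. -/
def Assoc (P : A →ₗ[ℂ] A) : Prop := ∀ x y z : A, P x = x → P y = y → P z = z →
  P (P (x * y) * z) = P (x * P (y * z))

namespace Setup

variable {P : A →ₗ[ℂ] A} (S : Setup P) (ha : Assoc P)
include S ha

/-- The defect `P(xyz) - P(P(xy)z)` changes sign under cyclic permutation, by the Jordan identity,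
so it vanishes since a 3-cycle has odd order. -/
lemma map_mul₃ {x y z : A} (hx : P x = x) (hy : P y = y) (hz : P z = z) :
    P (x * y * z) = P (P (x * y) * z) := by
  have key : ∀ x y z : A, P x = x → P y = y → P z = z →
      P (x * y * z) - P (P (x * y) * z) = -(P (z * x * y) - P (P (z * x) * y)) :=
    fun x y z hx hy hz => by
      have h := S.jordan hz (x * y)
      rw [← ha z x y hz hx hy, ← mul_assoc] at h
      linear_combination (norm := abel) h
  have h1 := key x y z hx hy hz
  rw [key z x y hz hx hy, key y z x hy hz hx, neg_neg] at h1
  rw [← sub_eq_zero]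
  generalize P (x * y * z) - P (P (x * y) * z) = d at h1
  have h3 : (2 : ℂ) • d = 0 := by
    rw [two_smul]
    nth_rewrite 1 [h1]
    exact neg_add_cancel d
  exact (smul_eq_zero.1 h3).resolve_left two_ne_zero

/-- The product is `c* c` for the defect `c = xy - P(xy)`, so this makes `c` null. -/
lemma map_defect_sq {x y : A} (hx : IsAdj x x) (hPx : P x = x) (hy : IsAdj y y) (hPy : P y = y) :
    P ((y * x - P (y * x)) * (x * y - P (x * y))) = 0 := by
  have h1 := S.tri_sa ((hx.mul hx).sub (S.map_sa (hx.mul hx)))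
    (by rw [map_sub, S.idem, sub_self]) hy hPy
  rw [mul_sub, sub_mul, map_sub, sub_eq_zero] at h1
  have h2 : P (y * P (x * x) * y) = P (P (y * x) * P (x * y)) := by
    rw [S.map_mul₃ ha hPy (S.idem _) hPy, ← ha y x x hPy hPx hPx,
      ha _ x y (S.idem _) hPx hPy]
  have h3 : P (y * x * P (x * y)) = P (P (y * x) * P (x * y)) :=
    S.map_mul₃ ha hPy hPx (S.idem _)
  have h4 : P (P (y * x) * x * y) = P (P (y * x) * P (x * y)) := by
    rw [S.map_mul₃ ha (S.idem _) hPx hPy, ha _ x y (S.idem _) hPx hPy]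
  have e : (y * x - P (y * x)) * (x * y - P (x * y)) = y * (x * x) * y - y * x * P (x * y)
      - P (y * x) * x * y + P (y * x) * P (x * y) := by
    simp only [mul_sub, sub_mul, mul_assoc]
    abel
  rw [e, map_add, map_sub, map_sub, h1, h2, h3, h4]
  abel

lemma nul_mul_sa {x y : A} (hx : IsAdj x x) (hPx : P x = x) (hy : IsAdj y y) (hPy : P y = y) :
    Nul P (x * y - P (x * y)) := by
  have hadj : IsAdj (x * y - P (x * y)) (y * x - P (y * x)) :=
    (hx.mul hy).sub (S.map_adj (hx.mul hy))
  exact fun a => ⟨S.map_mul_eq_zero hadj (S.map_defect_sq ha hx hPx hy hPy) a,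
    S.map_mul_eq_zero' hadj (S.map_defect_sq ha hy hPy hx hPx) a⟩

lemma nul_mul {x y : A} (hPx : P x = x) (hPy : P y = y) : Nul P (x * y - P (x * y)) := by
  obtain ⟨u, v, hu, hPu, hv, hPv, rfl⟩ := S.exists_re_im hPx
  obtain ⟨u', v', hu', hPu', hv', hPv', rfl⟩ := S.exists_re_im hPy
  have h1 := S.nul_mul_sa ha hu hPu hu' hPu'
  have h2 := S.nul_mul_sa ha hu hPu hv' hPv'
  have h3 := S.nul_mul_sa ha hv hPv hu' hPu'
  have h4 := S.nul_mul_sa ha hv hPv hv' hPv'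
  have := (h1.add (h2.smul Complex.I)).add ((h3.add (h4.smul Complex.I)).smul Complex.I)
  convert this using 1
  simp only [add_mul, mul_add, map_add, smul_mul_assoc, mul_smul_comm, map_smul]
  module

omit ha in
lemma eq_zero_of_map_adj_mul {c c' : A} (h : IsAdj c c') (hc : P c = c) (h0 : P (c' * c) = 0) :
    c = 0 := by
  have := S.map_mul_eq_zero h h0 1
  rwa [one_mul, hc] at this

/-- The range of `P` is semiprime under the `P`-product: take `y = c*`, and use `P (c* c) = 0 → c = 0`
twice. -/
lemma semiprime {c : A} (hc : P c = c) (h : ∀ y, P y = y → P (P (c * y) * c) = 0) : c = 0 := by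
  obtain ⟨c', hadj, hc'⟩ := S.exists_adj hc
  apply S.eq_zero_of_map_adj_mul hadj hc
  have hsa : IsAdj (P (c' * c)) (P (c' * c)) := S.map_sa (hadj.symm.mul hadj)
  apply S.eq_zero_of_map_adj_mul hsa (S.idem _)
  rw [ha c' c _ hc' hc (S.idem _), ← ha c c' c hc hc' hc, h c' hc', mul_zero, map_zero]

omit ha in
lemma map_mul_ker {k x : A} (hk : P k = 0) (hx : P x = x) : P (x * k) = -P (k * x) := by
  have := S.jordan hx k
  rw [hk, mul_zero, zero_mul, map_zero, add_zero] at this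
  exact eq_neg_of_add_eq_zero_left this

lemma ker_jordan {k x y : A} (hk : P k = 0) (hx : P x = x) (hy : P y = y) :
    P (k * P (x * y)) + P (k * P (x * y))
      = P (P (k * x) * y) + P (y * P (k * x)) + (P (P (k * y) * x) + P (x * P (k * y))) := by
  have h1 := S.jordan hy (k * x)
  have h2 := S.jordan hx (y * k)
  have h3 := (S.nul_mul ha hx hy).left k
  have h4 := (S.nul_mul ha hx hy).right k
  rw [S.map_mul_ker hk (S.idem _)] at h4
  have n1 : x * -P (k * y) = -(x * P (k * y)) := mul_neg x (P (k * y))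
  have n2 : -P (k * y) * x = -(P (k * y) * x) := neg_mul (P (k * y)) x
  rw [S.map_mul_ker hk hy, n1, n2, map_neg, map_neg, ← mul_assoc, h4] at h2
  rw [mul_assoc k, h3, ← mul_assoc] at h1
  linear_combination (norm := abel) h1 - h2

lemma ker_trace {k x y : A} (hk : P k = 0) (hx : P x = x) (hy : P y = y) :
    P (k * P (x * y)) = P (k * P (y * x)) := by
  have h1 := S.ker_jordan ha hk hx hy
  have h2 := S.ker_jordan ha hk hy hx
  have h3 : (2 : ℂ) • P (k * P (x * y)) = (2 : ℂ) • P (k * P (y * x)) := by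
    rw [two_smul, two_smul, h1, h2]
    abel
  exact smul_right_injective A two_ne_zero h3

/-- The trace property of `y ↦ P (k y)`, with `k` replaced by the kernel element `kx - P(kx)`. -/
lemma ker_comm_left {k x y z : A} (hx : P x = x) (hy : P y = y) (hz : P z = z) :
    P (k * P (x * P (y * z))) - P (P (k * x) * P (y * z))
      = P (k * P (x * P (z * y))) - P (P (k * x) * P (z * y)) := by
  have h := S.ker_trace ha (k := k * x - P (k * x)) (by rw [map_sub, S.idem, sub_self]) hy hz
  rwa [sub_mul, sub_mul, map_sub, map_sub, mul_assoc, mul_assoc,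
    (S.nul_mul ha hx (S.idem _)).left, (S.nul_mul ha hx (S.idem _)).left] at h

/-- The trace property of `y ↦ P (k y)`, with `k` replaced by the kernel element `xk - P(xk)`. -/
lemma ker_comm_right {k x y z : A} (hk : P k = 0) (hx : P x = x) (hy : P y = y) (hz : P z = z) :
    P (k * P (P (y * z) * x)) - P (P (y * z) * P (k * x))
      = P (k * P (P (z * y) * x)) - P (P (z * y) * P (k * x)) := by
  have h := S.ker_trace ha (k := x * k - P (x * k)) (by rw [map_sub, S.idem, sub_self]) hy hz
  have key : ∀ q, P q = q → P ((x * k - P (x * k)) * q)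
      = P (k * P (q * x)) - P (q * P (k * x)) := fun q hq => by
    have h1 := S.jordan hq (x * k)
    have h2 := (S.nul_mul ha hq hx).right k
    rw [S.map_mul_ker hk (S.idem _), mul_assoc] at h2
    rw [h2] at h1
    have n1 : q * P (x * k) = -(q * P (k * x)) := by
      rw [S.map_mul_ker hk hx]; exact mul_neg q (P (k * x))
    rw [n1, map_neg] at h1
    rw [sub_mul, map_sub]
    linear_combination (norm := abel) h1
  rwa [key _ (S.idem _), key _ (S.idem _)] at h

end Setup

/-! ### Vanishing of the derivations -/

/-- The range of `P` with the product `(x, y) ↦ P (x y)`, as a ring without a declared unit. -/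
noncomputable abbrev rangeRing {P : A →ₗ[ℂ] A} (S : Setup P) (ha : Assoc P) :
    NonUnitalRing (LinearMap.range P) :=
  { (inferInstance : AddCommGroup (LinearMap.range P)) with
    mul := fun x y => ⟨P ((x : A) * (y : A)), ⟨_, rfl⟩⟩
    left_distrib := fun x y z => Subtype.ext (by
      change P ((x : A) * ((y : A) + (z : A))) = P ((x : A) * y) + P ((x : A) * z)
      rw [mul_add, map_add])
    right_distrib := fun x y z => Subtype.ext (by
      change P (((x : A) + (y : A)) * (z : A)) = P ((x : A) * z) + P ((y : A) * z)
      rw [add_mul, map_add])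
    zero_mul := fun x => Subtype.ext (by
      change P ((0 : A) * (x : A)) = 0
      rw [zero_mul, map_zero])
    mul_zero := fun x => Subtype.ext (by
      change P ((x : A) * (0 : A)) = 0
      rw [mul_zero, map_zero])
    mul_assoc := fun x y z => Subtype.ext (by
      obtain ⟨_, x, rfl⟩ := x
      obtain ⟨_, y, rfl⟩ := y
      obtain ⟨_, z, rfl⟩ := z
      exact ha _ _ _ (S.idem x) (S.idem y) (S.idem z)) }

namespace Setup

variable {P : A →ₗ[ℂ] A} (S : Setup P) (ha : Assoc P)
include S ha

/-- For `k` in the kernel of `P`, the map `s ↦ P (P (k e^{ish}) e^{-ish})` is additive, because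
`x ↦ P (k x)` is a central-valued derivation of the range of `P`. -/
lemma ker_exp_add {k h : A} (hk : P k = 0) (hh : IsAdj h h) (hPh : P h = h) (s t : ℝ) :
    P (P (k * NormedSpace.exp (((s + t : ℝ) * Complex.I) • h))
        * NormedSpace.exp (((-(s + t) : ℝ) * Complex.I) • h))
      = P (P (k * NormedSpace.exp (((s : ℝ) * Complex.I) • h))
          * NormedSpace.exp (((-s : ℝ) * Complex.I) • h))
        + P (P (k * NormedSpace.exp (((t : ℝ) * Complex.I) • h))
          * NormedSpace.exp (((-t : ℝ) * Complex.I) • h)) := by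
  have := S.complete
  let := rangeRing S ha
  have hfix : ∀ x : LinearMap.range P, P (x : A) = x := by
    rintro ⟨_, x, rfl⟩
    exact S.idem x
  let δ : LinearMap.range P →+ LinearMap.range P :=
    { toFun := fun x => ⟨P (k * (x : A)), ⟨_, rfl⟩⟩
      map_zero' := Subtype.ext (by
        change P (k * (0 : A)) = 0
        rw [mul_zero, map_zero])
      map_add' := fun x y => Subtype.ext (by
        change P (k * ((x : A) + (y : A))) = P (k * (x : A)) + P (k * (y : A))
        rw [mul_add, map_add]) }
  have h2 : ∀ x : LinearMap.range P, x + x = 0 → x = 0 := fun x hx => by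
    have h3 : (2 : ℂ) • x = 0 := by rw [two_smul]; exact hx
    exact (smul_eq_zero.1 h3).resolve_left two_ne_zero
  have hc := central_of_trace h2
    (fun c hc => Subtype.ext (S.semiprime ha (hfix c) fun y hy =>
      congrArg Subtype.val (hc ⟨y, ⟨y, hy⟩⟩))) δ
    (fun x y => Subtype.ext (S.ker_trace ha hk (hfix x) (hfix y)))
    (fun x y z => Subtype.ext (S.ker_comm_left ha (hfix x) (hfix y) (hfix z)))
    (fun x y z => Subtype.ext (S.ker_comm_right ha hk (hfix x) (hfix y) (hfix z)))
  have hL := leibniz_of_central h2 δ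
    (fun x y => Subtype.ext (S.ker_jordan ha hk (hfix x) (hfix y))) hc
  let E : ℝ → LinearMap.range P := fun s =>
    ⟨P (NormedSpace.exp (((s : ℝ) * Complex.I) • h)), ⟨_, rfl⟩⟩
  have hn := fun s : ℝ => S.nul_exp hh hPh ((s : ℝ) * Complex.I)
  have hE : ∀ s t, E s * E t = E (s + t) := fun s t => Subtype.ext (by
    change P (P _ * P _) = P _
    rw [← (hn s).right, ← (hn t).left, exp_smul_mul]
    push_cast
    rw [add_mul])
  have key : ∀ s : ℝ, ((δ (E s) * E (-s) : LinearMap.range P) : A)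
      = P (P (k * NormedSpace.exp (((s : ℝ) * Complex.I) • h))
          * NormedSpace.exp (((-s : ℝ) * Complex.I) • h)) := fun s => by
    rw [(hn s).left, (hn (-s)).left]
    rfl
  have := congrArg Subtype.val (logDeriv_add δ hc hL E hE s t)
  rw [← key, ← key, ← key, this]
  rfl

/-- The bounded additive map `s ↦ P (P (k e^{ish}) e^{-ish})` vanishes; its derivative at `0` is
`i P (k h)`. -/
lemma ker_mul_sa {k h : A} (hk : P k = 0) (hh : IsAdj h h) (hPh : P h = h) : P (k * h) = 0 := by
  have := S.complete
  set φ : ℝ → A := fun s => P (P (k * NormedSpace.exp (((s : ℝ) * Complex.I) • h))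
    * NormedSpace.exp (((-s : ℝ) * Complex.I) • h)) with hφ
  have hadd : ∀ s t, φ (s + t) = φ s + φ t := S.ker_exp_add ha hk hh hPh
  have hmul : ∀ (n : ℕ) (s : ℝ), φ ((n + 1 : ℕ) * s) = (n + 1 : ℕ) • φ s := fun n s => by
    induction n with
    | zero => simp
    | succ n ih =>
      rw [succ_nsmul, ← ih, ← hadd]
      congr 1
      push_cast
      ring
  have hbd : ∀ s, ‖φ s‖ ≤ ‖k‖ := fun s => by
    have h1 := norm_exp_I_le hh s
    have h2 := norm_exp_I_le hh (-s)
    calc ‖φ s‖ ≤ ‖P (k * NormedSpace.exp (((s : ℝ) * Complex.I) • h))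
            * NormedSpace.exp (((-s : ℝ) * Complex.I) • h)‖ := S.contr _
      _ ≤ ‖P (k * NormedSpace.exp (((s : ℝ) * Complex.I) • h))‖
            * ‖NormedSpace.exp (((-s : ℝ) * Complex.I) • h)‖ := norm_mul_le _ _
      _ ≤ ‖k * NormedSpace.exp (((s : ℝ) * Complex.I) • h)‖ * 1 := by
            gcongr
            exact S.contr _
      _ ≤ ‖k‖ * ‖NormedSpace.exp (((s : ℝ) * Complex.I) • h)‖ := by
            rw [mul_one]; exact norm_mul_le _ _
      _ ≤ ‖k‖ := mul_le_of_le_one_right (norm_nonneg _) h1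
  have hzero : ∀ s, φ s = 0 := fun s => by
    rw [← norm_le_zero_iff]
    refine le_of_forall_nat (c := ‖k‖) (fun n => ?_)
    rcases n with _ | n
    · simp
    · have h1 := hbd ((n + 1 : ℕ) * s)
      rw [hmul, ← Nat.cast_smul_eq_nsmul ℝ, norm_smul, Real.norm_natCast] at h1
      rwa [sub_zero]
  let Pc : A →L[ℂ] A := ⟨P, S.continuous⟩
  let PcR : A →L[ℝ] A := Pc.restrictScalars ℝ
  have hexp : ∀ x : A, HasDerivAt (fun s : ℝ => NormedSpace.exp (s • x)) x 0 := fun x => by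
    simpa using hasDerivAt_exp_smul_const (𝕂 := ℝ) x 0
  have hE : HasDerivAt (fun s : ℝ => NormedSpace.exp (((s : ℝ) * Complex.I) • h))
      (Complex.I • h) 0 := by
    simpa only [mul_smul, Complex.coe_smul] using hexp (Complex.I • h)
  have hE' : HasDerivAt (fun s : ℝ => NormedSpace.exp (((-s : ℝ) * Complex.I) • h))
      (-(Complex.I • h)) 0 := by
    simpa only [mul_smul, Complex.coe_smul, neg_smul, smul_neg] using hexp (-(Complex.I • h))
  have h1 := PcR.hasFDerivAt.comp_hasDerivAt 0 (hE.const_mul k)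
  have h2 := PcR.hasFDerivAt.comp_hasDerivAt 0 (h1.mul hE')
  have h3 : HasDerivAt φ _ 0 := h2
  rw [show φ = fun _ => 0 from funext hzero] at h3
  have h4 := h3.unique (hasDerivAt_const _ _)
  simp only [Function.comp_apply, Complex.ofReal_zero, neg_zero, zero_mul, zero_smul,
    NormedSpace.exp_zero, mul_one] at h4
  change P (P (k * Complex.I • h) + P k * _) = 0 at h4
  rw [hk, zero_mul, add_zero, S.idem, mul_smul_comm, map_smul] at h4
  exact (smul_eq_zero.1 h4).resolve_left Complex.I_ne_zero

lemma ker_mul {k x : A} (hk : P k = 0) (hx : P x = x) : P (k * x) = 0 := by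
  obtain ⟨u, v, hu, hPu, hv, hPv, rfl⟩ := S.exists_re_im hx
  rw [mul_add, mul_smul_comm, map_add, map_smul, S.ker_mul_sa ha hk hu hPu,
    S.ker_mul_sa ha hk hv hPv, smul_zero, add_zero]

end Setup

/-! ### Translation of real positivity -/

lemma isPositive_add_adjoint_iff (a : A) :
    ((a : H →L[ℂ] H) + adjoint (a : H →L[ℂ] H)).IsPositive ↔ ∀ ξ, 0 ≤ (qf a ξ).re := by
  have hsa : IsSelfAdjoint ((a : H →L[ℂ] H) + adjoint (a : H →L[ℂ] H)) :=
    IsSelfAdjoint.add_star_self _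
  have key : ∀ ξ, ((a : H →L[ℂ] H) + adjoint (a : H →L[ℂ] H)).reApplyInnerSelf ξ
      = 2 * (qf a ξ).re := fun ξ => by
    rw [reApplyInnerSelf_apply, add_apply, inner_add_left, adjoint_inner_left, map_add]
    have : RCLike.re (inner ℂ ((a : H →L[ℂ] H) ξ) ξ) = (qf a ξ).re := inner_re_symm _ _
    rw [this]
    change (qf a ξ).re + (qf a ξ).re = _
    ring
  rw [isPositive_def']
  refine ⟨fun h ξ => ?_, fun h => ⟨hsa, fun ξ => ?_⟩⟩
  · have := h.2 ξ
    rw [key] at this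
    linarith
  · rw [key]
    linarith [h ξ]

end PProduct

/-- For a contractive real positive projection `P` on a unital operator algebra with range
contained in the diagonal `Δ(A)`: the `P`-product on the range is associative if and only
if `P(P a · P b) = P(a · P b) = P(P a · b)` for all `a, b`. -/
theorem stmt_17 {H : Type*} [NormedAddCommGroup H] [InnerProductSpace ℂ H] [CompleteSpace H]
    (A : Subalgebra ℂ (H →L[ℂ] H)) (hA : IsClosed (A : Set (H →L[ℂ] H)))
    (P : A →ₗ[ℂ] A) (hidem : ∀ a, P (P a) = P a)
    (hcontr : ∀ a : A, ‖P a‖ ≤ ‖a‖)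
    (hreal : ∀ a : A, ((a : H →L[ℂ] H) + adjoint (a : H →L[ℂ] H)).IsPositive →
      ((P a : H →L[ℂ] H) + adjoint (P a : H →L[ℂ] H)).IsPositive)
    (hΔ : ∀ a : A, adjoint ((P a : A) : H →L[ℂ] H) ∈ A) :
    (∀ x y z : A, x ∈ Set.range P → y ∈ Set.range P → z ∈ Set.range P →
        P (P (x * y) * z) = P (x * P (y * z))) ↔
      ∀ a b : A, P (P a * P b) = P (a * P b) ∧ P (P a * P b) = P (P a * b) := by
  have S : PProduct.Setup P :=
    { closed := hA
      idem := hidem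
      contr := hcontr
      rp := fun a ha => (PProduct.isPositive_add_adjoint_iff _).1
        (hreal a ((PProduct.isPositive_add_adjoint_iff _).2 ha))
      diag := fun a => ⟨⟨_, hΔ a⟩, rfl⟩ }
  constructor
  · intro h a b
    have ha : PProduct.Assoc P := fun x y z hx hy hz => h x y z ⟨x, hx⟩ ⟨y, hy⟩ ⟨z, hz⟩
    have hker : ∀ c, P (c - P c) = 0 := fun c => by rw [map_sub, hidem, sub_self]
    have h1 := S.ker_mul ha (hker a) (hidem b)
    have h2 := S.map_mul_ker (hker b) (hidem a)
    rw [S.ker_mul ha (hker b) (hidem a), neg_zero] at h2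
    rw [sub_mul, map_sub, sub_eq_zero] at h1
    rw [mul_sub, map_sub, sub_eq_zero] at h2
    exact ⟨h1.symm, h2.symm⟩
  · rintro h _ _ _ ⟨x, rfl⟩ ⟨y, rfl⟩ ⟨z, rfl⟩
    have h1 := (h (P x * P y) z).1
    have h2 := (h x (P y * P z)).2
    rw [h1, h2, mul_assoc]
end
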